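/- arXiv:2604.01061 — 4 statements merged into one kernel-verified Lean document; each statement's English description precedes it below -/
import Mathlib

section
/- For every constant D ∈ (0,1) there exists a constant C = C(D) > 0 with the following property. Let S be a subset of the chambers of a hyperplane arrangement 𝓗 in general position in ℝ³ with |S| = Σ_{i=0}^3 C(k,i) for some real k ≥ 2 (generalized binomial coefficients), and assume |S| ≤ D·|𝓡(𝓗)|, where 𝓡(𝓗) is the set of all chambers. Then |∂S| ≥ C · Σ_{A∈supp(S), 0≤|A|≤2} |conn(T_S(A))|; in particular |∂S| ≥ C · Σ_{i=0}^2 C(k,i), and hence |∂S| = Ω(|S|^{2/3}). -/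
open Set Topology

noncomputable section

/-- A hyperplane arrangement of `n` affine hyperplanes in `ℝ^d`, given by
nonzero normal vectors and offsets: the `i`-th hyperplane is
`{x | ∑ j, normal i j * x j = offset i}`. -/
structure Arrangement (d n : ℕ) where
  normal : Fin n → (Fin d → ℝ)
  offset : Fin n → ℝ
  normal_ne : ∀ i, normal i ≠ 0

/-- The thickening (regular open hull) `T_S` of a set `S` of chambers. -/
def thickening {d : ℕ} (S : Set (Set (Fin d → ℝ))) : Set (Fin d → ℝ) :=
  interior (closure (⋃ C ∈ S, C))

/-- The set of connected components of a subset `X` of a topological space. -/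
def connComps {α : Type*} [TopologicalSpace α] (X : Set α) : Set (Set α) :=
  {c | ∃ x ∈ X, c = connectedComponentIn X x}

namespace Arrangement

variable {d n : ℕ} (𝓗 : Arrangement d n)

/-- The `i`-th hyperplane of the arrangement. -/
def H (i : Fin n) : Set (Fin d → ℝ) := {x | ∑ j, 𝓗.normal i j * x j = 𝓗.offset i}

/-- The positive open half-space determined by the `i`-th hyperplane. -/
def pos (i : Fin n) : Set (Fin d → ℝ) := {x | 𝓗.offset i < ∑ j, 𝓗.normal i j * x j}

/-- The negative open half-space determined by the `i`-th hyperplane. -/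
def neg (i : Fin n) : Set (Fin d → ℝ) := {x | ∑ j, 𝓗.normal i j * x j < 𝓗.offset i}

/-- The complement of the union of the hyperplanes. -/
def free : Set (Fin d → ℝ) := {x | ∀ i, x ∉ 𝓗.H i}

/-- The chambers: connected components of the complement of the hyperplanes. -/
def chambers : Set (Set (Fin d → ℝ)) :=
  {C | ∃ x ∈ 𝓗.free, C = connectedComponentIn 𝓗.free x}

/-- General position: the normals of any `≤ d` hyperplanes are linearly independent
(so that their intersection is an affine subspace of the right dimension), and no
`d+1` hyperplanes have a common point. -/
def GeneralPosition : Prop :=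
  (∀ A : Finset (Fin n), A.card ≤ d →
      LinearIndependent ℝ (fun i : A => 𝓗.normal i.1)) ∧
  (∀ A : Finset (Fin n), A.card = d + 1 → (⋂ i ∈ A, 𝓗.H i) = ∅)

/-- Hyperplane `e` separates `C` from `C'`. -/
def Separates (e : Fin n) (C C' : Set (Fin d → ℝ)) : Prop :=
  (C ⊆ 𝓗.pos e ∧ C' ⊆ 𝓗.neg e) ∨ (C ⊆ 𝓗.neg e ∧ C' ⊆ 𝓗.pos e)

/-- Adjacency in the chamber graph: two chambers are adjacent iff they are separated
by exactly one hyperplane (equivalently, share a common facet). -/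
def Adj (C C' : Set (Fin d → ℝ)) : Prop :=
  C ∈ 𝓗.chambers ∧ C' ∈ 𝓗.chambers ∧ ∃! e : Fin n, 𝓗.Separates e C C'

/-- The edge boundary of a set `S` of chambers, encoded as the set of ordered pairs
`(C, C')` of adjacent chambers with `C ∈ S` and `C' ∉ S` (each boundary edge is thus
counted exactly once). -/
def edgeBoundary (S : Set (Set (Fin d → ℝ))) :
    Set ((Set (Fin d → ℝ)) × (Set (Fin d → ℝ))) :=
  {q | q.1 ∈ S ∧ q.2 ∉ S ∧ 𝓗.Adj q.1 q.2}

/-- The stratum `T_S(A) = T_S ∩ L_A`. -/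
def stratum (S : Set (Set (Fin d → ℝ))) (A : Finset (Fin n)) : Set (Fin d → ℝ) :=
  thickening S ∩ ⋂ i ∈ A, 𝓗.H i

/-- The support of `S`: those `A` with nonempty stratum. -/
def supp (S : Set (Set (Fin d → ℝ))) : Set (Finset (Fin n)) :=
  {A | (𝓗.stratum S A).Nonempty}

/-- `H_f` bounds the stratum `T_S(A)`: the stratum lies entirely in one of the open
half-spaces of `H_f`, and `H_f` meets the closure of the stratum within `L_A`. -/
def Bounds (f : Fin n) (S : Set (Set (Fin d → ℝ))) (A : Finset (Fin n)) : Prop :=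
  (𝓗.stratum S A ⊆ 𝓗.pos f ∨ 𝓗.stratum S A ⊆ 𝓗.neg f) ∧
  (𝓗.H f ∩ closure (𝓗.stratum S A) ∩ ⋂ i ∈ A, 𝓗.H i).Nonempty

/-- `S` is strata-connected if every nonempty stratum is connected. -/
def StrataConnected (S : Set (Set (Fin d → ℝ))) : Prop :=
  ∀ A ∈ 𝓗.supp S, IsConnected (𝓗.stratum S A)

end Arrangement

/-- The generalized binomial coefficient `C(x, i) = x(x-1)⋯(x-i+1)/i!`. -/
noncomputable def gchoose (x : ℝ) (i : ℕ) : ℝ :=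
  (∏ j ∈ Finset.range i, (x - j)) / (Nat.factorial i)

/-! Write every chamber as its sign vector. A cell of `L_A` inside the thickening of `S` is then a
subcube with free directions `A` contained in `S`, and the components of the stratum `T_S(A)` are
those of the graph of such subcubes under sign changes.

A component of a stratum either contains a cell bordering on one that is not in `T_S`, which is
charged to a nearby vertex with chambers both in `S` and outside, or the whole flat `L_A` is full,
that is, contained in `T_S`. There are at most `25 * |∂S|` vertices of the first kind. If the
boundary of `S` separates the eight chambers around the vertex along one plane, then a generic
linear functional has its strict minimum over some boundary facet at the vertex, and a facet has
only one minimum. Otherwise the vertex is charged to two facets of one chamber, both boundary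
edges, that meet in an edge of this chamber, and a polyhedron with `b` facets has `O(b)` edges.

Full planes are no more numerous than the lines meeting `T_S`, so it remains to bound the number
`m` of full lines by `O(|∂S|)`. Let `p` planes contain a full line. Each of these planes meets every
other plane in a line that meets `T_S`, so `p (n - 1) ≤ 2 (m + O(|∂S|))`, whereas `2 m ≤ p (p - 1)`.
If `m` is not `O(|∂S|)`, then `p` is close to `n` and almost all lines are full. Every vertex of the
complement of `S` lies on lines that are not full only, so the complement has few vertices. By the
bound `|S| ≤ ∑ |conn (T_S(A))|` over all `A`, applied to the complement, the latter has few
chambers compared with the at least `n.choose 3` chambers in total, unless `n ^ 3 = O(|∂S|)`. This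
bound holds since the functions on `S` are determined successively by their jumps across the
hyperplanes, up to functions constant on the components.

Finally the lines meeting `T_S` contain the shadow of its vertices, so by Kruskal–Katona `S` has
`O(|∂S| ^ (3 / 2))` vertices, and the same bound on `|S|` gives `|S| ^ 2 = O(|∂S| ^ 3)`. -/

/-! ### Subcubes of sets of sign vectors -/

/-- The sign vectors indexed by `ι`. For a hyperplane arrangement `σ i` records the side of the
`i`-th hyperplane, `true` being the positive one. -/
abbrev SignVector (ι : Type*) := ι → Bool

namespace SignVector

variable {ι : Type*} {S R : Finset (SignVector ι)} {A B : Finset ι} {σ τ : SignVector ι}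

/-- The subcube through `σ` with free directions `A` is contained in `S`. For the sign vectors of
an arrangement this says that all chambers around the cell of `σ` inside `L_A` belong to `S`. -/
def IsCube (S : Finset (SignVector ι)) (A : Finset ι) (σ : SignVector ι) : Prop :=
  ∀ τ : SignVector ι, (∀ i ∉ A, τ i = σ i) → τ ∈ S

lemma IsCube.mono_set (h : IsCube S A σ) (hSR : S ⊆ R) : IsCube R A σ :=
  fun τ hτ => hSR (h τ hτ)

lemma IsCube.mem (h : IsCube S A σ) : σ ∈ S := h σ fun _ _ => rfl

lemma IsCube.of_subset (h : IsCube S B σ) (hAB : A ⊆ B) (hτ : ∀ i ∉ B, τ i = σ i) :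
    IsCube S A τ :=
  fun ρ hρ => h ρ fun i hi => (hρ i fun hiA => hi (hAB hiA)).trans (hτ i hi)

variable [DecidableEq ι] {g h : ι}

/-- The sign vector obtained from `σ` by reversing its `g`-th sign. -/
def flipAt (g : ι) (σ : SignVector ι) : SignVector ι := Function.update σ g (!σ g)

@[simp]
lemma flipAt_self (g : ι) (σ : SignVector ι) : flipAt g σ g = !σ g :=
  Function.update_self ..

@[simp]
lemma flipAt_of_ne (hgh : g ≠ h) (σ : SignVector ι) : flipAt h σ g = σ g :=
  Function.update_of_ne hgh ..

@[simp]
lemma flipAt_flipAt (g : ι) (σ : SignVector ι) : flipAt g (flipAt g σ) = σ := by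
  simp [flipAt]

lemma flipAt_ne (g : ι) (σ : SignVector ι) : flipAt g σ ≠ σ := fun h => by
  simpa using congrFun h g

lemma update_flipAt (hgh : g ≠ h) (σ : SignVector ι) (b : Bool) :
    Function.update (flipAt g σ) h b = flipAt g (Function.update σ h b) := by
  simp only [flipAt, Function.update_of_ne hgh]
  exact Function.update_comm hgh ..

lemma flipAt_comm (g h : ι) (σ : SignVector ι) :
    flipAt g (flipAt h σ) = flipAt h (flipAt g σ) := by
  rcases eq_or_ne g h with rfl | hgh
  · rfl
  · rw [flipAt, flipAt_of_ne hgh, update_flipAt hgh.symm, ← flipAt]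

lemma update_of_mem (hh : h ∈ A) (σ : SignVector ι) (b : Bool) :
    ∀ i ∉ A, Function.update σ h b i = σ i :=
  fun _ hi => Function.update_of_ne (ne_of_mem_of_not_mem hh hi).symm ..

lemma eqOff_or_eqOff_flipAt_of_eqOff_insert (hτ : ∀ i ∉ insert g A, τ i = σ i) :
    (∀ i ∉ A, τ i = σ i) ∨ ∀ i ∉ A, τ i = flipAt g σ i := by
  have hτ' : ∀ i ∉ A, i ≠ g → τ i = σ i := fun i hi hig => hτ i (by simp [hig, hi])
  rcases Bool.eq_or_eq_not (τ g) (σ g) with hτg | hτg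
  · refine .inl fun i hi => ?_
    rcases eq_or_ne i g with rfl | hig
    exacts [hτg, hτ' i hi hig]
  · refine .inr fun i hi => ?_
    rcases eq_or_ne i g with rfl | hig
    · rw [flipAt_self, hτg]
    · rw [flipAt_of_ne hig, hτ' i hi hig]

lemma IsCube.insert (h : IsCube S A σ) (h' : IsCube S A (flipAt g σ)) :
    IsCube S (insert g A) σ :=
  fun τ hτ => (eqOff_or_eqOff_flipAt_of_eqOff_insert hτ).elim (h τ) (h' τ)

lemma IsCube.flipAt (h : IsCube S A σ) (hg : g ∈ A) : IsCube S A (flipAt g σ) :=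
  h.of_subset subset_rfl (update_of_mem hg σ _)

lemma flipAt_induction {p : SignVector ι → Prop} (hp : ∀ ρ, p ρ → ∀ g ∈ A, p (flipAt g ρ))
    (hσ : p σ) (hτ : ∀ i ∉ A, τ i = σ i) : p τ := by
  induction A using Finset.induction_on generalizing σ with
  | empty => exact (funext fun i => hτ i (Finset.notMem_empty i) : τ = σ) ▸ hσ
  | insert g A _ ih =>
    have hp' : ∀ ρ, p ρ → ∀ h ∈ A, p (flipAt h ρ) := fun ρ hρ h hh =>
      hp ρ hρ h (Finset.mem_insert_of_mem hh)
    exact (eqOff_or_eqOff_flipAt_of_eqOff_insert hτ).elim (ih hp' hσ)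
      (ih hp' (hp σ hσ g (Finset.mem_insert_self g A)))

end SignVector

namespace SignVector

section LocallyConstant

variable {ι : Type*} [DecidableEq ι] {S : Finset (SignVector ι)} {A J : Finset ι}
  {σ : SignVector ι} {h : ι}

/-- The graph on the `A`-cubes of `S` joining those that differ by one sign. -/
def cubeGraph (S : Finset (SignVector ι)) (A : Finset ι) :
    SimpleGraph {σ : SignVector ι // IsCube S A σ} where
  Adj σ τ := ∃ g, τ.1 = flipAt g σ.1
  symm := ⟨fun _ _ ⟨g, hg⟩ => ⟨g, by rw [hg, flipAt_flipAt]⟩⟩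
  loopless := ⟨fun σ ⟨g, hg⟩ => flipAt_ne g σ.1 hg.symm⟩

/-- The number of connected components of `cubeGraph S A`. For an arrangement it bounds the number
of connected components of the stratum in `L_A`. -/
def numComponents (S : Finset (SignVector ι)) (A : Finset ι) : ℕ :=
  Nat.card (cubeGraph S A).ConnectedComponent

/-- The rational functions supported on the `A`-cubes of `S` that are constant along the edges of
`cubeGraph S A` except possibly the edges in a direction of `J`. For `J = ∅` these are the functions
on the connected components. -/
def locallyConstant (S : Finset (SignVector ι)) (A J : Finset ι) :
    Submodule ℚ (SignVector ι → ℚ) where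
  carrier := {f | (∀ σ, ¬ IsCube S A σ → f σ = 0) ∧
    ∀ g ∉ J, ∀ σ, IsCube S A σ → IsCube S A (flipAt g σ) → f (flipAt g σ) = f σ}
  add_mem' {f f'} hf hf' :=
    ⟨fun σ hσ => by simp [hf.1 σ hσ, hf'.1 σ hσ],
      fun g hg σ h h' => by simp [hf.2 g hg σ h h', hf'.2 g hg σ h h']⟩
  zero_mem' := by simp
  smul_mem' c f hf :=
    ⟨fun σ hσ => by simp [hf.1 σ hσ], fun g hg σ h h' => by simp [hf.2 g hg σ h h']⟩

open Classical in
/-- The jump of a function across the edges in direction `h`, taken on the `insert h A`-cubes. -/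
def jump (S : Finset (SignVector ι)) (A : Finset ι) (h : ι) :
    (SignVector ι → ℚ) →ₗ[ℚ] (SignVector ι → ℚ) where
  toFun f σ := if IsCube S (insert h A) σ then
    f (Function.update σ h true) - f (Function.update σ h false) else 0
  map_add' f g := by
    ext σ; simp only [Pi.add_apply]; split_ifs <;> ring
  map_smul' c f := by
    ext σ; simp only [Pi.smul_apply, smul_eq_mul, RingHom.id_apply]; split_ifs <;> ring

lemma jump_of_isCube (hσ : IsCube S (insert h A) σ) (f : SignVector ι → ℚ) :
    jump S A h f σ = f (Function.update σ h true) - f (Function.update σ h false) :=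
  if_pos hσ

lemma jump_of_not_isCube (hσ : ¬ IsCube S (insert h A) σ) (f : SignVector ι → ℚ) :
    jump S A h f σ = 0 :=
  if_neg hσ

lemma jump_mem {f : SignVector ι → ℚ} (hf : f ∈ locallyConstant S A (insert h J)) :
    jump S A h f ∈ locallyConstant S (insert h A) J := by
  refine ⟨fun σ hσ => jump_of_not_isCube hσ f, fun g hg σ hσ hσ' => ?_⟩
  rw [jump_of_isCube hσ, jump_of_isCube hσ']
  rcases eq_or_ne g h with rfl | hgh
  · simp [flipAt]
  have hcube {τ : SignVector ι} (hτ : IsCube S (insert h A) τ) (b : Bool) :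
      IsCube S A (Function.update τ h b) :=
    hτ.of_subset (Finset.subset_insert h A) (update_of_mem (Finset.mem_insert_self h A) τ b)
  have hflip (b : Bool) : f (Function.update (flipAt g σ) h b) = f (Function.update σ h b) := by
    rw [update_flipAt hgh]
    exact hf.2 g (by simp [hgh, hg]) _ (hcube hσ b) (update_flipAt hgh σ b ▸ hcube hσ' b)
  rw [hflip, hflip]

lemma mem_locallyConstant_of_jump_eq_zero {f : SignVector ι → ℚ}
    (hf : f ∈ locallyConstant S A (insert h J)) (hjump : jump S A h f = 0) :
    f ∈ locallyConstant S A J := by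
  refine ⟨hf.1, fun g hg σ hσ hσ' => ?_⟩
  rcases eq_or_ne g h with rfl | hgh
  · have hzero := congrFun hjump σ
    rw [jump_of_isCube (hσ.insert hσ'), Pi.zero_apply, sub_eq_zero] at hzero
    have hval (b : Bool) : f (Function.update σ g b) = f σ := by
      conv_rhs => rw [← Function.update_eq_self g σ]
      cases b <;> cases σ g <;> simp [hzero]
    exact hval _
  · exact hf.2 g (by simp [hgh, hg]) σ hσ hσ'

/-- The dimension of `locallyConstant S A J`. -/
def locallyConstantRank (S : Finset (SignVector ι)) (A J : Finset ι) : ℕ :=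
  Module.finrank ℚ (locallyConstant S A J)

lemma apply_eq_of_reachable {f : SignVector ι → ℚ} (hf : f ∈ locallyConstant S A ∅)
    {σ τ : {σ : SignVector ι // IsCube S A σ}} (hστ : (cubeGraph S A).Reachable σ τ) :
    f σ = f τ := by
  rw [SimpleGraph.reachable_iff_reflTransGen] at hστ
  induction hστ with
  | refl => rfl
  | @tail ρ τ _ hρτ ih =>
    obtain ⟨g, hg⟩ := hρτ
    rw [ih, hg, hf.2 g (by simp) ρ ρ.2 (hg ▸ τ.2)]

variable [Finite ι]

lemma locallyConstantRank_insert_le (S : Finset (SignVector ι)) (A J : Finset ι) (h : ι) :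
    locallyConstantRank S A (insert h J) ≤
      locallyConstantRank S A J + locallyConstantRank S (insert h A) J := by
  let φ : locallyConstant S A (insert h J) →ₗ[ℚ] locallyConstant S (insert h A) J :=
    (jump S A h).restrict fun _ => jump_mem
  have hker : Module.finrank ℚ (LinearMap.ker φ) ≤ locallyConstantRank S A J := by
    rw [← Submodule.finrank_map_subtype_eq]
    refine Submodule.finrank_mono ?_
    rintro _ ⟨f, hf, rfl⟩
    exact mem_locallyConstant_of_jump_eq_zero f.2 (congrArg Subtype.val (LinearMap.mem_ker.1 hf))
  calc locallyConstantRank S A (insert h J)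
      = Module.finrank ℚ (LinearMap.ker φ) + Module.finrank ℚ (LinearMap.range φ) := by
        rw [add_comm, φ.finrank_range_add_finrank_ker, locallyConstantRank]
    _ ≤ _ := add_le_add hker (LinearMap.range φ).finrank_le

lemma locallyConstantRank_le_sum (S : Finset (SignVector ι)) (J A : Finset ι) :
    locallyConstantRank S A J ≤ ∑ B ∈ J.powerset, locallyConstantRank S (A ∪ B) ∅ := by
  induction J using Finset.induction_on generalizing A with
  | empty => simp
  | insert h J hJ ih =>
    rw [Finset.sum_powerset_insert hJ]
    have hA := ih (insert h A)
    simp only [Finset.insert_union, ← Finset.union_insert] at hA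
    exact (locallyConstantRank_insert_le S A J h).trans (add_le_add (ih A) hA)

lemma card_le_locallyConstantRank_univ [Fintype ι] (S : Finset (SignVector ι)) :
    S.card ≤ locallyConstantRank S ∅ Finset.univ := by
  have hmem (f : S → ℚ) : Function.ExtendByZero.linearMap ℚ (Subtype.val : S → SignVector ι) f ∈
      locallyConstant S ∅ Finset.univ := by
    refine ⟨fun σ hσ => Function.extend_apply' _ _ _ ?_, by simp⟩
    rintro ⟨τ, rfl⟩
    exact hσ fun ρ hρ => (funext fun i => hρ i (by simp) : ρ = τ) ▸ τ.2
  have hinj : Function.Injective (LinearMap.codRestrict _ _ hmem) := fun f g hfg =>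
    Function.extend_injective Subtype.val_injective (0 : SignVector ι → ℚ)
      (congrArg Subtype.val hfg)
  simpa [locallyConstantRank] using LinearMap.finrank_le_finrank_of_injective hinj

lemma locallyConstantRank_empty_le (S : Finset (SignVector ι)) (A : Finset ι) :
    locallyConstantRank S A ∅ ≤ numComponents S A := by
  let φ : locallyConstant S A ∅ →ₗ[ℚ] ((cubeGraph S A).ConnectedComponent → ℚ) :=
    LinearMap.pi fun c => LinearMap.proj c.out.1 ∘ₗ Submodule.subtype _
  have hinj : Function.Injective φ := by
    intro f g hfg
    ext σ
    by_cases hσ : IsCube S A σ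
    · have hout := SimpleGraph.ConnectedComponent.exact
        ((cubeGraph S A).connectedComponentMk ⟨σ, hσ⟩).out_eq
      rw [← apply_eq_of_reachable f.2 hout, ← apply_eq_of_reachable g.2 hout]
      exact congrFun hfg _
    · rw [f.2.1 σ hσ, g.2.1 σ hσ]
  have := Fintype.ofFinite (cubeGraph S A).ConnectedComponent
  simpa [locallyConstantRank, numComponents] using
    LinearMap.finrank_le_finrank_of_injective hinj

theorem card_le_sum_numComponents [Fintype ι] (S : Finset (SignVector ι)) :
    S.card ≤ ∑ A, numComponents S A := by
  have hsum := locallyConstantRank_le_sum S Finset.univ ∅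
  simp only [Finset.powerset_univ, Finset.empty_union] at hsum
  exact (card_le_locallyConstantRank_univ S).trans <| hsum.trans <|
    Finset.sum_le_sum fun A _ => locallyConstantRank_empty_le S A

end LocallyConstant

end SignVector

/-! ### Polyhedral geometry of arrangements in general position -/

/-- The sign of a side of a hyperplane as a real number. -/
def boolSign (b : Bool) : ℝ := if b then 1 else -1

@[simp]
lemma boolSign_not (b : Bool) : boolSign (!b) = -boolSign b := by cases b <;> simp [boolSign]

@[simp]
lemma boolSign_mul_self (b : Bool) : boolSign b * boolSign b = 1 := by
  cases b <;> simp [boolSign]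

@[simp]
lemma boolSign_ne_zero (b : Bool) : boolSign b ≠ 0 := by cases b <;> simp [boolSign]

lemma eq_of_boolSign_mul_pos {b c : Bool} {x : ℝ} (hb : 0 < boolSign b * x)
    (hc : 0 < boolSign c * x) : b = c := by
  rcases Bool.eq_or_eq_not b c with rfl | rfl
  · rfl
  · rw [boolSign_not] at hb
    linarith

lemma exists_boolSign_mul_nonneg (x : ℝ) : ∃ b, 0 ≤ boolSign b * x := by
  rcases le_total 0 x with hx | hx
  · exact ⟨true, by simpa [boolSign] using hx⟩
  · exact ⟨false, by simpa [boolSign] using hx⟩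

lemma exists_first_zero {ι : Type*} {B : Finset ι} {u w : ι → ℝ} (hu : ∀ i ∈ B, 0 < u i) {h : ι}
    (hh : h ∈ B) (hw : w h ≤ 0) :
    ∃ t : ℝ, 0 < t ∧ t ≤ 1 ∧ (∀ i ∈ B, 0 ≤ (1 - t) * u i + t * w i) ∧
      ∃ i ∈ B, (1 - t) * u i + t * w i = 0 := by
  obtain ⟨m, hm, hmin⟩ := (B.filter fun i => w i ≤ 0).exists_min_image
    (fun i => u i / (u i - w i)) ⟨h, by simp [hh, hw]⟩
  simp only [Finset.mem_filter, and_imp] at hm hmin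
  have hum := hu m hm.1
  have hden : 0 < u m - w m := by linarith
  have htle : u m / (u m - w m) ≤ 1 := by rw [div_le_one hden]; linarith
  refine ⟨u m / (u m - w m), by positivity, htle, fun i hi => ?_, m, hm.1, by field_simp; ring⟩
  have hui := hu i hi
  rcases le_or_gt (w i) 0 with hwi | hwi
  · have hmi := hmin i hi hwi
    rw [le_div_iff₀ (by linarith)] at hmi
    linarith
  · have := sub_nonneg.2 htle
    positivity

namespace Arrangement

open SignVector AffineMap

variable {d n : ℕ} (𝓗 : Arrangement d n)

/-- The affine form whose zero set is the `i`-th hyperplane. -/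
def form (i : Fin n) (x : Fin d → ℝ) : ℝ := 𝓗.normal i ⬝ᵥ x - 𝓗.offset i

/-- The `i`-th affine form, with the sign that makes it positive on the side `σ i`. -/
def signedForm (σ : SignVector (Fin n)) (i : Fin n) (x : Fin d → ℝ) : ℝ :=
  boolSign (σ i) * 𝓗.form i x

/-- The open polyhedron of the points that lie on the sides `σ` of the hyperplanes: a chamber or
empty. -/
def region (σ : SignVector (Fin n)) : Set (Fin d → ℝ) := {x | ∀ i, 0 < 𝓗.signedForm σ i x}

/-- The closed polyhedron of the points that lie weakly on the sides `σ` of the hyperplanes. -/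
def closedRegion (σ : SignVector (Fin n)) : Set (Fin d → ℝ) := {x | ∀ i, 0 ≤ 𝓗.signedForm σ i x}

/-- The relatively open cell of the flat `L_A` on the sides `σ` of the remaining hyperplanes. -/
def cell (A : Finset (Fin n)) (σ : SignVector (Fin n)) : Set (Fin d → ℝ) :=
  {x | (∀ i ∈ A, 𝓗.form i x = 0) ∧ ∀ i ∉ A, 0 < 𝓗.signedForm σ i x}

open Classical in
/-- The topes of the arrangement: the sign vectors of its chambers. -/
def topes : Finset (SignVector (Fin n)) := Finset.univ.filter fun σ => (𝓗.region σ).Nonempty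

/-- The common point of `d` hyperplanes in general position. A junk value is taken where the
hyperplanes of `T` have no common point. -/
def vertex (T : Finset (Fin n)) : Fin d → ℝ :=
  Classical.epsilon fun x => ∀ i ∈ T, 𝓗.form i x = 0

variable {𝓗} {A B T : Finset (Fin n)} {σ τ : SignVector (Fin n)} {x y : Fin d → ℝ}

lemma form_add_smul (i : Fin n) (x v : Fin d → ℝ) (t : ℝ) :
    𝓗.form i (x + t • v) = 𝓗.form i x + t * (𝓗.normal i ⬝ᵥ v) := by
  simp only [form, dotProduct_add, dotProduct_smul, smul_eq_mul]
  ring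

lemma form_lineMap (i : Fin n) (x y : Fin d → ℝ) (t : ℝ) :
    𝓗.form i (lineMap x y t) = (1 - t) * 𝓗.form i x + t * 𝓗.form i y := by
  simp only [form, lineMap_apply_module, dotProduct_add, dotProduct_smul, smul_eq_mul]
  ring

lemma signedForm_lineMap (σ : SignVector (Fin n)) (i : Fin n) (x y : Fin d → ℝ) (t : ℝ) :
    𝓗.signedForm σ i (lineMap x y t) =
      (1 - t) * 𝓗.signedForm σ i x + t * 𝓗.signedForm σ i y := by
  simp only [signedForm, form_lineMap]
  ring

lemma continuous_form (i : Fin n) : Continuous (𝓗.form i) := by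
  unfold form dotProduct
  fun_prop

lemma continuous_signedForm (σ : SignVector (Fin n)) (i : Fin n) :
    Continuous (𝓗.signedForm σ i) :=
  continuous_const.mul (continuous_form i)

@[simp]
lemma signedForm_eq_zero {i : Fin n} : 𝓗.signedForm σ i x = 0 ↔ 𝓗.form i x = 0 := by
  simp [signedForm]

lemma mem_topes : σ ∈ 𝓗.topes ↔ (𝓗.region σ).Nonempty := by
  simp [topes]

lemma cell_subset_closedRegion : 𝓗.cell A σ ⊆ 𝓗.closedRegion σ := fun x hx i => by
  by_cases hi : i ∈ A
  · exact (signedForm_eq_zero.2 (hx.1 i hi)).ge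
  · exact (hx.2 i hi).le

lemma exists_mem_closedRegion (𝓗 : Arrangement d n) (x : Fin d → ℝ) :
    ∃ σ, x ∈ 𝓗.closedRegion σ :=
  ⟨fun i => (exists_boolSign_mul_nonneg (𝓗.form i x)).choose,
    fun i => (exists_boolSign_mul_nonneg (𝓗.form i x)).choose_spec⟩

/-- The first hyperplane of `B` met on the way from a point of a cell to a point `y` of its flat. -/
lemma exists_lineMap_first_zero (hx : x ∈ 𝓗.cell A σ) (hy : ∀ i ∈ A, 𝓗.form i y = 0) {h : Fin n}
    (hhB : h ∈ B) (hhA : h ∉ A) (hh : 𝓗.signedForm σ h y ≤ 0) :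
    ∃ t : ℝ, 0 < t ∧ t ≤ 1 ∧ (∀ i ∈ B, 0 ≤ 𝓗.signedForm σ i (lineMap x y t)) ∧
      ∃ g ∈ B, g ∉ A ∧ ∀ i ∈ insert g A, 𝓗.form i (lineMap x y t) = 0 := by
  obtain ⟨t, ht0, ht1, hnonneg, g, hg, hzero⟩ := exists_first_zero (B := B \ A)
    (u := fun i => 𝓗.signedForm σ i x) (w := fun i => 𝓗.signedForm σ i y)
    (fun i hi => hx.2 i (Finset.mem_sdiff.1 hi).2) (Finset.mem_sdiff.2 ⟨hhB, hhA⟩) hh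
  obtain ⟨hgB, hgA⟩ := Finset.mem_sdiff.1 hg
  simp only [← signedForm_lineMap] at hnonneg hzero
  have hA : ∀ i ∈ A, 𝓗.form i (lineMap x y t) = 0 := fun i hi => by
    rw [form_lineMap, hx.1 i hi, hy i hi, mul_zero, mul_zero, add_zero]
  refine ⟨t, ht0, ht1, fun i hi => ?_, g, hgB, hgA, ?_⟩
  · by_cases hiA : i ∈ A
    · exact (signedForm_eq_zero.2 (hA i hiA)).ge
    · exact hnonneg i (Finset.mem_sdiff.2 ⟨hi, hiA⟩)
  · exact Finset.forall_mem_insert _ _ _ |>.2 ⟨signedForm_eq_zero.1 hzero, hA⟩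

lemma cell_nonempty_of_isCube (h : IsCube 𝓗.topes A σ) : (𝓗.cell A σ).Nonempty := by
  induction A using Finset.induction_on generalizing σ with
  | empty =>
    obtain ⟨x, hx⟩ := mem_topes.1 h.mem
    exact ⟨x, by simp, fun i _ => hx i⟩
  | insert g A hg ih =>
    obtain ⟨x, hx0, hx⟩ := ih (h.of_subset (Finset.subset_insert g A) fun _ _ => rfl)
    obtain ⟨y, hy0, hy⟩ := ih (h.of_subset (Finset.subset_insert g A)
      (update_of_mem (Finset.mem_insert_self g A) σ (!σ g)))
    have hyg : 𝓗.signedForm σ g y < 0 := by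
      simpa [signedForm] using hy g hg
    obtain ⟨t, ht0, ht1, -, _, hgA, -, hzero⟩ := exists_lineMap_first_zero (B := {g}) ⟨hx0, hx⟩ hy0
      (Finset.mem_singleton_self g) hg hyg.le
    obtain rfl := Finset.mem_singleton.1 hgA
    have ht1' : t ≠ 1 := by
      rintro rfl
      have := hzero _ (Finset.mem_insert_self _ A)
      rw [lineMap_apply_one, ← signedForm_eq_zero (σ := σ)] at this
      exact hyg.ne this
    refine ⟨lineMap x y t, hzero, fun i hi => ?_⟩
    obtain ⟨hig, hiA⟩ := not_or.1 (Finset.mem_insert.not.1 hi)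
    have hyi : 0 < 𝓗.signedForm σ i y := by simpa [signedForm, hig] using hy i hiA
    have := hx i hiA
    have := sub_pos.2 (ht1.lt_of_ne ht1')
    rw [signedForm_lineMap]
    positivity

namespace GeneralPosition

variable (hG : 𝓗.GeneralPosition)
include hG

lemma mulVecLin_surjective (hA : A.card ≤ d) :
    Function.Surjective (Matrix.of fun i : A => 𝓗.normal i).mulVecLin := by
  rw [← LinearMap.range_eq_top]
  apply Submodule.eq_top_of_finrank_eq
  simpa [Matrix.rank] using (hG.1 A hA).rank_matrix (M := Matrix.of fun i : A => 𝓗.normal i)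

lemma exists_dotProduct_eq (hA : A.card ≤ d) (c : Fin n → ℝ) :
    ∃ v, ∀ i ∈ A, 𝓗.normal i ⬝ᵥ v = c i := by
  obtain ⟨v, hv⟩ := hG.mulVecLin_surjective hA fun i => c i
  exact ⟨v, fun i hi => congrFun hv ⟨i, hi⟩⟩

lemma eq_of_form_eq_zero (hT : T.card = d) (hx : ∀ i ∈ T, 𝓗.form i x = 0)
    (hy : ∀ i ∈ T, 𝓗.form i y = 0) : x = y := by
  have hinj := (LinearMap.injective_iff_surjective_of_finrank_eq_finrank (by simp [hT])).2
    (hG.mulVecLin_surjective hT.le)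
  refine hinj (funext fun i => ?_)
  exact (sub_eq_zero.1 (hx i i.2)).trans (sub_eq_zero.1 (hy i i.2)).symm

lemma card_le_of_form_eq_zero (hA : ∀ i ∈ A, 𝓗.form i x = 0) : A.card ≤ d := by
  by_contra hcard
  obtain ⟨B, hBA, hB⟩ := Finset.exists_subset_card_eq (Nat.lt_of_not_le hcard)
  refine (hG.2 B hB).le (?_ : x ∈ _)
  exact mem_iInter₂.2 fun i hi => sub_eq_zero.1 (hA i (hBA hi))

lemma form_vertex (hT : T.card = d) : ∀ i ∈ T, 𝓗.form i (𝓗.vertex T) = 0 := by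
  obtain ⟨v, hv⟩ := hG.exists_dotProduct_eq hT.le 𝓗.offset
  exact Classical.epsilon_spec (p := fun x => ∀ i ∈ T, 𝓗.form i x = 0)
    ⟨v, fun i hi => sub_eq_zero.2 (hv i hi)⟩

lemma eq_vertex (hT : T.card = d) (hx : ∀ i ∈ T, 𝓗.form i x = 0) : x = 𝓗.vertex T :=
  hG.eq_of_form_eq_zero hT hx (hG.form_vertex hT)

lemma mem_of_form_vertex_eq_zero (hT : T.card = d) {i : Fin n}
    (hi : 𝓗.form i (𝓗.vertex T) = 0) : i ∈ T := by
  by_contra hiT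
  have := hG.card_le_of_form_eq_zero
    ((Finset.forall_mem_insert i T _).2 ⟨hi, hG.form_vertex hT⟩)
  rw [Finset.card_insert_of_notMem hiT] at this
  lia

lemma eq_of_vertex_eq (hA : A.card = d) (hB : B.card = d) (h : 𝓗.vertex A = 𝓗.vertex B) :
    A = B :=
  Finset.eq_of_subset_of_card_le
    (fun i hi => hG.mem_of_form_vertex_eq_zero hB (h ▸ hG.form_vertex hA i hi)) (by rw [hA, hB])

lemma card_le_of_isCube (h : IsCube 𝓗.topes A σ) : A.card ≤ d :=
  have ⟨_, hx⟩ := cell_nonempty_of_isCube h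
  hG.card_le_of_form_eq_zero hx.1

lemma vertex_mem_cell (hT : T.card = d) (h : IsCube 𝓗.topes T σ) : 𝓗.vertex T ∈ 𝓗.cell T σ :=
  have ⟨_, hx⟩ := cell_nonempty_of_isCube h
  hG.eq_vertex hT hx.1 ▸ hx

/-- The hyperplanes through a point of a closed region can be moved off it independently, so the
signs of those hyperplanes are arbitrary. -/
lemma isCube_of_mem_closedRegion (hx : x ∈ 𝓗.closedRegion σ) (hA : ∀ i ∈ A, 𝓗.form i x = 0) :
    IsCube 𝓗.topes A σ := by
  classical
  intro τ hτ
  rw [mem_topes]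
  obtain ⟨v, hv⟩ := hG.exists_dotProduct_eq
    (hG.card_le_of_form_eq_zero (x := x) (A := Finset.univ.filter fun i => 𝓗.form i x = 0)
      (by simp))
    fun i => boolSign (τ i)
  have hpos (i : Fin n) : ∀ᶠ t in 𝓝[>] (0 : ℝ), 0 < 𝓗.signedForm τ i (x + t • v) := by
    by_cases hi : 𝓗.form i x = 0
    · filter_upwards [self_mem_nhdsWithin] with t ht
      rw [signedForm, form_add_smul, hi, hv i (by simp [hi]), zero_add, mul_left_comm,
        boolSign_mul_self, mul_one]
      exact ht
    · have hx' : 0 < 𝓗.signedForm τ i (x + (0 : ℝ) • v) := by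
        rw [zero_smul, add_zero, signedForm, hτ i fun h => hi (hA i h)]
        exact (hx i).lt_of_ne' (signedForm_eq_zero.not.2 hi)
      have hcont : Continuous fun t : ℝ => 𝓗.signedForm τ i (x + t • v) :=
        (continuous_signedForm τ i).comp (by fun_prop)
      exact nhdsWithin_le_nhds (hcont.continuousAt.eventually (lt_mem_nhds hx'))
  obtain ⟨t, ht⟩ := (Filter.eventually_all.2 hpos).exists
  exact ⟨_, ht⟩

lemma exists_isCube (hT : T.card = d) : ∃ σ, IsCube 𝓗.topes T σ :=
  have ⟨σ, hσ⟩ := exists_mem_closedRegion 𝓗 (𝓗.vertex T)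
  ⟨σ, hG.isCube_of_mem_closedRegion hσ (hG.form_vertex hT)⟩

lemma eqOn_of_isCube (hT : T.card = d) (hσ : IsCube 𝓗.topes T σ) (hτ : IsCube 𝓗.topes T τ) :
    ∀ i ∉ T, σ i = τ i := fun i hi =>
  eq_of_boolSign_mul_pos ((hG.vertex_mem_cell hT hσ).2 i hi) ((hG.vertex_mem_cell hT hτ).2 i hi)

lemma exists_isCube_flipAt (hσ : IsCube 𝓗.topes A σ) (hτ : IsCube 𝓗.topes A τ) (hne : σ ≠ τ) :
    ∃ g, σ g ≠ τ g ∧ IsCube 𝓗.topes A (flipAt g σ) := by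
  by_cases hA : ∃ g ∈ A, σ g ≠ τ g
  · obtain ⟨g, hgA, hg⟩ := hA
    exact ⟨g, hg, hσ.of_subset subset_rfl (update_of_mem hgA σ _)⟩
  push Not at hA
  obtain ⟨h, hh⟩ := Function.ne_iff.1 hne
  have hhA : h ∉ A := fun hA' => hh (hA h hA')
  obtain ⟨x, hx⟩ := cell_nonempty_of_isCube hσ
  obtain ⟨y, hy⟩ := cell_nonempty_of_isCube hτ
  have hhy : 𝓗.signedForm σ h y ≤ 0 := by
    have := hy.2 h hhA
    rw [signedForm, Bool.eq_not.2 hh, boolSign_not, neg_mul]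
    exact neg_nonpos.2 this.le
  obtain ⟨t, ht0, ht1, hnonneg, g, -, hgA, hzero⟩ :=
    exists_lineMap_first_zero hx hy.1 (Finset.mem_univ h) hhA hhy
  refine ⟨g, fun hg => ?_, ?_⟩
  · have hxg := hx.2 g hgA
    have hyg : 0 < 𝓗.signedForm σ g y := by simpa [signedForm, hg] using hy.2 g hgA
    have hpos : 0 < 𝓗.signedForm σ g (lineMap x y t) := by
      rw [signedForm_lineMap]
      have := sub_nonneg.2 ht1
      positivity
    exact hpos.ne' (signedForm_eq_zero.2 (hzero g (Finset.mem_insert_self g A)))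
  · have hcube := hG.isCube_of_mem_closedRegion (fun i => hnonneg i (Finset.mem_univ i)) hzero
    exact hcube.of_subset (Finset.subset_insert g A)
      (update_of_mem (Finset.mem_insert_self g A) σ _)

lemma exists_first_zero_of_not_subset (hA : A.card < d) (hB : ¬ B ⊆ A)
    (hσ : IsCube 𝓗.topes A σ) :
    ∃ g ∈ B, g ∉ A ∧ ∃ z, (∀ i ∈ insert g A, 𝓗.form i z = 0) ∧
      ∀ i ∈ B, 0 ≤ 𝓗.signedForm σ i z := by
  obtain ⟨h, hhB, hhA⟩ := Finset.not_subset.1 hB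
  obtain ⟨x, hx⟩ := cell_nonempty_of_isCube hσ
  obtain ⟨v, hv⟩ := hG.exists_dotProduct_eq (A := insert h A)
    ((Finset.card_insert_le h A).trans hA) fun i => -𝓗.form i x
  have hzero : ∀ i ∈ insert h A, 𝓗.form i (x + (1 : ℝ) • v) = 0 := fun i hi => by
    rw [form_add_smul, hv i hi, one_mul, add_neg_cancel]
  obtain ⟨t, -, -, hnonneg, g, hgB, hgA, hg⟩ := exists_lineMap_first_zero hx
    (fun i hi => hzero i (Finset.mem_insert_of_mem hi)) hhB hhA
    (signedForm_eq_zero.2 (hzero h (Finset.mem_insert_self h A))).le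
  exact ⟨g, hgB, hgA, _, hg, hnonneg⟩

lemma exists_isCube_insert (hn : d ≤ n) (hA : A.card < d) (hσ : IsCube 𝓗.topes A σ) :
    ∃ g ∉ A, IsCube 𝓗.topes (insert g A) σ := by
  have huniv : ¬ Finset.univ ⊆ A := fun h => by
    have := Finset.card_le_card h
    rw [Finset.card_fin] at this
    lia
  obtain ⟨g, -, hgA, z, hzero, hnonneg⟩ := hG.exists_first_zero_of_not_subset hA huniv hσ
  exact ⟨g, hgA, hG.isCube_of_mem_closedRegion (fun i => hnonneg i (Finset.mem_univ i)) hzero⟩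

lemma exists_isCube_card_eq (hn : d ≤ n) (hσ : IsCube 𝓗.topes A σ) :
    ∃ T, A ⊆ T ∧ T.card = d ∧ IsCube 𝓗.topes T σ := by
  induction hk : d - A.card generalizing A with
  | zero => exact ⟨A, subset_rfl, by have := hG.card_le_of_isCube hσ; lia, hσ⟩
  | succ k ih =>
    obtain ⟨g, hgA, hg⟩ := hG.exists_isCube_insert hn (by lia) hσ
    obtain ⟨T, hT, hcard, hTσ⟩ := ih hg (by rw [Finset.card_insert_of_notMem hgA]; lia)
    exact ⟨T, (Finset.subset_insert g A).trans hT, hcard, hTσ⟩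

end GeneralPosition

end Arrangement

/-! ### Vertices on the boundary -/

namespace SignVector

section Boundary

open Classical

variable {ι : Type*} [Fintype ι] [DecidableEq ι] {R S : Finset (SignVector ι)} {T : Finset ι}
  {σ ρ : SignVector ι} {k y : ι}

/-- The edge boundary of `S` in the flip graph on `R`: a boundary edge is encoded by its end in `S`
and its direction. -/
def flipBoundary (R S : Finset (SignVector ι)) : Finset (SignVector ι × ι) :=
  Finset.univ.filter fun q => q.1 ∈ S ∧ flipAt q.2 q.1 ∈ R ∧ flipAt q.2 q.1 ∉ S

/-- The directions of the boundary edges at `σ`, which may lie on either side of the boundary. -/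
def boundaryDirs (R S : Finset (SignVector ι)) (σ : SignVector ι) : Finset ι :=
  Finset.univ.filter fun k => flipAt k σ ∈ R ∧ ¬ (flipAt k σ ∈ S ↔ σ ∈ S)

/-- The `j`-sets `T` that carry a cube of `R` meeting both `S` and its complement. For an
arrangement in `ℝ^d` and `j = d` these are the vertices on the boundary of `S`. -/
def mixedSets (R S : Finset (SignVector ι)) (j : ℕ) : Finset (Finset ι) :=
  Finset.univ.filter fun T => T.card = j ∧ ∃ σ, IsCube R T σ ∧ σ ∈ S ∧ ¬ IsCube S T σ

/-- The boundary of `S` has at most one direction of `T` at each corner of each `T`-cube of `R`;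
then it cuts the cube along a single hyperplane. -/
def IsFlat (R S : Finset (SignVector ι)) (T : Finset ι) : Prop :=
  ∀ σ, IsCube R T σ → (T ∩ boundaryDirs R S σ).card ≤ 1

/-- The `j`-sets `T` that violate `IsFlat` at the corner `σ`. -/
def nonFlatSets (R S : Finset (SignVector ι)) (j : ℕ) (σ : SignVector ι) : Finset (Finset ι) :=
  Finset.univ.filter fun T =>
    T.card = j ∧ IsCube R T σ ∧ 1 < (T ∩ boundaryDirs R S σ).card

lemma mem_boundaryDirs :
    k ∈ boundaryDirs R S σ ↔ flipAt k σ ∈ R ∧ ¬ (flipAt k σ ∈ S ↔ σ ∈ S) := by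
  simp [boundaryDirs]

lemma mem_flipBoundary {q : SignVector ι × ι} :
    q ∈ flipBoundary R S ↔ q.1 ∈ S ∧ flipAt q.2 q.1 ∈ R ∧ flipAt q.2 q.1 ∉ S := by
  simp [flipBoundary]

lemma mem_mixedSets {j : ℕ} :
    T ∈ mixedSets R S j ↔ T.card = j ∧ ∃ σ, IsCube R T σ ∧ σ ∈ S ∧ ¬ IsCube S T σ := by
  simp [mixedSets]

lemma mem_nonFlatSets {j : ℕ} :
    T ∈ nonFlatSets R S j σ ↔
      T.card = j ∧ IsCube R T σ ∧ 1 < (T ∩ boundaryDirs R S σ).card := by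
  simp [nonFlatSets]

lemma mem_boundaryDirs_flipAt_self (hσ : σ ∈ R) (hk : k ∈ boundaryDirs R S σ) :
    k ∈ boundaryDirs R S (flipAt k σ) := by
  rw [mem_boundaryDirs] at hk ⊢
  rw [flipAt_flipAt]
  exact ⟨hσ, fun h => hk.2 h.symm⟩

lemma mem_flipBoundary_or (hσ : σ ∈ R) (hk : k ∈ boundaryDirs R S σ) :
    (σ, k) ∈ flipBoundary R S ∨ (flipAt k σ, k) ∈ flipBoundary R S := by
  rw [mem_boundaryDirs] at hk
  simp only [mem_flipBoundary, flipAt_flipAt]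
  tauto

lemma sum_card_boundaryDirs_le (R S : Finset (SignVector ι)) :
    ∑ σ ∈ R, (boundaryDirs R S σ).card ≤ 2 * (flipBoundary R S).card := by
  have hsub : R.sigma (boundaryDirs R S) ⊆
      (flipBoundary R S).image (fun q => ⟨q.1, q.2⟩) ∪
        (flipBoundary R S).image fun q => ⟨flipAt q.2 q.1, q.2⟩ := by
    rintro ⟨σ, k⟩ h
    obtain ⟨hσ, hk⟩ := Finset.mem_sigma.1 h
    rcases mem_flipBoundary_or hσ hk with hq | hq
    · exact Finset.mem_union_left _ (Finset.mem_image.2 ⟨_, hq, rfl⟩)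
    · exact Finset.mem_union_right _ (Finset.mem_image.2 ⟨_, hq, by rw [flipAt_flipAt]⟩)
  rw [← Finset.card_sigma, two_mul]
  exact (Finset.card_le_card hsub).trans <| (Finset.card_union_le _ _).trans <|
    add_le_add Finset.card_image_le Finset.card_image_le

lemma exists_mem_boundaryDirs_of_mem_mixedSets {j : ℕ} (hT : T ∈ mixedSets R S j) :
    ∃ ρ, IsCube R T ρ ∧ ∃ k ∈ T, k ∈ boundaryDirs R S ρ := by
  obtain ⟨-, σ, hσR, hσS, hσ⟩ := mem_mixedSets.1 hT
  by_contra! hnone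
  refine hσ fun τ hτ => ?_
  refine (flipAt_induction (p := fun ρ => IsCube R T ρ ∧ ρ ∈ S) ?_ ⟨hσR, hσS⟩ hτ).2
  rintro ρ ⟨hρ, hρS⟩ y hy
  have hρy := hρ.flipAt hy
  have := hnone ρ hρ y hy
  rw [mem_boundaryDirs] at this
  exact ⟨hρy, by have := hρy.mem; tauto⟩

lemma IsFlat.eq_of_mem (hflat : IsFlat R S T) (hρ : IsCube R T ρ) (hyT : y ∈ T)
    (hy : y ∈ boundaryDirs R S ρ) (hkT : k ∈ T) (hk : k ∈ boundaryDirs R S ρ) : y = k :=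
  Finset.card_le_one.1 (hflat ρ hρ) y (Finset.mem_inter.2 ⟨hyT, hy⟩) k
    (Finset.mem_inter.2 ⟨hkT, hk⟩)

/-- The square spanned by `k` and `y ≠ k` has no boundary edge in direction `y` at either end of the
edge `k`, so its opposite edge is a boundary edge too. -/
lemma IsFlat.mem_boundaryDirs_flipAt (hflat : IsFlat R S T) (hρ : IsCube R T ρ) (hkT : k ∈ T)
    (hk : k ∈ boundaryDirs R S ρ) (hyT : y ∈ T) : k ∈ boundaryDirs R S (flipAt y ρ) := by
  rcases eq_or_ne y k with rfl | hyk
  · exact mem_boundaryDirs_flipAt_self hρ.mem hk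
  have hy : y ∉ boundaryDirs R S ρ := fun hy => hyk (hflat.eq_of_mem hρ hyT hy hkT hk)
  have hy' : y ∉ boundaryDirs R S (flipAt k ρ) := fun hy =>
    hyk (hflat.eq_of_mem (hρ.flipAt hkT) hyT hy hkT (mem_boundaryDirs_flipAt_self hρ.mem hk))
  have hmem := (hρ.flipAt hyT).mem
  have hmem' := ((hρ.flipAt hyT).flipAt hkT).mem
  rw [mem_boundaryDirs] at hy hy' hk ⊢
  rw [flipAt_comm y k] at hy'
  tauto

lemma IsFlat.exists_mem_flipBoundary {j : ℕ} (hflat : IsFlat R S T) (hT : T ∈ mixedSets R S j)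
    (f : SignVector ι) :
    ∃ σ, ∃ k ∈ T, (σ, k) ∈ flipBoundary R S ∧ IsCube R T σ ∧ ∀ i ∈ T, i ≠ k → σ i = f i := by
  obtain ⟨ρ, hρ, k, hkT, hk⟩ := exists_mem_boundaryDirs_of_mem_mixedSets hT
  obtain ⟨hτ, hkτ⟩ := flipAt_induction (A := T) (τ := fun i => if i ∈ T then f i else ρ i)
    (p := fun τ => IsCube R T τ ∧ k ∈ boundaryDirs R S τ)
    (fun τ hτ y hy => ⟨hτ.1.flipAt hy, hflat.mem_boundaryDirs_flipAt hτ.1 hkT hτ.2 hy⟩)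
    ⟨hρ, hk⟩ fun i hi => if_neg hi
  rcases mem_flipBoundary_or hτ.mem hkτ with hq | hq
  · exact ⟨_, k, hkT, hq, hτ, fun i hi _ => if_pos hi⟩
  · exact ⟨_, k, hkT, hq, hτ.flipAt hkT, fun i hi hik => (flipAt_of_ne hik _).trans (if_pos hi)⟩

end Boundary

end SignVector

lemma boolSign_beq (b c : Bool) : boolSign (b == c) = boolSign b * boolSign c := by
  cases b <;> cases c <;> simp [boolSign]

lemma exists_boolSign_mul_pos {x : ℝ} (hx : x ≠ 0) : ∃ b, 0 < boolSign b * x :=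
  have ⟨b, hb⟩ := exists_boolSign_mul_nonneg x
  ⟨b, hb.lt_of_ne' (mul_ne_zero (boolSign_ne_zero b) hx)⟩

lemma exists_eq_off_singleton_of_card_eq_three {ι : Type*} {U : Finset ι} (hU : U.card = 3)
    (g : ι → Bool) : ∃ x ∈ U, ∃ b, ∀ i ∈ U, i ∉ ({x} : Finset ι) → g i = b := by
  classical
  obtain ⟨x, y, z, -, -, -, rfl⟩ := Finset.card_eq_three.1 hU
  have hpigeon : g x = g y ∨ g x = g z ∨ g y = g z := by
    cases g x <;> cases g y <;> cases g z <;> simp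
  rcases hpigeon with h | h | h
  · exact ⟨z, by simp, g x, by simp_all⟩
  · exact ⟨y, by simp, g x, by simp_all⟩
  · exact ⟨x, by simp, g y, by simp_all⟩

namespace Arrangement

open SignVector

section GenericFunctional

variable {d n : ℕ} {𝓗 : Arrangement d n} {A B F F' T : Finset (Fin n)}
  {σ : SignVector (Fin n)} {p q : Fin d → ℝ}

/-- A linear functional, represented by `p`, that is constant on no positive-dimensional
intersection of the hyperplanes of an arrangement in general position: every coefficient of `p` in
every basis of normals is nonzero. -/
def IsGeneric (𝓗 : Arrangement d n) (p : Fin d → ℝ) : Prop :=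
  ∀ T : Finset (Fin n), T.card = d →
    ∃ c : Fin n → ℝ, (∀ i ∈ T, c i ≠ 0) ∧ p = ∑ i ∈ T, c i • 𝓗.normal i

/-- The functional `q` attains its minimum over the cone on the sides `σ` of the hyperplanes of `T`,
intersected with the flat `L_F`, only at the apex of the cone. -/
def IsStrictMin (𝓗 : Arrangement d n) (q : Fin d → ℝ) (σ : SignVector (Fin n))
    (F T : Finset (Fin n)) : Prop :=
  ∀ x, (∀ i ∈ T, 0 ≤ 𝓗.signedForm σ i x) → (∀ i ∈ F, 𝓗.form i x = 0) → x ≠ 𝓗.vertex T →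
    q ⬝ᵥ 𝓗.vertex T < q ⬝ᵥ x

lemma exists_notMem_span_normal (𝓗 : Arrangement d n) :
    ∃ p, ∀ B : Finset (Fin n), B.card < d → p ∉ Submodule.span ℝ (𝓗.normal '' B) := by
  classical
  let spans : Finset (Subspace ℝ (Fin d → ℝ)) :=
    (Finset.univ.filter fun B : Finset (Fin n) => B.card < d).image
      fun B : Finset (Fin n) => Submodule.span ℝ (𝓗.normal '' B)
  have htop : ⊤ ∉ spans := fun h => by
    obtain ⟨B, hB, hspan⟩ := Finset.mem_image.1 h
    have hrank : Set.finrank ℝ (𝓗.normal '' B) ≤ B.card := by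
      rw [← Finset.coe_image]
      exact (finrank_span_finset_le_card _).trans Finset.card_image_le
    rw [Set.finrank, hspan, finrank_top, Module.finrank_fin_fun] at hrank
    exact hrank.not_gt (Finset.mem_filter.1 hB).2
  obtain ⟨p, hp⟩ := (Set.ne_univ_iff_exists_notMem _).1
    (Subspace.biUnion_ne_univ_of_top_notMem htop)
  refine ⟨p, fun B hB hpB => hp (Set.mem_iUnion₂.2 ⟨_, Finset.mem_image.2 ⟨B, ?_, rfl⟩, hpB⟩)⟩
  simp [hB]

namespace GeneralPosition

variable (hG : 𝓗.GeneralPosition)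
include hG

lemma exists_isGeneric : ∃ p, 𝓗.IsGeneric p := by
  classical
  obtain ⟨p, hp⟩ := exists_notMem_span_normal 𝓗
  refine ⟨p, fun T hT => ?_⟩
  have htop : p ∈ Submodule.span ℝ (𝓗.normal '' T) := by
    have hspan := (hG.1 T hT.le).span_eq_top_of_card_eq_finrank' (by simp [hT])
    rw [image_eq_range]
    exact hspan ▸ Submodule.mem_top
  obtain ⟨c, rfl⟩ := (Submodule.mem_span_image_finset_iff_exists_fun' ℝ).1 htop
  refine ⟨c, fun i hi hci => hp (T.erase i) (hT ▸ Finset.card_erase_lt_of_mem hi) ?_, rfl⟩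
  rw [← Finset.sum_erase T (by rw [hci, zero_smul])]
  exact Submodule.sum_mem _ fun j hj => Submodule.smul_mem _ _ (Submodule.subset_span ⟨j, hj, rfl⟩)

lemma isStrictMin_of_pos (hT : T.card = d) {c : Fin n → ℝ}
    (hq : q = ∑ i ∈ T, c i • 𝓗.normal i) (hc : ∀ i ∈ T, i ∉ F → 0 < boolSign (σ i) * c i) :
    𝓗.IsStrictMin q σ F T := by
  intro x hx hxF hne
  have hdiff : q ⬝ᵥ x - q ⬝ᵥ 𝓗.vertex T = ∑ i ∈ T, c i * 𝓗.form i x := by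
    rw [hq, sum_dotProduct, sum_dotProduct, ← Finset.sum_sub_distrib]
    refine Finset.sum_congr rfl fun i hi => ?_
    have hv := hG.form_vertex hT i hi
    simp only [form, smul_dotProduct, smul_eq_mul] at hv ⊢
    linear_combination -c i * hv
  have hterm (i : Fin n) :
      c i * 𝓗.form i x = boolSign (σ i) * c i * 𝓗.signedForm σ i x := by
    rw [signedForm]
    linear_combination (-(c i * 𝓗.form i x)) * boolSign_mul_self (σ i)
  have hnonneg : ∀ i ∈ T, 0 ≤ c i * 𝓗.form i x := fun i hi => by
    by_cases hiF : i ∈ F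
    · rw [hxF i hiF, mul_zero]
    · rw [hterm]
      exact mul_nonneg (hc i hi hiF).le (hx i hi)
  obtain ⟨i, hi, hxi⟩ : ∃ i ∈ T, 𝓗.form i x ≠ 0 := by
    by_contra! h
    exact hne (hG.eq_vertex hT h)
  have hci := hc i hi fun hiF => hxi (hxF i hiF)
  have hpos : 0 < ∑ i ∈ T, c i * 𝓗.form i x := Finset.sum_pos' hnonneg
    ⟨i, hi, (hnonneg i hi).lt_of_ne' (mul_ne_zero (right_ne_zero_of_mul hci.ne') hxi)⟩
  linarith

lemma exists_forall_isStrictMin (hp : 𝓗.IsGeneric p) (hT : T.card = d) :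
    ∃ f : SignVector (Fin n), ∀ (σ : SignVector (Fin n)) (F : Finset (Fin n)) (b : Bool),
      (∀ i ∈ T, i ∉ F → (σ i == f i) = b) → 𝓗.IsStrictMin (boolSign b • p) σ F T := by
  obtain ⟨c, hc, rfl⟩ := hp T hT
  have hsign (i : Fin n) : ∃ b, i ∈ T → 0 < boolSign b * c i := by
    by_cases hi : i ∈ T
    · exact (exists_boolSign_mul_pos (hc i hi)).imp fun _ h _ => h
    · exact ⟨true, fun h => absurd h hi⟩
  choose f hf using hsign
  refine ⟨f, fun σ F b hb => hG.isStrictMin_of_pos hT (c := fun i => boolSign b * c i) ?_ ?_⟩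
  · simp only [Finset.smul_sum, smul_smul]
  · intro i hi hiF
    rw [← hb i hi hiF, boolSign_beq, ← mul_assoc, ← mul_assoc, boolSign_mul_self, one_mul]
    exact hf i hi

lemma eq_of_isStrictMin (hA : A.card = d) (hB : B.card = d) (hFA : F ⊆ A) (hFB : F ⊆ B)
    (minA : 𝓗.IsStrictMin q σ F A) (minB : 𝓗.IsStrictMin q σ F B)
    (hAB : ∀ i ∈ B, 0 ≤ 𝓗.signedForm σ i (𝓗.vertex A))
    (hBA : ∀ i ∈ A, 0 ≤ 𝓗.signedForm σ i (𝓗.vertex B)) : A = B := by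
  by_contra hne
  have hv : 𝓗.vertex A ≠ 𝓗.vertex B := fun h => hne (hG.eq_of_vertex_eq hA hB h)
  exact (minA _ hBA (fun i hi => hG.form_vertex hB i (hFB hi)) hv.symm).asymm
    (minB _ hAB (fun i hi => hG.form_vertex hA i (hFA hi)) hv)

lemma eq_of_isStrictMin_of_isCube (hA : A.card = d) (hB : B.card = d) (hFA : F ⊆ A) (hFB : F ⊆ B)
    (minA : 𝓗.IsStrictMin q σ F A) (minB : 𝓗.IsStrictMin q σ F B)
    (cubeA : IsCube 𝓗.topes A σ) (cubeB : IsCube 𝓗.topes B σ) : A = B :=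
  hG.eq_of_isStrictMin hA hB hFA hFB minA minB
    (fun i _ => cell_subset_closedRegion (hG.vertex_mem_cell hA cubeA) i)
    fun i _ => cell_subset_closedRegion (hG.vertex_mem_cell hB cubeB) i

/-- Every vertex is the strict minimum of a generic functional over one of the chambers around it,
and no two vertices share that chamber. -/
lemma choose_le_card_topes : n.choose d ≤ 𝓗.topes.card := by
  classical
  obtain ⟨p, hp⟩ := hG.exists_isGeneric
  have hcard : (Finset.powersetCard d (Finset.univ : Finset (Fin n))).card = n.choose d := by simp
  rw [← hcard]
  refine Finset.card_le_card_of_forall_subsingleton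
    (fun T σ => IsCube 𝓗.topes T σ ∧ 𝓗.IsStrictMin (boolSign true • p) σ ∅ T)
    (fun T hT => ?_) fun σ _ A hA B hB => ?_
  · have hT' := (Finset.mem_powersetCard.1 hT).2
    obtain ⟨f, hf⟩ := hG.exists_forall_isStrictMin hp hT'
    obtain ⟨σ, hσ⟩ := hG.exists_isCube hT'
    have hτ : IsCube 𝓗.topes T fun i => if i ∈ T then f i else σ i :=
      hσ.of_subset subset_rfl fun i hi => if_neg hi
    exact ⟨_, hτ.mem, hτ, hf _ _ _ fun i hi _ => by simp [hi]⟩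
  · exact hG.eq_of_isStrictMin_of_isCube (Finset.mem_powersetCard.1 hA.1).2
      (Finset.mem_powersetCard.1 hB.1).2 (Finset.empty_subset _) (Finset.empty_subset _)
      hA.2.2 hB.2.2 hA.2.1 hB.2.1

open Classical in
/-- A flat mixed vertex is the strict minimum of a generic functional over one of its boundary
facets, and no two such vertices share that facet. -/
lemma card_filter_isFlat_le (S : Finset (SignVector (Fin n))) :
    ((mixedSets 𝓗.topes S d).filter (IsFlat 𝓗.topes S)).card ≤ (flipBoundary 𝓗.topes S).card := by
  obtain ⟨p, hp⟩ := hG.exists_isGeneric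
  refine Finset.card_le_card_of_forall_subsingleton
    (fun T q => IsCube 𝓗.topes T q.1 ∧ {q.2} ⊆ T ∧ 𝓗.IsStrictMin (boolSign true • p) q.1 {q.2} T)
    (fun T hT => ?_) fun q _ A hA B hB => ?_
  · obtain ⟨hmixed, hflat⟩ := Finset.mem_filter.1 hT
    obtain ⟨f, hf⟩ := hG.exists_forall_isStrictMin hp (mem_mixedSets.1 hmixed).1
    obtain ⟨σ, k, hkT, hq, hσ, hσf⟩ := hflat.exists_mem_flipBoundary hmixed f
    refine ⟨(σ, k), hq, hσ, Finset.singleton_subset_iff.2 hkT, hf _ _ _ fun i hi hik => ?_⟩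
    rw [beq_iff_eq]
    exact hσf i hi (Finset.notMem_singleton.1 hik)
  · exact hG.eq_of_isStrictMin_of_isCube (mem_mixedSets.1 (Finset.mem_filter.1 hA.1).1).1
      (mem_mixedSets.1 (Finset.mem_filter.1 hB.1).1).1 hA.2.2.1 hB.2.2.1 hA.2.2.2 hB.2.2.2
      hA.2.1 hB.2.1

end GeneralPosition

end GenericFunctional

section DimensionThree

open Classical

variable {n : ℕ} {𝓗 : Arrangement 3 n}

/-- The vertices, as triples, of the polyhedron cut out by the hyperplanes of `B` on the sides
`σ`. -/
def polyhedronVertices (𝓗 : Arrangement 3 n) (σ : SignVector (Fin n)) (B : Finset (Fin n)) :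
    Finset (Finset (Fin n)) :=
  (B.powersetCard 3).filter fun U => ∀ i ∈ B, 0 ≤ 𝓗.signedForm σ i (𝓗.vertex U)

/-- The edges, as pairs, of the chamber `σ` along which two facets with indices in `B` meet. -/
def chamberEdges (𝓗 : Arrangement 3 n) (σ : SignVector (Fin n)) (B : Finset (Fin n)) :
    Finset (Finset (Fin n)) :=
  (B.powersetCard 2).filter fun Q => IsCube 𝓗.topes Q σ

namespace GeneralPosition

variable (hG : 𝓗.GeneralPosition)
include hG

/-- At each vertex `U` two of the three facets give a generic functional or its negative a strict
minimum at `U` over the third facet, and a facet has only one minimum and one maximum. -/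
lemma card_polyhedronVertices_le (σ : SignVector (Fin n)) (B : Finset (Fin n)) :
    (𝓗.polyhedronVertices σ B).card ≤ 2 * B.card := by
  obtain ⟨p, hp⟩ := hG.exists_isGeneric
  have hcard : 2 * B.card = (B ×ˢ (Finset.univ : Finset Bool)).card := by
    simp [Finset.card_product, mul_comm]
  rw [hcard]
  refine Finset.card_le_card_of_forall_subsingleton
    (fun U q => q.1 ∈ U ∧ 𝓗.IsStrictMin (boolSign q.2 • p) σ {q.1} U)
    (fun U hU => ?_) fun q _ U hU V hV => ?_
  · obtain ⟨hUB, hcardU⟩ := Finset.mem_powersetCard.1 (Finset.mem_filter.1 hU).1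
    obtain ⟨f, hf⟩ := hG.exists_forall_isStrictMin hp hcardU
    obtain ⟨x, hxU, b, hb⟩ := exists_eq_off_singleton_of_card_eq_three hcardU fun i => σ i == f i
    exact ⟨(x, b), by simp [hUB hxU], hxU, hf _ _ _ hb⟩
  · obtain ⟨hU, hqU, minU⟩ := hU
    obtain ⟨hV, hqV, minV⟩ := hV
    obtain ⟨hU', hUB⟩ := Finset.mem_filter.1 hU
    obtain ⟨hV', hVB⟩ := Finset.mem_filter.1 hV
    obtain ⟨hU, hcardU⟩ := Finset.mem_powersetCard.1 hU'
    obtain ⟨hV, hcardV⟩ := Finset.mem_powersetCard.1 hV'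
    exact hG.eq_of_isStrictMin hcardU hcardV (Finset.singleton_subset_iff.2 hqU)
      (Finset.singleton_subset_iff.2 hqV) minU minV (fun i hi => hUB i (hV hi))
      fun i hi => hVB i (hU hi)

lemma exists_mem_polyhedronVertices {σ : SignVector (Fin n)} {B Q : Finset (Fin n)}
    (hQ : Q ∈ 𝓗.chamberEdges σ B) (hB : 3 ≤ B.card) :
    ∃ U ∈ 𝓗.polyhedronVertices σ B, Q ∈ U.powersetCard 2 := by
  obtain ⟨hQ', hcube⟩ := Finset.mem_filter.1 hQ
  obtain ⟨hQB, hcard⟩ := Finset.mem_powersetCard.1 hQ'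
  have hBQ : ¬ B ⊆ Q := fun h => by have := Finset.card_le_card h; lia
  obtain ⟨g, hgB, hgQ, z, hzero, hnonneg⟩ :=
    hG.exists_first_zero_of_not_subset (by lia) hBQ hcube
  have hU : (insert g Q).card = 3 := by rw [Finset.card_insert_of_notMem hgQ, hcard]
  obtain rfl := hG.eq_vertex hU hzero
  exact ⟨insert g Q, Finset.mem_filter.2 ⟨Finset.mem_powersetCard.2
    ⟨Finset.insert_subset hgB hQB, hU⟩, hnonneg⟩,
    Finset.mem_powersetCard.2 ⟨Finset.subset_insert g Q, hcard⟩⟩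

lemma card_chamberEdges_le (σ : SignVector (Fin n)) (B : Finset (Fin n)) :
    (𝓗.chamberEdges σ B).card ≤ 6 * B.card := by
  rcases lt_or_ge B.card 3 with hB | hB
  · calc (𝓗.chamberEdges σ B).card ≤ B.card.choose 2 :=
          (Finset.card_filter_le _ _).trans (Finset.card_powersetCard _ _).le
      _ ≤ 6 * B.card := by interval_cases B.card <;> decide
  have hsub : 𝓗.chamberEdges σ B ⊆
      (𝓗.polyhedronVertices σ B).biUnion fun U => U.powersetCard 2 := fun Q hQ =>
    Finset.mem_biUnion.2 (hG.exists_mem_polyhedronVertices hQ hB)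
  have hthree : ∀ U ∈ 𝓗.polyhedronVertices σ B, (U.powersetCard 2).card ≤ 3 := fun U hU => by
    rw [Finset.card_powersetCard,
      (Finset.mem_powersetCard.1 (Finset.mem_filter.1 hU).1).2, Nat.choose_succ_self_right]
  calc (𝓗.chamberEdges σ B).card ≤ (𝓗.polyhedronVertices σ B).card * 3 :=
        (Finset.card_le_card hsub).trans (Finset.card_biUnion_le_card_mul _ _ _ hthree)
    _ ≤ 6 * B.card := by have := hG.card_polyhedronVertices_le σ B; lia

lemma card_nonFlatSets_le (S : Finset (SignVector (Fin n))) (σ : SignVector (Fin n)) :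
    (nonFlatSets 𝓗.topes S 3 σ).card ≤ 12 * (boundaryDirs 𝓗.topes S σ).card := by
  obtain ⟨p, hp⟩ := hG.exists_isGeneric
  set B := boundaryDirs 𝓗.topes S σ
  calc (nonFlatSets 𝓗.topes S 3 σ).card
      ≤ (𝓗.chamberEdges σ B ×ˢ (Finset.univ : Finset Bool)).card := ?_
    _ = 2 * (𝓗.chamberEdges σ B).card := by simp [Finset.card_product, mul_comm]
    _ ≤ 12 * B.card := by have := hG.card_chamberEdges_le σ B; lia
  refine Finset.card_le_card_of_forall_subsingleton
    (fun T q => q.1 ⊆ T ∧ 𝓗.IsStrictMin (boolSign q.2 • p) σ q.1 T)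
    (fun T hT => ?_) fun q _ T hT U hU => ?_
  · obtain ⟨hcardT, hcube, hone⟩ := mem_nonFlatSets.1 hT
    obtain ⟨Q, hQ, hcardQ⟩ := Finset.exists_subset_card_eq hone
    obtain ⟨hQT, hQB⟩ := Finset.subset_inter_iff.1 hQ
    obtain ⟨y, hy⟩ : ∃ y, T \ Q = {y} := Finset.card_eq_one.1 (by
      rw [Finset.card_sdiff_of_subset hQT]; lia)
    obtain ⟨f, hf⟩ := hG.exists_forall_isStrictMin hp hcardT
    have hQmem : Q ∈ 𝓗.chamberEdges σ B := Finset.mem_filter.2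
      ⟨Finset.mem_powersetCard.2 ⟨hQB, hcardQ⟩, hcube.of_subset hQT fun _ _ => rfl⟩
    refine ⟨(Q, σ y == f y), Finset.mem_product.2 ⟨hQmem, Finset.mem_univ _⟩, hQT,
      hf _ _ _ fun i hi hiQ => ?_⟩
    have : i ∈ T \ Q := Finset.mem_sdiff.2 ⟨hi, hiQ⟩
    rw [hy, Finset.mem_singleton] at this
    rw [this]
  · obtain ⟨hcardT, hcubeT, -⟩ := mem_nonFlatSets.1 hT.1
    obtain ⟨hcardU, hcubeU, -⟩ := mem_nonFlatSets.1 hU.1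
    exact hG.eq_of_isStrictMin_of_isCube hcardT hcardU hT.2.1 hU.2.1 hT.2.2 hU.2.2 hcubeT hcubeU

lemma card_mixedSets_le (S : Finset (SignVector (Fin n))) :
    (mixedSets 𝓗.topes S 3).card ≤ 25 * (flipBoundary 𝓗.topes S).card := by
  have hsub : mixedSets 𝓗.topes S 3 ⊆
      (mixedSets 𝓗.topes S 3).filter (IsFlat 𝓗.topes S) ∪
        𝓗.topes.biUnion (nonFlatSets 𝓗.topes S 3) := fun T hT => by
    by_cases hflat : IsFlat 𝓗.topes S T
    · exact Finset.mem_union_left _ (Finset.mem_filter.2 ⟨hT, hflat⟩)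
    simp only [IsFlat, not_forall, not_le] at hflat
    obtain ⟨σ, hσ, hone⟩ := hflat
    exact Finset.mem_union_right _ (Finset.mem_biUnion.2
      ⟨σ, hσ.mem, mem_nonFlatSets.2 ⟨(mem_mixedSets.1 hT).1, hσ, hone⟩⟩)
  have hnonflat : (𝓗.topes.biUnion (nonFlatSets 𝓗.topes S 3)).card ≤
      24 * (flipBoundary 𝓗.topes S).card :=
    calc _ ≤ ∑ σ ∈ 𝓗.topes, 12 * (boundaryDirs 𝓗.topes S σ).card :=
          Finset.card_biUnion_le.trans
            (Finset.sum_le_sum fun σ _ => hG.card_nonFlatSets_le S σ)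
      _ ≤ _ := by
          rw [← Finset.mul_sum]
          have := sum_card_boundaryDirs_le 𝓗.topes S
          lia
  have hflat := hG.card_filter_isFlat_le S
  have hunion := (Finset.card_le_card hsub).trans (Finset.card_union_le _ _)
  lia

end GeneralPosition

end DimensionThree

end Arrangement

/-! ### Components and full flats -/

namespace SignVector

section Frontier

open Classical

variable {ι : Type*} {R S : Finset (SignVector ι)} {A B : Finset ι}
  {σ τ : SignVector ι} {j : ℕ}

lemma isCube_empty : IsCube S ∅ σ ↔ σ ∈ S :=
  ⟨IsCube.mem, fun h τ hτ => (funext fun i => hτ i (Finset.notMem_empty i) : τ = σ) ▸ h⟩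

/-- The flat `L_A` is full if all chambers of `R` around it belong to `S`: every `A`-cube of `R` is
contained in `S`. -/
def IsFull (R S : Finset (SignVector ι)) (A : Finset ι) : Prop :=
  ∀ ⦃σ⦄, IsCube R A σ → IsCube S A σ

lemma isFull_empty : IsFull R S ∅ ↔ R ⊆ S := by
  simp only [IsFull, isCube_empty, Finset.subset_iff]

variable [Fintype ι]

/-- The `j`-sets that carry a cube of `S`, that is, the `j`-element part of the support. -/
def cubeSupport (S : Finset (SignVector ι)) (j : ℕ) : Finset (Finset ι) :=
  Finset.univ.filter fun A => A.card = j ∧ ∃ σ, IsCube S A σ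

/-- The `j`-sets `A` whose flat `L_A` is full. -/
def fullSets (R S : Finset (SignVector ι)) (j : ℕ) : Finset (Finset ι) :=
  Finset.univ.filter fun A => A.card = j ∧ IsFull R S A

lemma mem_cubeSupport : A ∈ cubeSupport S j ↔ A.card = j ∧ ∃ σ, IsCube S A σ := by
  simp [cubeSupport]

lemma mem_fullSets : A ∈ fullSets R S j ↔ A.card = j ∧ IsFull R S A := by
  simp [fullSets]

lemma fullSets_subset_powersetCard :
    fullSets R S j ⊆ Finset.powersetCard j Finset.univ := fun _ hA =>
  Finset.mem_powersetCard.2 ⟨Finset.subset_univ _, (mem_fullSets.1 hA).1⟩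

lemma card_fullSets_le : (fullSets R S j).card ≤ (Fintype.card ι).choose j :=
  (Finset.card_le_card fullSets_subset_powersetCard).trans_eq (by simp)

lemma fullSets_zero (h : ¬ R ⊆ S) : fullSets R S 0 = ∅ := by
  refine Finset.eq_empty_of_forall_notMem fun A hA => h ?_
  obtain ⟨hA0, hA⟩ := mem_fullSets.1 hA
  exact isFull_empty.1 (Finset.card_eq_zero.1 hA0 ▸ hA)

lemma mem_cubeSupport_of_subset (hA : A ∈ cubeSupport S j) (hBA : B ⊆ A) :
    B ∈ cubeSupport S B.card :=
  have ⟨σ, hσ⟩ := (mem_cubeSupport.1 hA).2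
  mem_cubeSupport.2 ⟨rfl, σ, hσ.of_subset hBA fun _ _ => rfl⟩

variable [DecidableEq ι]

/-- The `A`-cubes of `S` adjacent to an `A`-cube of `R` that is not contained in `S`. -/
def cubeFrontier (R S : Finset (SignVector ι)) (A : Finset ι) : Finset (SignVector ι) :=
  Finset.univ.filter fun σ =>
    IsCube S A σ ∧ ∃ g, IsCube R A (flipAt g σ) ∧ ¬ IsCube S A (flipAt g σ)

lemma mem_cubeFrontier : σ ∈ cubeFrontier R S A ↔
    IsCube S A σ ∧ ∃ g, IsCube R A (flipAt g σ) ∧ ¬ IsCube S A (flipAt g σ) := by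
  simp [cubeFrontier]

lemma numComponents_eq_zero (h : A ∉ cubeSupport S A.card) : numComponents S A = 0 := by
  have : IsEmpty {σ // IsCube S A σ} :=
    ⟨fun σ => h (mem_cubeSupport.2 ⟨rfl, σ.1, σ.2⟩)⟩
  have : IsEmpty (cubeGraph S A).ConnectedComponent := Quot.instIsEmpty
  exact Nat.card_of_isEmpty

lemma hammingDist_flipAt_lt {g : ι} (hg : σ g ≠ τ g) :
    hammingDist (flipAt g σ) τ < hammingDist σ τ := by
  refine Finset.card_lt_card (Finset.ssubset_iff_subset_ne.2 ⟨fun i hi => ?_, fun h => ?_⟩)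
  · rcases eq_or_ne i g with rfl | hig
    · simpa using hg
    · simpa [flipAt_of_ne hig] using hi
  · have : g ∈ Finset.univ.filter fun i => flipAt g σ i ≠ τ i := h ▸ by simpa using hg
    simp [Bool.eq_not.2 hg] at this

lemma card_mixedSets_sdiff_le : (mixedSets R (R \ S) j).card ≤ (mixedSets R S j).card := by
  refine Finset.card_le_card fun T hT => ?_
  obtain ⟨hTj, σ, hσR, hσ, hnot⟩ := mem_mixedSets.1 hT
  obtain ⟨τ, hτ, hτS⟩ : ∃ τ, (∀ i ∉ T, τ i = σ i) ∧ τ ∉ R \ S := by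
    simpa [IsCube] using hnot
  refine mem_mixedSets.2 ⟨hTj, τ, hσR.of_subset subset_rfl hτ, ?_, fun hτ' => ?_⟩
  · by_contra h
    exact hτS (Finset.mem_sdiff.2 ⟨hσR τ hτ, h⟩)
  · exact (Finset.mem_sdiff.1 hσ).2 (hτ' σ fun i hi => (hτ i hi).symm)

end Frontier

end SignVector

namespace Arrangement.GeneralPosition

open SignVector

section Components

open Classical

variable {d n : ℕ} {𝓗 : Arrangement d n} {S : Finset (SignVector (Fin n))}
  {A B T : Finset (Fin n)} {σ τ : SignVector (Fin n)} {j : ℕ} (hG : 𝓗.GeneralPosition)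
include hG

/-- Walk from one cube towards the other along flips of `𝓗.topes`: either the walk stays in `S`, or
the last cube before leaving `S` is on the frontier. -/
lemma exists_reachable_or (hS : S ⊆ 𝓗.topes) (σ : {σ // IsCube S A σ})
    (hτ : IsCube 𝓗.topes A τ) :
    (∃ ρ : {σ // IsCube S A σ}, ρ.1 ∈ cubeFrontier 𝓗.topes S A ∧ (cubeGraph S A).Reachable σ ρ) ∨
      ∃ hτS : IsCube S A τ, (cubeGraph S A).Reachable σ ⟨τ, hτS⟩ := by
  induction hk : hammingDist σ.1 τ using Nat.strong_induction_on generalizing σ with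
  | _ k ih =>
    rcases eq_or_ne σ.1 τ with rfl | hne
    · exact .inr ⟨σ.2, .refl _⟩
    obtain ⟨g, hg, hcube⟩ := hG.exists_isCube_flipAt (σ.2.mono_set hS) hτ hne
    by_cases hgS : IsCube S A (flipAt g σ.1)
    · have hstep : (cubeGraph S A).Reachable σ ⟨flipAt g σ.1, hgS⟩ :=
        SimpleGraph.Adj.reachable ⟨g, rfl⟩
      rcases ih _ (hk ▸ hammingDist_flipAt_lt hg) ⟨_, hgS⟩ rfl with ⟨ρ, hρ, h⟩ | ⟨hτS, h⟩
      · exact .inl ⟨ρ, hρ, hstep.trans h⟩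
      · exact .inr ⟨hτS, hstep.trans h⟩
    · exact .inl ⟨σ, mem_cubeFrontier.2 ⟨σ.2, g, hcube, hgS⟩, .refl _⟩

lemma exists_reachable_of_not_isFull (hS : S ⊆ 𝓗.topes) (hA : ¬ IsFull 𝓗.topes S A)
    (σ : {σ // IsCube S A σ}) :
    ∃ ρ : {σ // IsCube S A σ}, ρ.1 ∈ cubeFrontier 𝓗.topes S A ∧
      (cubeGraph S A).Reachable σ ρ := by
  simp only [IsFull, not_forall] at hA
  obtain ⟨τ, hτ, hτS⟩ := hA
  exact (hG.exists_reachable_or hS σ hτ).resolve_right fun ⟨h, _⟩ => hτS h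

lemma numComponents_le_card_cubeFrontier (hS : S ⊆ 𝓗.topes) (hA : ¬ IsFull 𝓗.topes S A) :
    numComponents S A ≤ (cubeFrontier 𝓗.topes S A).card := by
  let f (ρ : cubeFrontier 𝓗.topes S A) : (cubeGraph S A).ConnectedComponent :=
    (cubeGraph S A).connectedComponentMk ⟨ρ.1, (mem_cubeFrontier.1 ρ.2).1⟩
  have hf : Function.Surjective f := fun c => by
    induction c using SimpleGraph.ConnectedComponent.ind with
    | _ σ =>
      obtain ⟨ρ, hρ, hσρ⟩ := hG.exists_reachable_of_not_isFull hS hA σ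
      exact ⟨⟨ρ, hρ⟩, (SimpleGraph.ConnectedComponent.sound hσρ).symm⟩
  simpa [numComponents] using Nat.card_le_card_of_surjective f hf

lemma numComponents_le_one (hS : S ⊆ 𝓗.topes) (hA : IsFull 𝓗.topes S A) :
    numComponents S A ≤ 1 := by
  have hconn : (cubeGraph S A).Preconnected := fun σ τ => by
    rcases hG.exists_reachable_or hS σ (τ.2.mono_set hS) with ⟨ρ, hρ, -⟩ | ⟨_, h⟩
    · obtain ⟨-, g, hg, hgS⟩ := mem_cubeFrontier.1 hρ
      exact absurd (hA hg) hgS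
    · exact h
  have := hconn.subsingleton_connectedComponent
  exact Finite.card_le_one_iff_subsingleton.2 this

lemma numComponents_le (hS : S ⊆ 𝓗.topes) (A : Finset (Fin n)) :
    numComponents S A ≤
      (cubeFrontier 𝓗.topes S A).card + if IsFull 𝓗.topes S A then 1 else 0 := by
  split_ifs with hA
  · exact (hG.numComponents_le_one hS hA).trans (Nat.le_add_left _ _)
  · exact hG.numComponents_le_card_cubeFrontier hS hA

lemma cubeFrontier_eq_empty (hS : S ⊆ 𝓗.topes) (hA : A.card = d) :
    cubeFrontier 𝓗.topes S A = ∅ := by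
  refine Finset.eq_empty_of_forall_notMem fun σ hσ => ?_
  obtain ⟨hσS, g, hg, hgS⟩ := mem_cubeFrontier.1 hσ
  exact hgS (hσS.of_subset subset_rfl (hG.eqOn_of_isCube hA hg (hσS.mono_set hS)))

lemma card_le_sum_numComponents_add (hS : S ⊆ 𝓗.topes) :
    S.card ≤ ∑ A with A.card < d, numComponents S A + (cubeSupport S d).card := by
  have hlarge : ∀ A : Finset (Fin n), ¬ A.card < d →
      numComponents S A ≤ if A ∈ cubeSupport S d then 1 else 0 := by
    intro A hA
    by_cases hsupp : A ∈ cubeSupport S A.card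
    · obtain ⟨σ, hσ⟩ := (mem_cubeSupport.1 hsupp).2
      have hAd : A.card = d := (hG.card_le_of_isCube (hσ.mono_set hS)).antisymm (not_lt.1 hA)
      have := hG.numComponents_le hS A
      rw [hG.cubeFrontier_eq_empty hS hAd, Finset.card_empty, zero_add] at this
      rw [if_pos (hAd ▸ hsupp)]
      exact this.trans (by split_ifs <;> simp)
    · exact (numComponents_eq_zero hsupp).trans_le (Nat.zero_le _)
  calc S.card ≤ ∑ A, numComponents S A := card_le_sum_numComponents S
    _ = ∑ A with A.card < d, numComponents S A + ∑ A with ¬ A.card < d, numComponents S A :=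
        (Finset.sum_filter_add_sum_filter_not _ _ _).symm
    _ ≤ ∑ A with A.card < d, numComponents S A + (cubeSupport S d).card := by
        gcongr
        refine (Finset.sum_le_sum fun A hA => hlarge A (Finset.mem_filter.1 hA).2).trans ?_
        rw [Finset.sum_boole, Nat.cast_id]
        exact Finset.card_le_card fun A hA => (Finset.mem_filter.1 hA).2

lemma exists_mem_mixedSets (hn : d ≤ n) (hS : S ⊆ 𝓗.topes)
    (hσ : σ ∈ cubeFrontier 𝓗.topes S A) :
    ∃ T ∈ mixedSets 𝓗.topes S d, A ⊆ T ∧ IsCube 𝓗.topes T σ := by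
  obtain ⟨hσS, g, hg, hgS⟩ := mem_cubeFrontier.1 hσ
  obtain ⟨T, hT, hTd, hTσ⟩ := hG.exists_isCube_card_eq hn ((hσS.mono_set hS).insert hg)
  have hAT : A ⊆ T := (Finset.subset_insert g A).trans hT
  refine ⟨T, mem_mixedSets.2 ⟨hTd, σ, hTσ, hσS.mem, fun h => hgS ?_⟩, hAT, hTσ⟩
  exact h.of_subset hAT (update_of_mem (hT (Finset.mem_insert_self g A)) σ _)

lemma card_filter_isCube_le (hT : T.card = d) :
    (Finset.univ.filter fun σ => IsCube 𝓗.topes T σ).card ≤ 2 ^ d := by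
  have hcard : T.powerset.card = 2 ^ d := by rw [Finset.card_powerset, hT]
  refine (Finset.card_le_card_of_injOn (fun σ => T.filter fun i => σ i = true)
    (fun σ _ => Finset.mem_powerset.2 (Finset.filter_subset _ _)) fun σ hσ τ hτ h => ?_).trans_eq
      hcard
  funext i
  by_cases hi : i ∈ T
  · have := Finset.ext_iff.1 h i
    simp only [Finset.mem_filter, hi, true_and] at this
    exact Bool.eq_iff_iff.2 this
  · exact hG.eqOn_of_isCube hT (Finset.mem_filter.1 hσ).2 (Finset.mem_filter.1 hτ).2 i hi

/-- Each of the `2 ^ d` corners of a mixed vertex `T` is on the frontier for at most the `2 ^ d`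
subsets of `T`. -/
lemma sum_card_cubeFrontier_le (hn : d ≤ n) (hS : S ⊆ 𝓗.topes) :
    ∑ A, (cubeFrontier 𝓗.topes S A).card ≤ 4 ^ d * (mixedSets 𝓗.topes S d).card := by
  set M := mixedSets 𝓗.topes S d
  have hM {T : Finset (Fin n)} (hT : T ∈ M) : T.card = d := (mem_mixedSets.1 hT).1
  have hfrontier (A : Finset (Fin n)) :
      (cubeFrontier 𝓗.topes S A).card ≤ (M.filter (A ⊆ ·)).card * 2 ^ d := by
    have hsub : cubeFrontier 𝓗.topes S A ⊆ (M.filter (A ⊆ ·)).biUnion fun T =>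
        Finset.univ.filter fun σ => IsCube 𝓗.topes T σ := fun σ hσ => by
      obtain ⟨T, hT, hAT, hTσ⟩ := hG.exists_mem_mixedSets hn hS hσ
      simpa using ⟨T, ⟨hT, hAT⟩, hTσ⟩
    exact (Finset.card_le_card hsub).trans <| Finset.card_biUnion_le_card_mul _ _ _ fun T hT =>
      hG.card_filter_isCube_le (hM (Finset.mem_filter.1 hT).1)
  calc ∑ A, (cubeFrontier 𝓗.topes S A).card
      ≤ ∑ A, (M.filter (A ⊆ ·)).card * 2 ^ d := Finset.sum_le_sum fun A _ => hfrontier A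
    _ = (∑ T ∈ M, (Finset.univ.filter (· ⊆ T)).card) * 2 ^ d := by
        rw [← Finset.sum_mul]
        exact congrArg (· * 2 ^ d) (Finset.sum_card_bipartiteAbove_eq_sum_card_bipartiteBelow
          fun A T : Finset (Fin n) => A ⊆ T)
    _ = (∑ T ∈ M, 2 ^ d) * 2 ^ d := by
        congr 1
        refine Finset.sum_congr rfl fun T hT => ?_
        rw [← hM hT, ← Finset.card_powerset]
        congr 1
        ext A
        simp
    _ = 4 ^ d * M.card := by
        rw [Finset.sum_const, smul_eq_mul, mul_assoc, ← mul_pow, mul_comm]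
        norm_num

lemma sum_numComponents_le (hn : d ≤ n) (hS : S ⊆ 𝓗.topes) :
    ∑ A with A.card < d, numComponents S A ≤
      4 ^ d * (mixedSets 𝓗.topes S d).card +
        ∑ j ∈ Finset.range d, (fullSets 𝓗.topes S j).card := by
  refine (Finset.sum_le_sum fun A _ => hG.numComponents_le hS A).trans ?_
  rw [Finset.sum_add_distrib, Finset.sum_boole, Nat.cast_id]
  refine add_le_add ((Finset.sum_le_sum_of_subset (Finset.filter_subset _ _)).trans
    (hG.sum_card_cubeFrontier_le hn hS)) (le_trans (Finset.card_le_card ?_) Finset.card_biUnion_le)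
  intro A hA
  simpa [mem_fullSets] using hA

lemma card_cubeSupport_le (hn : d ≤ n) (hS : S ⊆ 𝓗.topes) (j : ℕ) :
    (cubeSupport S j).card ≤
      (fullSets 𝓗.topes S j).card + 4 ^ d * (mixedSets 𝓗.topes S d).card := by
  have hcount : ∀ A ∈ cubeSupport S j, 1 ≤
      (if IsFull 𝓗.topes S A then 1 else 0) + (cubeFrontier 𝓗.topes S A).card := by
    intro A hA
    obtain ⟨-, σ, hσ⟩ := mem_cubeSupport.1 hA
    split_ifs with hfull
    · exact Nat.le_add_right 1 _
    · obtain ⟨ρ, hρ, -⟩ := hG.exists_reachable_of_not_isFull hS hfull ⟨σ, hσ⟩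
      simpa using ⟨_, hρ⟩
  rw [Finset.card_eq_sum_ones]
  refine (Finset.sum_le_sum hcount).trans ?_
  rw [Finset.sum_add_distrib, Finset.sum_boole, Nat.cast_id]
  refine add_le_add (Finset.card_le_card fun A hA => ?_)
    ((Finset.sum_le_sum_of_subset (Finset.subset_univ _)).trans
      (hG.sum_card_cubeFrontier_le hn hS))
  obtain ⟨hA, hfull⟩ := Finset.mem_filter.1 hA
  exact mem_fullSets.2 ⟨(mem_cubeSupport.1 hA).1, hfull⟩

lemma flipBoundary_nonempty (hS : S ⊂ 𝓗.topes) (hne : S.Nonempty) :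
    (flipBoundary 𝓗.topes S).Nonempty := by
  obtain ⟨σ, hσ⟩ := hne
  obtain ⟨ρ, hρ, -⟩ := hG.exists_reachable_of_not_isFull hS.1
    (isFull_empty.not.2 hS.2) ⟨σ, isCube_empty.2 hσ⟩
  obtain ⟨hρS, g, hg, hgS⟩ := mem_cubeFrontier.1 hρ
  rw [isCube_empty] at hρS hg hgS
  exact ⟨(ρ.1, g), mem_flipBoundary.2 ⟨hρS, hg, hgS⟩⟩

lemma mem_cubeSupport_of_isFull (hA : IsFull 𝓗.topes S A) (hT : T.card = d) (hAT : A ⊆ T) :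
    T ∈ cubeSupport S d := by
  obtain ⟨σ, hσ⟩ := hG.exists_isCube hT
  exact mem_cubeSupport.2 ⟨hT, σ, fun τ hτ => (hA (hσ.of_subset hAT hτ)).mem⟩

lemma mem_cubeSupport_of_card_union_le (hn : d ≤ n) (hA : IsFull 𝓗.topes S A)
    (hAB : (A ∪ B).card ≤ d) : B ∈ cubeSupport S B.card := by
  obtain ⟨T, hT, hTd⟩ := Finset.exists_superset_card_eq hAB (by simpa using hn)
  exact mem_cubeSupport_of_subset
    (hG.mem_cubeSupport_of_isFull hA hTd (Finset.subset_union_left.trans hT))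
    (Finset.subset_union_right.trans hT)

end Components

end Arrangement.GeneralPosition

/-! ### Counting full lines -/

lemma exists_choose_le_and_le_choose_add_one {m n r : ℕ} (hm : 0 < m) (hmn : m ≤ n.choose r) :
    ∃ k, r ≤ k ∧ k ≤ n ∧ k.choose r ≤ m ∧ m ≤ (k + 1).choose r := by
  have hrn : r ≤ n := by
    by_contra h
    rw [Nat.choose_eq_zero_of_lt (not_le.1 h)] at hmn
    lia
  have hr : r.choose r ≤ m := by rwa [Nat.choose_self]
  have hk : (n.findGreatest (·.choose r ≤ m)).choose r ≤ m :=
    Nat.findGreatest_spec (P := (·.choose r ≤ m)) hrn hr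
  refine ⟨_, Nat.le_findGreatest hrn hr, Nat.findGreatest_le n, hk, ?_⟩
  rcases (Nat.findGreatest_le (P := (·.choose r ≤ m)) n).eq_or_lt with hkn | hkn
  · rw [hkn]
    exact hmn.trans (Nat.choose_le_choose r n.le_succ)
  · exact (not_le.1 (Nat.findGreatest_is_greatest (P := (·.choose r ≤ m))
      (Nat.lt_succ_self _) hkn)).le

lemma cast_choose_three (n : ℕ) : (n.choose 3 : ℝ) = n * (n - 1) * (n - 2) / 6 := by
  cases n with
  | zero => simp
  | succ k =>
    have h : ((k : ℝ) + 1) * k.choose 2 = (k + 1).choose 3 * 3 := by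
      exact_mod_cast Nat.add_one_mul_choose_eq k 2
    rw [Nat.cast_choose_two] at h
    push_cast
    linarith

lemma choose_three_sq_le {k : ℕ} (hk : 3 ≤ k) :
    (k + 1).choose 3 ^ 2 ≤ k.choose 2 ^ 3 := by
  have hk' : (3 : ℝ) ≤ k := by exact_mod_cast hk
  have hfactor : ((k : ℝ) + 1) ^ 2 / 36 ≤ k * (k - 1) / 8 := by nlinarith
  have : ((k + 1).choose 3 : ℝ) ^ 2 ≤ (k.choose 2 : ℝ) ^ 3 := by
    rw [Nat.cast_choose_two, cast_choose_three]
    push_cast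
    calc (((k : ℝ) + 1) * (k + 1 - 1) * (k + 1 - 2) / 6) ^ 2
        = ((k : ℝ) * (k - 1)) ^ 2 * ((k + 1) ^ 2 / 36) := by ring
      _ ≤ ((k : ℝ) * (k - 1)) ^ 2 * (k * (k - 1) / 8) := by gcongr
      _ = ((k : ℝ) * (k - 1) / 2) ^ 3 := by ring
  exact_mod_cast this

open scoped FinsetFamily in
lemma card_sq_le_card_shadow_pow_three {n : ℕ} {𝒜 : Finset (Finset (Fin n))}
    (h𝒜 : (𝒜 : Set (Finset (Fin n))).Sized 3) : 𝒜.card ^ 2 ≤ (∂ 𝒜).card ^ 3 := by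
  rcases 𝒜.card.eq_zero_or_pos with h0 | h0
  · simp [h0]
  obtain ⟨k, hk, hkn, hle, hge⟩ :=
    exists_choose_le_and_le_choose_add_one h0 (by simpa using h𝒜.card_le)
  have hshadow : k.choose 2 ≤ (∂ 𝒜).card := by
    simpa using Finset.kruskal_katona_lovasz_form (i := 1) (by norm_num) hk hkn h𝒜 hle
  calc 𝒜.card ^ 2 ≤ (k + 1).choose 3 ^ 2 := Nat.pow_le_pow_left hge 2
    _ ≤ k.choose 2 ^ 3 := choose_three_sq_le hk
    _ ≤ (∂ 𝒜).card ^ 3 := Nat.pow_le_pow_left hshadow 3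

section Asymptotics

/- The variables count the following: `n` the hyperplanes, `m` the full lines, `p` the hyperplanes
that contain a full line, `b` the boundary edges, `s` and `r` the chambers of `S` and all
chambers. -/

variable {n ε b m p r s : ℝ}

/-- Eliminating `m` from the two hypotheses shows that `p` is at least about `n`. -/
lemma mul_sub_one_le_of_nearly_complete (hε : 0 ≤ ε) (hn : 1 ≤ n) (hp : 0 < p)
    (hdeg : p * (n - 1) ≤ 2 * (1 + ε) * m) (hm : 2 * m ≤ p * (p - 1)) :
    n * (n - 1) ≤ 2 * (1 + ε) ^ 2 * m := by
  have hn' : n - 1 ≤ (1 + ε) * (p - 1) := le_of_mul_le_mul_left (by nlinarith) hp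
  have hnp : n ≤ (1 + ε) * p := by nlinarith
  calc n * (n - 1) ≤ (1 + ε) * p * (n - 1) := mul_le_mul_of_nonneg_right hnp (by linarith)
    _ = (1 + ε) * (p * (n - 1)) := by ring
    _ ≤ (1 + ε) * (2 * (1 + ε) * m) := mul_le_mul_of_nonneg_left hdeg (by linarith)
    _ = 2 * (1 + ε) ^ 2 * m := by ring

lemma mul_pow_three_le_of_deficit (hε : 0 < ε) (hε1 : ε ≤ 1 / 100) (hn : 3 ≤ n) (hm0 : 0 ≤ m)
    (hm : m ≤ n * (n - 1) / 2) (hfull : n * (n - 1) ≤ 2 * (1 + ε) ^ 2 * m)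
    (hs : s ≤ (1 - 100 * ε) * r) (hr : n * (n - 1) * (n - 2) / 6 ≤ r)
    (hrs : r - s ≤ 1600 * b + (1 + n + n * (n - 1) / 2) + (n * (n - 1) / 2 - m) * n) :
    2 * ε * n ^ 3 ≤ 1600 * b + 3 * n ^ 2 := by
  have hdeficit : n * (n - 1) / 2 - m ≤ 3 * ε * (n * (n - 1) / 2) := by
    have hsq : (1 + ε) ^ 2 - 1 ≤ 3 * ε := by nlinarith
    calc n * (n - 1) / 2 - m ≤ ((1 + ε) ^ 2 - 1) * m := by linarith
      _ ≤ 3 * ε * m := mul_le_mul_of_nonneg_right hsq hm0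
      _ ≤ 3 * ε * (n * (n - 1) / 2) := mul_le_mul_of_nonneg_left hm (by linarith)
  have hsmall : (n * (n - 1) / 2 - m) * n ≤ 3 / 2 * ε * n ^ 3 := by
    have : 0 ≤ ε * n ^ 2 := by positivity
    nlinarith
  have hcubic : n ^ 3 / 27 ≤ n * (n - 1) * (n - 2) / 6 := by
    have : 0 ≤ n * ((n - 3) * (7 * n - 6)) :=
      mul_nonneg (by linarith) (mul_nonneg (by linarith) (by linarith))
    nlinarith
  have hlarge : 100 * ε * (n ^ 3 / 27) ≤ r - s := by nlinarith
  have : 1 + n + n * (n - 1) / 2 ≤ 3 * n ^ 2 := by nlinarith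
  have : 0 < ε * n ^ 3 := by positivity
  linarith

lemma le_mul_of_mul_pow_three_le (hε : 0 < ε) (hn : 3 ≤ n) (hb : 1 ≤ b) (hm : m ≤ n ^ 2)
    (h : 2 * ε * n ^ 3 ≤ 1600 * b + 3 * n ^ 2) : m ≤ (1600 / ε + 9 / ε ^ 2) * b := by
  rcases le_total (3 / ε) n with hn' | hn'
  · rw [div_le_iff₀ hε] at hn'
    have hcube : n ^ 3 ≤ 1600 / ε * b := by
      rw [div_mul_eq_mul_div, le_div_iff₀ hε]
      nlinarith [sq_nonneg n]
    have : m ≤ n ^ 3 := hm.trans (by nlinarith)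
    have : 0 ≤ 9 / ε ^ 2 * b := by positivity
    linarith
  · have hsq : n ^ 2 ≤ 9 / ε ^ 2 := by
      calc n ^ 2 ≤ (3 / ε) ^ 2 := by gcongr
        _ = 9 / ε ^ 2 := by ring
    have : 9 / ε ^ 2 ≤ 9 / ε ^ 2 * b := le_mul_of_one_le_right (by positivity) hb
    have : 0 ≤ 1600 / ε * b := by positivity
    linarith

lemma le_mul_of_counts (hε : 0 < ε) (hε1 : ε ≤ 1 / 100) (hn : 3 ≤ n) (hb : 1 ≤ b) (hm0 : 0 ≤ m)
    (hp0 : 0 ≤ p) (hdeg : p * (n - 1) ≤ 2 * (m + 1600 * b)) (hmp : 2 * m ≤ p * (p - 1))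
    (hm : m ≤ n * (n - 1) / 2) (hs : s ≤ (1 - 100 * ε) * r)
    (hr : n * (n - 1) * (n - 2) / 6 ≤ r)
    (hrs : r - s ≤ 1600 * b + (1 + n + n * (n - 1) / 2) + (n * (n - 1) / 2 - m) * n) :
    m ≤ (1600 / ε + 9 / ε ^ 2) * b := by
  rcases le_or_gt (ε * m) (1600 * b) with hA | hA
  · have hle : m ≤ 1600 / ε * b := by
      rw [div_mul_eq_mul_div, le_div_iff₀ hε]
      linarith
    have : 0 ≤ 9 / ε ^ 2 * b := by positivity
    linarith
  · have hp : 0 < p := by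
      refine hp0.lt_of_ne fun h => ?_
      rw [← h] at hmp
      nlinarith
    have hfull : n * (n - 1) ≤ 2 * (1 + ε) ^ 2 * m :=
      mul_sub_one_le_of_nearly_complete hε.le (by linarith) hp (by linarith) hmp
    exact le_mul_of_mul_pow_three_le hε hn hb (by nlinarith)
      (mul_pow_three_le_of_deficit hε hε1 hn hm0 hm hfull hs hr hrs)

end Asymptotics

namespace SignVector

section FullIndices

open Classical

variable {ι : Type*} [Fintype ι] {R S : Finset (SignVector ι)}

/-- The hyperplanes `H_i` containing `L_A` for some full `A` of size two. -/
def fullIndices (R S : Finset (SignVector ι)) : Finset ι :=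
  Finset.univ.filter fun i => ∃ A ∈ fullSets R S 2, i ∈ A

lemma mem_fullIndices {i : ι} : i ∈ fullIndices R S ↔ ∃ A ∈ fullSets R S 2, i ∈ A := by
  simp [fullIndices]

lemma card_fullSets_two_le_choose :
    (fullSets R S 2).card ≤ (fullIndices R S).card.choose 2 := by
  rw [← Finset.card_powersetCard]
  exact Finset.card_le_card fun A hA => Finset.mem_powersetCard.2
    ⟨fun i hi => mem_fullIndices.2 ⟨A, hA, hi⟩, (mem_fullSets.1 hA).1⟩

lemma card_cubeSupport_three_sq_le {n : ℕ} (S : Finset (SignVector (Fin n))) :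
    (cubeSupport S 3).card ^ 2 ≤ (cubeSupport S 2).card ^ 3 := by
  have hsized : (cubeSupport S 3 : Set (Finset (Fin n))).Sized 3 := fun T hT =>
    (mem_cubeSupport.1 (Finset.mem_coe.1 hT)).1
  refine (card_sq_le_card_shadow_pow_three hsized).trans
    (Nat.pow_le_pow_left (Finset.card_le_card fun A hA => ?_) 3)
  obtain ⟨T, hT, hAT, hcard⟩ := Finset.mem_shadow_iff_exists_mem_card_add_one.1 hA
  have hA2 : A.card = 2 := by have := hsized (Finset.mem_coe.2 hT); lia
  exact hA2 ▸ mem_cubeSupport_of_subset hT hAT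

end FullIndices

end SignVector

namespace Arrangement.GeneralPosition

open SignVector

section Isoperimetry

open Classical

/-- An `A`-cube of `S` and one of a disjoint `S'` have the same signs off `A` if `L_A` is a vertex,
so no vertex of `S'` lies on a full flat. -/
lemma card_cubeSupport_le_of_disjoint {d n : ℕ} {𝓗 : Arrangement (d + 1) n}
    {S S' : Finset (SignVector (Fin n))} (hG : 𝓗.GeneralPosition) (hSS' : Disjoint S S')
    (hS : S ⊆ 𝓗.topes) (hS' : S' ⊆ 𝓗.topes) :
    (cubeSupport S' (d + 1)).card ≤ (n.choose d - (fullSets 𝓗.topes S d).card) * n := by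
  set N := Finset.powersetCard d (Finset.univ : Finset (Fin n)) \ fullSets 𝓗.topes S d with hN
  have hNcard : N.card = n.choose d - (fullSets 𝓗.topes S d).card := by
    rw [hN, Finset.card_sdiff_of_subset fullSets_subset_powersetCard]
    simp
  have hsub : cubeSupport S' (d + 1) ⊆ (N ×ˢ Finset.univ).image fun p => insert p.2 p.1 := by
    intro T hT
    obtain ⟨hTd, σ, hσ⟩ := mem_cubeSupport.1 hT
    obtain ⟨g, hg⟩ : T.Nonempty := Finset.card_pos.1 (by lia)
    have hcard : (T.erase g).card = d := by rw [Finset.card_erase_of_mem hg, hTd]; simp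
    refine Finset.mem_image.2 ⟨(T.erase g, g), ?_, Finset.insert_erase hg⟩
    simp only [hN, Finset.mem_product, Finset.mem_sdiff, Finset.mem_powersetCard, Finset.mem_univ,
      and_true, Finset.subset_univ, true_and]
    refine ⟨hcard, fun hfull => ?_⟩
    obtain ⟨-, τ, hτ⟩ := mem_cubeSupport.1 <|
      hG.mem_cubeSupport_of_isFull (mem_fullSets.1 hfull).2 hTd (Finset.erase_subset g T)
    have hσS := hτ σ (hG.eqOn_of_isCube hTd (hσ.mono_set hS') (hτ.mono_set hS))
    exact Finset.disjoint_left.1 hSS' hσS hσ.mem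
  refine (Finset.card_le_card hsub).trans (Finset.card_image_le.trans_eq ?_)
  rw [Finset.card_product, hNcard, Finset.card_fin]

variable {n : ℕ} {𝓗 : Arrangement 3 n} {S : Finset (SignVector (Fin n))}
  (hG : 𝓗.GeneralPosition)
include hG

lemma sub_one_le_card_filter_cubeSupport (hn : 3 ≤ n) {i : Fin n}
    (hi : i ∈ fullIndices 𝓗.topes S) :
    n - 1 ≤ ((cubeSupport S 2).filter (i ∈ ·)).card := by
  obtain ⟨A, hA, hiA⟩ := mem_fullIndices.1 hi
  obtain ⟨hA2, hA⟩ := mem_fullSets.1 hA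
  have hpairs : (Finset.univ.erase i).card = n - 1 := by simp
  rw [← hpairs]
  refine Finset.card_le_card_of_injOn (fun j => {i, j}) (fun j hj => ?_) fun j hj k _ hjk => ?_
  · have hij : ({i, j} : Finset (Fin n)).card = 2 :=
      Finset.card_pair (Finset.ne_of_mem_erase hj).symm
    have hunion : (A ∪ {i, j}).card ≤ 3 := by
      have : A ∪ {i, j} = insert j A := by
        ext x
        simp only [Finset.mem_union, Finset.mem_insert, Finset.mem_singleton]
        grind
      rw [this]
      exact (Finset.card_insert_le j A).trans (by lia)
    simpa using hij ▸ hG.mem_cubeSupport_of_card_union_le hn hA hunion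
  · have hj' : j ≠ i := Finset.ne_of_mem_erase hj
    have : j ∈ ({i, k} : Finset (Fin n)) := hjk.subset (by simp)
    simpa [hj'] using this

lemma card_fullIndices_mul_le (hn : 3 ≤ n) :
    (fullIndices 𝓗.topes S).card * (n - 1) ≤ 2 * (cubeSupport S 2).card := by
  calc (fullIndices 𝓗.topes S).card * (n - 1)
      ≤ ∑ i ∈ fullIndices 𝓗.topes S, ((cubeSupport S 2).filter (i ∈ ·)).card :=
        Finset.card_nsmul_le_sum _ _ _ fun i => hG.sub_one_le_card_filter_cubeSupport hn
    _ = ∑ B ∈ cubeSupport S 2, ((fullIndices 𝓗.topes S).filter (· ∈ B)).card :=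
        Finset.sum_card_bipartiteAbove_eq_sum_card_bipartiteBelow
          fun (i : Fin n) (B : Finset (Fin n)) => i ∈ B
    _ ≤ (cubeSupport S 2).card * 2 := Finset.sum_le_card_nsmul _ _ _ fun B hB => by
        rw [← (mem_cubeSupport.1 hB).1]
        exact Finset.card_le_card fun i hi => (Finset.mem_filter.1 hi).2
    _ = 2 * (cubeSupport S 2).card := mul_comm _ _

lemma card_fullSets_one_le (hn : 3 ≤ n) :
    (fullSets 𝓗.topes S 1).card ≤ (cubeSupport S 2).card := by
  rcases (fullSets 𝓗.topes S 1).eq_empty_or_nonempty with h | ⟨A, hA⟩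
  · simp [h]
  obtain ⟨hA1, hA⟩ := mem_fullSets.1 hA
  calc (fullSets 𝓗.topes S 1).card ≤ n.choose 1 := card_fullSets_le.trans_eq (by simp)
    _ ≤ n.choose 2 := by
        rw [Nat.choose_one_right, Nat.choose_two_right, Nat.le_div_iff_mul_le (by norm_num)]
        exact Nat.mul_le_mul_left _ (by lia)
    _ = (Finset.powersetCard 2 (Finset.univ : Finset (Fin n))).card := by simp
    _ ≤ (cubeSupport S 2).card := Finset.card_le_card fun B hB => by
        have hB2 := (Finset.mem_powersetCard.1 hB).2
        exact hB2 ▸ hG.mem_cubeSupport_of_card_union_le hn hA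
          ((Finset.card_union_le A B).trans (by lia))

lemma card_topes_le (hn : 3 ≤ n) (hS : S ⊆ 𝓗.topes) :
    𝓗.topes.card ≤ S.card + (64 * (mixedSets 𝓗.topes S 3).card + (1 + n + n.choose 2) +
      (n.choose 2 - (fullSets 𝓗.topes S 2).card) * n) := by
  have hcompl : 𝓗.topes \ S ⊆ 𝓗.topes := Finset.sdiff_subset
  have hcard := hG.card_le_sum_numComponents_add hcompl
  have hsum := hG.sum_numComponents_le hn hcompl
  have hvertices := hG.card_cubeSupport_le_of_disjoint Finset.disjoint_sdiff hS hcompl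
  have hmixed : (mixedSets 𝓗.topes (𝓗.topes \ S) 3).card ≤ (mixedSets 𝓗.topes S 3).card :=
    card_mixedSets_sdiff_le
  have hfull (j : ℕ) : (fullSets 𝓗.topes (𝓗.topes \ S) j).card ≤ n.choose j :=
    card_fullSets_le.trans_eq (by simp)
  have h0 := hfull 0
  have h1 := hfull 1
  have h2 := hfull 2
  rw [Finset.card_sdiff_of_subset hS] at hcard
  simp only [Finset.sum_range_succ, Finset.sum_range_zero, zero_add] at hsum
  simp only [Nat.choose_zero_right, Nat.choose_one_right] at h0 h1
  simp only [Nat.reduceAdd, Nat.reducePow] at hvertices hsum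
  lia

end Isoperimetry

end Arrangement.GeneralPosition

/-- The factor bounding the number of components by the edge boundary for sets of at most the
proportion `1 - 100 * ε` of all chambers. -/
def isoperimetricConst (ε : ℝ) : ℝ := 3200 + 2 * (1600 / ε + 9 / ε ^ 2)

lemma le_isoperimetricConst {ε : ℝ} (hε : 0 < ε) : 3200 ≤ isoperimetricConst ε :=
  le_add_of_nonneg_right (by positivity)

namespace Arrangement

open SignVector

section Isoperimetry

variable {d n : ℕ} {𝓗 : Arrangement d n} {S : Finset (SignVector (Fin n))} {ε : ℝ}

lemma three_le_of_four_le_card (hS : S ⊂ 𝓗.topes) (h4 : 4 ≤ S.card) : 3 ≤ n := by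
  have hlt := Finset.card_lt_card hS
  have hle : 𝓗.topes.card ≤ 2 ^ n := by simpa using Finset.card_le_univ 𝓗.topes
  exact (Nat.pow_lt_pow_iff_right one_lt_two).1 (by lia : 2 ^ 2 < 2 ^ n)

lemma ssubset_topes (hS : S ⊆ 𝓗.topes) (hne : S.Nonempty) (hε : 0 < ε)
    (hcard : (S.card : ℝ) ≤ (1 - 100 * ε) * 𝓗.topes.card) : S ⊂ 𝓗.topes := by
  refine hS.ssubset_of_ne fun h => ?_
  have hpos : (0 : ℝ) < 𝓗.topes.card := by exact_mod_cast (hne.mono hS).card_pos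
  rw [h] at hcard
  nlinarith

end Isoperimetry

namespace GeneralPosition

section Isoperimetry

variable {n : ℕ} {𝓗 : Arrangement 3 n} {S : Finset (SignVector (Fin n))} {ε : ℝ}
  (hG : 𝓗.GeneralPosition)
include hG

lemma card_mixedSets_le_mul :
    ((mixedSets 𝓗.topes S 3).card : ℝ) ≤ 25 * (flipBoundary 𝓗.topes S).card := by
  exact_mod_cast hG.card_mixedSets_le S

variable (hn : 3 ≤ n) (hS : S ⊂ 𝓗.topes)
include hn hS

lemma card_cubeSupport_two_le :
    ((cubeSupport S 2).card : ℝ) ≤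
      (fullSets 𝓗.topes S 2).card + 1600 * (flipBoundary 𝓗.topes S).card := by
  have hcard : ((cubeSupport S 2).card : ℝ) ≤
      (fullSets 𝓗.topes S 2).card + 64 * (mixedSets 𝓗.topes S 3).card := by
    exact_mod_cast hG.card_cubeSupport_le hn hS.subset 2
  linarith [hG.card_mixedSets_le_mul (S := S)]

lemma card_topes_sub_card_le :
    (𝓗.topes.card : ℝ) - S.card ≤ 1600 * (flipBoundary 𝓗.topes S).card +
      (1 + n + (n : ℝ) * (n - 1) / 2) +
      ((n : ℝ) * (n - 1) / 2 - (fullSets 𝓗.topes S 2).card) * n := by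
  have hfull : (fullSets 𝓗.topes S 2).card ≤ n.choose 2 := card_fullSets_le.trans_eq (by simp)
  have hcard : (𝓗.topes.card : ℝ) ≤ S.card + (64 * (mixedSets 𝓗.topes S 3).card +
      (1 + n + n.choose 2) + (n.choose 2 - (fullSets 𝓗.topes S 2).card : ℕ) * n) := by
    exact_mod_cast hG.card_topes_le hn hS.subset
  rw [Nat.cast_sub hfull, Nat.cast_choose_two] at hcard
  linarith [hG.card_mixedSets_le_mul (S := S)]

variable (hne : S.Nonempty) (hε : 0 < ε) (hε1 : ε ≤ 1 / 100)
  (hcard : (S.card : ℝ) ≤ (1 - 100 * ε) * 𝓗.topes.card)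
include hne hε hε1 hcard

lemma card_fullSets_two_le :
    ((fullSets 𝓗.topes S 2).card : ℝ) ≤
      (1600 / ε + 9 / ε ^ 2) * (flipBoundary 𝓗.topes S).card := by
  have hdeg : ((fullIndices 𝓗.topes S).card : ℝ) * (n - 1) ≤ 2 * (cubeSupport S 2).card := by
    have := hG.card_fullIndices_mul_le (S := S) hn
    rw [← Nat.cast_pred (by lia)]
    exact_mod_cast this
  have hpairs : ((fullSets 𝓗.topes S 2).card : ℝ) ≤ (fullIndices 𝓗.topes S).card.choose 2 := by
    exact_mod_cast card_fullSets_two_le_choose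
  have hfull : ((fullSets 𝓗.topes S 2).card : ℝ) ≤ n.choose 2 := by
    exact_mod_cast card_fullSets_le.trans_eq (by simp)
  have hvertices : (n.choose 3 : ℝ) ≤ 𝓗.topes.card := by exact_mod_cast hG.choose_le_card_topes
  rw [Nat.cast_choose_two] at hpairs hfull
  rw [cast_choose_three] at hvertices
  exact le_mul_of_counts hε hε1 (by exact_mod_cast hn)
    (by exact_mod_cast (hG.flipBoundary_nonempty hS hne).card_pos) (Nat.cast_nonneg _)
    (Nat.cast_nonneg _) (hdeg.trans (by linarith [hG.card_cubeSupport_two_le hn hS]))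
    (by linarith) hfull hcard hvertices (hG.card_topes_sub_card_le hn hS)

lemma sum_numComponents_le_mul :
    (∑ A with A.card < 3, numComponents S A : ℝ) ≤
      isoperimetricConst ε * (flipBoundary 𝓗.topes S).card := by
  have hsum : (∑ A with A.card < 3, numComponents S A : ℝ) ≤
      64 * (mixedSets 𝓗.topes S 3).card +
        ((fullSets 𝓗.topes S 1).card + (fullSets 𝓗.topes S 2).card) := by
    have := hG.sum_numComponents_le hn hS.subset
    simp only [Finset.sum_range_succ, Finset.sum_range_zero, zero_add, fullSets_zero hS.not_subset,
      Finset.card_empty] at this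
    exact_mod_cast this
  have hlines : ((fullSets 𝓗.topes S 1).card : ℝ) ≤ (cubeSupport S 2).card := by
    exact_mod_cast hG.card_fullSets_one_le hn
  rw [isoperimetricConst]
  linarith [hG.card_mixedSets_le_mul (S := S), hG.card_cubeSupport_two_le hn hS,
    hG.card_fullSets_two_le hn hS hne hε hε1 hcard]

lemma card_cubeSupport_two_le_mul :
    ((cubeSupport S 2).card : ℝ) ≤ isoperimetricConst ε * (flipBoundary 𝓗.topes S).card := by
  have : 0 ≤ (1600 / ε + 9 / ε ^ 2) * (flipBoundary 𝓗.topes S).card := by positivity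
  rw [isoperimetricConst]
  linarith [hG.card_cubeSupport_two_le hn hS, hG.card_fullSets_two_le hn hS hne hε hε1 hcard,
    Nat.cast_nonneg (α := ℝ) (flipBoundary 𝓗.topes S).card]

lemma card_sq_le :
    (S.card : ℝ) ^ 2 ≤ 4 * (isoperimetricConst ε * (flipBoundary 𝓗.topes S).card) ^ 3 := by
  have hsum := hG.sum_numComponents_le_mul hn hS hne hε hε1 hcard
  have hpairs := hG.card_cubeSupport_two_le_mul hn hS hne hε hε1 hcard
  have hadd : (S.card : ℝ) ≤
      ∑ A with A.card < 3, (numComponents S A : ℝ) + (cubeSupport S 3).card := by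
    exact_mod_cast hG.card_le_sum_numComponents_add hS.subset
  have hb : (1 : ℝ) ≤ (flipBoundary 𝓗.topes S).card := by
    exact_mod_cast (hG.flipBoundary_nonempty hS hne).card_pos
  have hvertices : ((cubeSupport S 3).card : ℝ) ^ 2 ≤ (cubeSupport S 2).card ^ 3 := by
    exact_mod_cast card_cubeSupport_three_sq_le S
  set v := ((cubeSupport S 3).card : ℝ)
  set y := isoperimetricConst ε * (flipBoundary 𝓗.topes S).card
  have hv : v ^ 2 ≤ y ^ 3 := hvertices.trans (by gcongr)
  have hy : 1 ≤ y := one_le_mul_of_one_le_of_one_le (by linarith [le_isoperimetricConst hε]) hb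
  calc (S.card : ℝ) ^ 2 ≤ (y + v) ^ 2 := by gcongr; linarith
    _ ≤ 2 * (y ^ 2 + v ^ 2) := add_sq_le
    _ ≤ 2 * (y ^ 3 + y ^ 3) := by gcongr ?_ * (?_ + ?_); exact pow_le_pow_right₀ hy (by norm_num)
    _ = 4 * y ^ 3 := by ring

end Isoperimetry

end GeneralPosition

end Arrangement

/-! ### From chambers to sign vectors -/

namespace Arrangement

open SignVector AffineMap

section Chambers

variable {d n : ℕ} {𝓗 : Arrangement d n} {A B : Finset (Fin n)} {σ τ : SignVector (Fin n)}
  {x y : Fin d → ℝ} {i : Fin n}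

lemma mem_H : x ∈ 𝓗.H i ↔ 𝓗.form i x = 0 := sub_eq_zero.symm

lemma mem_pos : x ∈ 𝓗.pos i ↔ 0 < 𝓗.form i x := by
  rw [form, sub_pos]
  rfl

lemma mem_neg : x ∈ 𝓗.neg i ↔ 𝓗.form i x < 0 := by
  rw [form, sub_neg]
  rfl

lemma mem_free : x ∈ 𝓗.free ↔ ∀ i, 𝓗.form i x ≠ 0 :=
  forall_congr' fun _ => mem_H.not

lemma cell_empty : 𝓗.cell ∅ σ = 𝓗.region σ := by simp [cell, region]

lemma cell_congr (h : ∀ i ∉ A, τ i = σ i) : 𝓗.cell A τ = 𝓗.cell A σ := by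
  ext x
  exact and_congr_right' (forall₂_congr fun i hi => by rw [signedForm, signedForm, h i hi])

lemma eqOff_of_mem_cell (hx : x ∈ 𝓗.cell A σ) (hτ : x ∈ 𝓗.closedRegion τ) :
    ∀ i ∉ A, τ i = σ i := fun i hi =>
  eq_of_boolSign_mul_pos ((hτ i).lt_of_ne' <|
    signedForm_eq_zero.not.2 fun h => (hx.2 i hi).ne' (signedForm_eq_zero.2 h)) (hx.2 i hi)

lemma eq_of_mem_region (hσ : x ∈ 𝓗.region σ) (hτ : x ∈ 𝓗.region τ) : σ = τ :=
  funext fun i => eq_of_boolSign_mul_pos (hσ i) (hτ i)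

lemma region_subset_closedRegion : 𝓗.region σ ⊆ 𝓗.closedRegion σ := fun _ hx i => (hx i).le

lemma lineMap_mem_cell (hx : x ∈ 𝓗.closedRegion σ) (hxA : ∀ i ∈ A, 𝓗.form i x = 0)
    (hy : y ∈ 𝓗.cell A σ) {t : ℝ} (ht : t ∈ Ioc (0 : ℝ) 1) : lineMap x y t ∈ 𝓗.cell A σ := by
  refine ⟨fun i hi => by rw [form_lineMap, hxA i hi, hy.1 i hi, mul_zero, mul_zero, add_zero],
    fun i hi => ?_⟩
  rw [signedForm_lineMap]
  exact add_pos_of_nonneg_of_pos (mul_nonneg (sub_nonneg.2 ht.2) (hx i))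
    (mul_pos ht.1 (hy.2 i hi))

lemma openSegment_subset_region (hx : x ∈ 𝓗.closedRegion σ) (hy : y ∈ 𝓗.region σ) :
    openSegment ℝ x y ⊆ 𝓗.region σ := by
  rw [openSegment_eq_image_lineMap]
  rintro _ ⟨t, ht, rfl⟩
  rw [← cell_empty] at hy ⊢
  exact lineMap_mem_cell hx (by simp) hy ⟨ht.1, ht.2.le⟩

lemma convex_region (σ : SignVector (Fin n)) : Convex ℝ (𝓗.region σ) :=
  convex_iff_openSegment_subset.2 fun _ hx _ hy =>
    openSegment_subset_region (region_subset_closedRegion hx) hy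

lemma isOpen_region (σ : SignVector (Fin n)) : IsOpen (𝓗.region σ) := by
  simp only [region, ofPred_forall]
  exact isOpen_iInter_of_finite fun i => isOpen_lt continuous_const (continuous_signedForm σ i)

lemma closedRegion_subset_closure (hσ : σ ∈ 𝓗.topes) :
    𝓗.closedRegion σ ⊆ closure (𝓗.region σ) := by
  intro x hx
  obtain ⟨y, hy⟩ := mem_topes.1 hσ
  have hx' : x ∈ closure (openSegment ℝ x y) := by
    rw [closure_openSegment]
    exact left_mem_segment ℝ x y
  exact closure_mono (openSegment_subset_region hx hy) hx'

lemma region_subset_free : 𝓗.region σ ⊆ 𝓗.free := fun _ hx =>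
  mem_free.2 fun i h => (hx i).ne' (signedForm_eq_zero.2 h)

lemma exists_mem_region (hx : x ∈ 𝓗.free) : ∃ σ, x ∈ 𝓗.region σ :=
  have ⟨σ, hσ⟩ := exists_mem_closedRegion 𝓗 x
  ⟨σ, fun i => (hσ i).lt_of_ne' (signedForm_eq_zero.not.2 (mem_free.1 hx i))⟩

lemma eq_of_isPreconnected {s : Set (Fin d → ℝ)} (hs : IsPreconnected s) (hsfree : s ⊆ 𝓗.free)
    (hxs : x ∈ s) (hys : y ∈ s) (hx : x ∈ 𝓗.region σ) (hy : y ∈ 𝓗.region τ) : σ = τ := by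
  by_contra hne
  obtain ⟨i, hi⟩ := Function.ne_iff.1 hne
  have hyi : 𝓗.signedForm σ i y < 0 := by
    simpa [signedForm, Bool.eq_not.2 hi.symm] using hy i
  obtain ⟨z, hz, hzero⟩ := hs.intermediate_value hys hxs (continuous_signedForm σ i).continuousOn
    ⟨hyi.le, (hx i).le⟩
  exact mem_free.1 (hsfree hz) i (signedForm_eq_zero.1 hzero)

lemma connectedComponentIn_free (hx : x ∈ 𝓗.region σ) :
    connectedComponentIn 𝓗.free x = 𝓗.region σ := by
  refine Subset.antisymm (fun y hy => ?_)
    ((convex_region σ).isPreconnected.subset_connectedComponentIn hx region_subset_free)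
  have hfree := connectedComponentIn_subset 𝓗.free x
  obtain ⟨τ, hτ⟩ := exists_mem_region (hfree hy)
  have hxx := mem_connectedComponentIn (region_subset_free hx)
  rwa [eq_of_isPreconnected isPreconnected_connectedComponentIn hfree hxx hy hx hτ]

lemma chambers_eq_image : 𝓗.chambers = 𝓗.region '' (𝓗.topes : Set (SignVector (Fin n))) := by
  ext C
  constructor
  · rintro ⟨x, hx, rfl⟩
    obtain ⟨σ, hσ⟩ := exists_mem_region hx
    exact ⟨σ, mem_topes.2 ⟨x, hσ⟩, (connectedComponentIn_free hσ).symm⟩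
  · rintro ⟨σ, hσ, rfl⟩
    obtain ⟨x, hx⟩ := mem_topes.1 hσ
    exact ⟨x, region_subset_free hx, (connectedComponentIn_free hx).symm⟩

lemma injOn_region : InjOn 𝓗.region (𝓗.topes : Set (SignVector (Fin n))) := by
  intro σ hσ τ _ h
  obtain ⟨x, hx⟩ := mem_topes.1 hσ
  exact eq_of_mem_region hx (h ▸ hx)

lemma finite_chambers : 𝓗.chambers.Finite := by
  rw [chambers_eq_image]
  exact 𝓗.topes.finite_toSet.image _

lemma ncard_chambers : 𝓗.chambers.ncard = 𝓗.topes.card := by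
  rw [chambers_eq_image, injOn_region.ncard_image, ncard_coe_finset]

lemma region_subset_pos_iff (hσ : σ ∈ 𝓗.topes) : 𝓗.region σ ⊆ 𝓗.pos i ↔ σ i = true := by
  obtain ⟨x, hx⟩ := mem_topes.1 hσ
  refine ⟨fun h => ?_, fun h y hy => ?_⟩
  · exact eq_of_boolSign_mul_pos (hx i) (by simpa [boolSign] using mem_pos.1 (h hx))
  · simpa [mem_pos, signedForm, boolSign, h] using hy i

lemma region_subset_neg_iff (hσ : σ ∈ 𝓗.topes) : 𝓗.region σ ⊆ 𝓗.neg i ↔ σ i = false := by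
  obtain ⟨x, hx⟩ := mem_topes.1 hσ
  refine ⟨fun h => ?_, fun h y hy => ?_⟩
  · exact eq_of_boolSign_mul_pos (hx i) (by simpa [boolSign] using mem_neg.1 (h hx))
  · simpa [mem_neg, signedForm, boolSign, h] using hy i

lemma separates_region_iff (hσ : σ ∈ 𝓗.topes) (hτ : τ ∈ 𝓗.topes) :
    𝓗.Separates i (𝓗.region σ) (𝓗.region τ) ↔ σ i ≠ τ i := by
  rw [Separates, region_subset_pos_iff hσ, region_subset_neg_iff hτ, region_subset_neg_iff hσ,
    region_subset_pos_iff hτ]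
  cases σ i <;> cases τ i <;> simp

lemma region_mem_chambers (hσ : σ ∈ 𝓗.topes) : 𝓗.region σ ∈ 𝓗.chambers := by
  rw [chambers_eq_image]
  exact mem_image_of_mem _ hσ

lemma adj_region_flipAt (hσ : σ ∈ 𝓗.topes) (hflip : flipAt i σ ∈ 𝓗.topes) :
    𝓗.Adj (𝓗.region σ) (𝓗.region (flipAt i σ)) := by
  refine ⟨region_mem_chambers hσ, region_mem_chambers hflip, i, ?_, fun e he => ?_⟩
  · exact (separates_region_iff hσ hflip).2 (by simp)
  · by_contra hei
    exact (separates_region_iff hσ hflip).1 he (flipAt_of_ne hei σ).symm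

end Chambers

section SignSet

variable {d n : ℕ} {𝓗 : Arrangement d n} {S : Set (Set (Fin d → ℝ))} {A B : Finset (Fin n)}
  {σ τ : SignVector (Fin n)} {x y : Fin d → ℝ}

open Classical in
/-- The topes of the chambers in `S`, which turn a set of chambers into a combinatorial object. -/
def signSet (𝓗 : Arrangement d n) (S : Set (Set (Fin d → ℝ))) : Finset (SignVector (Fin n)) :=
  𝓗.topes.filter fun σ => 𝓗.region σ ∈ S

lemma mem_signSet : σ ∈ 𝓗.signSet S ↔ σ ∈ 𝓗.topes ∧ 𝓗.region σ ∈ S := by simp [signSet]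

lemma signSet_subset_topes : 𝓗.signSet S ⊆ 𝓗.topes := fun _ hσ =>
  (mem_signSet.1 hσ).1

lemma exists_region_eq (hS : S ⊆ 𝓗.chambers) {C : Set (Fin d → ℝ)} (hC : C ∈ S) :
    ∃ σ ∈ 𝓗.signSet S, 𝓗.region σ = C := by
  obtain ⟨σ, hσ, rfl⟩ := chambers_eq_image.subset (hS hC)
  exact ⟨σ, mem_signSet.2 ⟨hσ, hC⟩, rfl⟩

lemma image_region_signSet (hS : S ⊆ 𝓗.chambers) :
    𝓗.region '' (𝓗.signSet S : Set (SignVector (Fin n))) = S :=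
  Subset.antisymm (image_subset_iff.2 fun _ hσ => (mem_signSet.1 hσ).2)
    fun _ hC => exists_region_eq hS hC

lemma card_signSet (hS : S ⊆ 𝓗.chambers) : (𝓗.signSet S).card = S.ncard := by
  conv_rhs => rw [← image_region_signSet hS]
  rw [(injOn_region.mono (Finset.coe_subset.2 signSet_subset_topes)).ncard_image, ncard_coe_finset]

lemma card_flipBoundary_le (S : Set (Set (Fin d → ℝ))) :
    (flipBoundary 𝓗.topes (𝓗.signSet S)).card ≤ (𝓗.edgeBoundary S).ncard := by
  have hfinite : (𝓗.edgeBoundary S).Finite :=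
    (finite_chambers.prod finite_chambers).subset fun _ hq => ⟨hq.2.2.1, hq.2.2.2.1⟩
  rw [← ncard_coe_finset]
  refine ncard_le_ncard_of_injOn (fun q => (𝓗.region q.1, 𝓗.region (flipAt q.2 q.1)))
    (fun q hq => ?_) (fun q hq q' hq' h => ?_) hfinite
  · obtain ⟨hq1, hflip, hflipS⟩ := mem_flipBoundary.1 hq
    obtain ⟨hq1, hq1S⟩ := mem_signSet.1 hq1
    exact ⟨hq1S, fun h => hflipS (mem_signSet.2 ⟨hflip, h⟩), adj_region_flipAt hq1 hflip⟩
  · obtain ⟨σ, g⟩ := q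
    obtain ⟨τ, k⟩ := q'
    obtain ⟨hq1, hflip, -⟩ := mem_flipBoundary.1 hq
    obtain ⟨hq1', hflip', -⟩ := mem_flipBoundary.1 hq'
    obtain ⟨h1, h2⟩ := Prod.mk.inj h
    obtain rfl : σ = τ := injOn_region (signSet_subset_topes hq1) (signSet_subset_topes hq1') h1
    have hgk : g = k := by
      by_contra hgk
      simpa [hgk] using congrFun (injOn_region hflip hflip' h2) g
    rw [hgk]

lemma mem_signSet_of_mem_thickening (hS : S ⊆ 𝓗.chambers) (hx : x ∈ thickening S)
    (hσ : σ ∈ 𝓗.topes) (hxσ : x ∈ 𝓗.closedRegion σ) : σ ∈ 𝓗.signSet S := by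
  obtain ⟨y, hyS, hyσ⟩ :=
    mem_closure_iff.1 (closedRegion_subset_closure hσ hxσ) _ isOpen_interior hx
  obtain ⟨z, hzσ, hzS⟩ := mem_closure_iff.1 (interior_subset hyS) _ (isOpen_region σ) hyσ
  obtain ⟨C, hC, hzC⟩ := mem_iUnion₂.1 hzS
  obtain ⟨τ, hτ, rfl⟩ := exists_region_eq hS hC
  rwa [eq_of_mem_region hzσ hzC]

/-- Near `x` no new signs appear: every closed region close to `x` contains `x`. -/
lemma eventually_mem_closedRegion (𝓗 : Arrangement d n) (x : Fin d → ℝ) :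
    ∀ᶠ y in 𝓝 x, ∀ σ, y ∈ 𝓗.closedRegion σ → x ∈ 𝓗.closedRegion σ := by
  have hneg (σ : SignVector (Fin n)) (i : Fin n) :
      ∀ᶠ y in 𝓝 x, 0 ≤ 𝓗.signedForm σ i y → 0 ≤ 𝓗.signedForm σ i x := by
    rcases le_or_gt 0 (𝓗.signedForm σ i x) with h | h
    · exact .of_forall fun _ _ => h
    · filter_upwards [(continuous_signedForm σ i).continuousAt.eventually (gt_mem_nhds h)] with y hy
      exact fun hy' => absurd hy hy'.not_gt
  have := Filter.eventually_all.2 fun σ => Filter.eventually_all.2 (hneg σ)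
  filter_upwards [this] with y hy σ hyσ i using hy σ i (hyσ i)

lemma mem_thickening_of_forall (h : ∀ σ, x ∈ 𝓗.closedRegion σ → σ ∈ 𝓗.signSet S) :
    x ∈ thickening S := by
  rw [thickening, mem_interior_iff_mem_nhds]
  filter_upwards [eventually_mem_closedRegion 𝓗 x] with y hy
  obtain ⟨σ, hσ⟩ := exists_mem_closedRegion 𝓗 y
  obtain ⟨hσR, hσS⟩ := mem_signSet.1 (h σ (hy σ hσ))
  exact closure_mono (subset_biUnion_of_mem (u := id) hσS) (closedRegion_subset_closure hσR hσ)

lemma form_eq_zero_of_mem_stratum (hx : x ∈ 𝓗.stratum S A) : ∀ i ∈ A, 𝓗.form i x = 0 :=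
  fun i hi => mem_H.1 (mem_iInter₂.1 hx.2 i hi)

lemma cell_subset_stratum (h : IsCube (𝓗.signSet S) A σ) : 𝓗.cell A σ ⊆ 𝓗.stratum S A :=
  fun _ hx => ⟨mem_thickening_of_forall fun τ hτ => h τ (eqOff_of_mem_cell hx hτ),
    mem_iInter₂.2 fun i hi => mem_H.2 (hx.1 i hi)⟩

lemma stratum_anti (hAB : A ⊆ B) : 𝓗.stratum S B ⊆ 𝓗.stratum S A :=
  inter_subset_inter_right _ (biInter_subset_biInter_left hAB)

lemma cell_nonempty_of_isCube_signSet (h : IsCube (𝓗.signSet S) A σ) : (𝓗.cell A σ).Nonempty :=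
  cell_nonempty_of_isCube (h.mono_set signSet_subset_topes)

namespace GeneralPosition

variable (hG : 𝓗.GeneralPosition) (hS : S ⊆ 𝓗.chambers)
include hG hS

lemma isCube_of_mem_stratum (hx : x ∈ 𝓗.stratum S A) (hσ : x ∈ 𝓗.closedRegion σ) :
    IsCube (𝓗.signSet S) A σ := fun τ hτ => by
  have hxτ : x ∈ 𝓗.closedRegion τ := fun i => by
    by_cases hi : i ∈ A
    · exact (signedForm_eq_zero.2 (form_eq_zero_of_mem_stratum hx i hi)).ge
    · rw [signedForm, hτ i hi]
      exact hσ i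
  have hτR : τ ∈ 𝓗.topes := (hG.isCube_of_mem_closedRegion (A := ∅) hxτ (by simp)).mem
  exact mem_signSet_of_mem_thickening hS hx.1 hτR hxτ

lemma connectedComponentIn_stratum_eq (hx : x ∈ 𝓗.stratum S A) (hσ : x ∈ 𝓗.closedRegion σ)
    (hy : y ∈ 𝓗.cell A σ) :
    connectedComponentIn (𝓗.stratum S A) x = connectedComponentIn (𝓗.stratum S A) y := by
  have hsegment : segment ℝ x y ⊆ 𝓗.stratum S A := by
    rw [segment_eq_image_lineMap]
    rintro _ ⟨t, ht, rfl⟩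
    rcases ht.1.eq_or_lt with rfl | ht0
    · rwa [lineMap_apply_zero]
    · exact cell_subset_stratum (hG.isCube_of_mem_stratum hS hx hσ)
        (lineMap_mem_cell hσ (form_eq_zero_of_mem_stratum hx) hy ⟨ht0, ht.2⟩)
  exact connectedComponentIn_eq <| (convex_segment x y).isPreconnected.subset_connectedComponentIn
    (left_mem_segment ℝ x y) hsegment (right_mem_segment ℝ x y)

/-- Two cells of `L_A` separated by one hyperplane `H_g` share a facet, a cell of `L_{A ∪ {g}}`. -/
lemma connectedComponentIn_stratum_flipAt {g : Fin n} (hσ : IsCube (𝓗.signSet S) A σ)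
    (hσg : IsCube (𝓗.signSet S) A (flipAt g σ)) (hx : x ∈ 𝓗.cell A σ)
    (hy : y ∈ 𝓗.cell A (flipAt g σ)) :
    connectedComponentIn (𝓗.stratum S A) x = connectedComponentIn (𝓗.stratum S A) y := by
  have hinsert := hσ.insert hσg
  obtain ⟨z, hz⟩ := cell_nonempty_of_isCube_signSet hinsert
  have hzA := stratum_anti (Finset.subset_insert g A) (cell_subset_stratum hinsert hz)
  have hz' : z ∈ 𝓗.cell (insert g A) (flipAt g σ) :=
    (cell_congr (update_of_mem (Finset.mem_insert_self g A) σ _)).symm.subset hz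
  rw [← hG.connectedComponentIn_stratum_eq hS hzA (cell_subset_closedRegion hz) hx,
    ← hG.connectedComponentIn_stratum_eq hS hzA (cell_subset_closedRegion hz') hy]

lemma ncard_connComps_stratum_le (A : Finset (Fin n)) :
    (connComps (𝓗.stratum S A)).ncard ≤ numComponents (𝓗.signSet S) A := by
  choose p hp using fun σ : {σ // IsCube (𝓗.signSet S) A σ} =>
    cell_nonempty_of_isCube_signSet σ.2
  set c := fun σ => connectedComponentIn (𝓗.stratum S A) (p σ)
  have hadj : ∀ σ τ, (cubeGraph (𝓗.signSet S) A).Adj σ τ → c σ = c τ := by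
    rintro σ ⟨_, hτ⟩ ⟨g, rfl⟩
    exact hG.connectedComponentIn_stratum_flipAt hS σ.2 hτ (hp σ) (hp _)
  have hwalk : ∀ σ τ, (cubeGraph (𝓗.signSet S) A).Walk σ τ → c σ = c τ := fun σ τ w => by
    induction w with
    | nil => rfl
    | cons h _ ih => exact (hadj _ _ h).trans ih
  have hsubset : connComps (𝓗.stratum S A) ⊆
      range (SimpleGraph.ConnectedComponent.lift c fun σ τ w _ => hwalk σ τ w) := by
    rintro _ ⟨x, hx, rfl⟩
    obtain ⟨σ, hσ⟩ := exists_mem_closedRegion 𝓗 x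
    have hcube := hG.isCube_of_mem_stratum hS hx hσ
    exact ⟨SimpleGraph.connectedComponentMk _ ⟨σ, hcube⟩,
      (hG.connectedComponentIn_stratum_eq hS hx hσ (hp ⟨σ, hcube⟩)).symm⟩
  calc (connComps (𝓗.stratum S A)).ncard ≤ _ := ncard_le_ncard hsubset (finite_range _)
    _ ≤ numComponents (𝓗.signSet S) A := Finite.card_range_le _

end GeneralPosition

end SignSet

end Arrangement

namespace Arrangement.GeneralPosition

open SignVector

section Isoperimetry

variable {n : ℕ} {𝓗 : Arrangement 3 n} {S : Set (Set (Fin 3 → ℝ))} {ε : ℝ}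
  (hG : 𝓗.GeneralPosition) (hS : S ⊆ 𝓗.chambers) (h4 : 4 ≤ S.ncard) (hε : 0 < ε)
  (hε1 : ε ≤ 1 / 100) (hcard : (S.ncard : ℝ) ≤ (1 - 100 * ε) * 𝓗.chambers.ncard)
include hG hS h4 hε hε1 hcard

lemma sum_ncard_connComps_stratum_le :
    ∑ A with A.card ≤ 2, ((connComps (𝓗.stratum S A)).ncard : ℝ) ≤
      isoperimetricConst ε * (𝓗.edgeBoundary S).ncard := by
  rw [← card_signSet hS] at h4 hcard
  rw [ncard_chambers] at hcard
  have hne : (𝓗.signSet S).Nonempty := Finset.card_pos.1 (by lia)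
  have hssubset := ssubset_topes signSet_subset_topes hne hε hcard
  calc ∑ A with A.card ≤ 2, ((connComps (𝓗.stratum S A)).ncard : ℝ)
      ≤ ∑ A with A.card < 3, (numComponents (𝓗.signSet S) A : ℝ) := by
        simp only [Nat.lt_succ_iff]
        gcongr
        exact hG.ncard_connComps_stratum_le hS _
    _ ≤ isoperimetricConst ε * (flipBoundary 𝓗.topes (𝓗.signSet S)).card :=
        hG.sum_numComponents_le_mul (three_le_of_four_le_card hssubset h4) hssubset hne hε hε1 hcard
    _ ≤ isoperimetricConst ε * (𝓗.edgeBoundary S).ncard := by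
        gcongr
        exacts [by linarith [le_isoperimetricConst hε], card_flipBoundary_le S]

lemma ncard_sq_le :
    (S.ncard : ℝ) ^ 2 ≤ 4 * (isoperimetricConst ε * (𝓗.edgeBoundary S).ncard) ^ 3 := by
  rw [← card_signSet hS] at h4 hcard ⊢
  rw [ncard_chambers] at hcard
  have hne : (𝓗.signSet S).Nonempty := Finset.card_pos.1 (by lia)
  have hssubset := ssubset_topes signSet_subset_topes hne hε hcard
  have hK : 0 ≤ isoperimetricConst ε := by linarith [le_isoperimetricConst hε]
  refine (hG.card_sq_le (three_le_of_four_le_card hssubset h4) hssubset hne hε hε1 hcard).trans ?_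
  gcongr
  exact card_flipBoundary_le S

end Isoperimetry

end Arrangement.GeneralPosition

section GeneralizedBinomial

variable {k s y : ℝ}

lemma sum_range_three_gchoose (k : ℝ) :
    ∑ i ∈ Finset.range 3, gchoose k i = (k ^ 2 + k + 2) / 2 := by
  simp only [gchoose, Finset.sum_range_succ, Finset.prod_range_succ, Finset.sum_range_zero,
    Finset.prod_range_zero, Nat.factorial]
  push_cast
  ring

lemma sum_range_four_gchoose (k : ℝ) :
    ∑ i ∈ Finset.range 4, gchoose k i = (k ^ 3 + 5 * k + 6) / 6 := by
  simp only [gchoose, Finset.sum_range_succ, Finset.prod_range_succ, Finset.sum_range_zero,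
    Finset.prod_range_zero, Nat.factorial]
  push_cast
  ring

lemma four_le_sum_range_four_gchoose (hk : 2 ≤ k) : 4 ≤ ∑ i ∈ Finset.range 4, gchoose k i := by
  have : 2 ^ 3 ≤ k ^ 3 := by gcongr
  rw [sum_range_four_gchoose]
  linarith

lemma sum_range_three_gchoose_le (hk : 2 ≤ k) (hs : s = ∑ i ∈ Finset.range 4, gchoose k i)
    (hy : 0 ≤ y) (h : s ^ 2 ≤ 4 * y ^ 3) : ∑ i ∈ Finset.range 3, gchoose k i ≤ 6 * y := by
  have hcube : k ^ 3 ≤ 6 * s := by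
    rw [hs, sum_range_four_gchoose]
    linarith
  have hsq : k ^ 2 ≤ 6 * y := by
    refine le_of_pow_le_pow_left₀ three_ne_zero (by positivity) ?_
    calc (k ^ 2) ^ 3 = (k ^ 3) ^ 2 := by ring
      _ ≤ (6 * s) ^ 2 := by gcongr
      _ = 36 * s ^ 2 := by ring
      _ ≤ 36 * (4 * y ^ 3) := by gcongr
      _ ≤ (6 * y) ^ 3 := by nlinarith [pow_nonneg hy 3]
  rw [sum_range_three_gchoose]
  nlinarith

lemma rpow_two_thirds_le (hs : 0 ≤ s) (hy : 0 ≤ y) (h : s ^ 2 ≤ y ^ 3) :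
    s ^ ((2 : ℝ) / 3) ≤ y := by
  calc s ^ ((2 : ℝ) / 3) = (s ^ 2) ^ ((3 : ℝ)⁻¹) := by
        rw [← Real.rpow_natCast_mul hs]
        norm_num
    _ ≤ (y ^ 3) ^ ((3 : ℝ)⁻¹) := by gcongr
    _ = y := Real.pow_rpow_inv_natCast hy three_ne_zero

end GeneralizedBinomial

/-- For every `D ∈ (0,1)` there is a constant `C = C(D) > 0` such
that: for every arrangement in general position in `ℝ³` and every set `S` of chambers
with `|S| = ∑_{i=0}^3 C(k,i)`, `k ≥ 2`, occupying at most a `D`-proportion of all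
chambers, one has `|∂S| ≥ C·∑_{|A| ≤ 2} |conn(T_S(A))|`; in particular
`|∂S| ≥ C·∑_{i=0}^2 C(k,i)`, and hence `|∂S| = Ω(|S|^{2/3})`. -/
theorem stmt10 (D : ℝ) (hD0 : 0 < D) (hD1 : D < 1) :
    ∃ C : ℝ, 0 < C ∧
      ∀ (n : ℕ) (𝓗 : Arrangement 3 n), 𝓗.GeneralPosition →
        ∀ S : Set (Set (Fin 3 → ℝ)), S ⊆ 𝓗.chambers →
          ∀ k : ℝ, 2 ≤ k →
            (S.ncard : ℝ) = ∑ i ∈ Finset.range 4, gchoose k i →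
            (S.ncard : ℝ) ≤ D * ((𝓗.chambers).ncard : ℝ) →
            (C * ∑ A ∈ Finset.univ.filter (fun A : Finset (Fin n) => A.card ≤ 2),
                ((connComps (𝓗.stratum S A)).ncard : ℝ) ≤
              ((𝓗.edgeBoundary S).ncard : ℝ)) ∧
            (C * ∑ i ∈ Finset.range 3, gchoose k i ≤
              ((𝓗.edgeBoundary S).ncard : ℝ)) ∧
            (C * (S.ncard : ℝ) ^ ((2 : ℝ) / 3) ≤
              ((𝓗.edgeBoundary S).ncard : ℝ)) := by
  set ε := (1 - D) / 100 with hεD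
  have hε : 0 < ε := by linarith
  have hK : 0 < isoperimetricConst ε := by linarith [le_isoperimetricConst hε]
  refine ⟨1 / (6 * isoperimetricConst ε), by positivity, fun n 𝓗 hG S hS k hk hcard hD => ?_⟩
  have h4 : 4 ≤ S.ncard := by exact_mod_cast hcard ▸ four_le_sum_range_four_gchoose hk
  have hDε : (S.ncard : ℝ) ≤ (1 - 100 * ε) * 𝓗.chambers.ncard := by
    rwa [hεD, mul_div_cancel₀ _ (by norm_num), sub_sub_cancel]
  have hcomponents := hG.sum_ncard_connComps_stratum_le hS h4 hε (by linarith) hDε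
  have hsq := hG.ncard_sq_le hS h4 hε (by linarith) hDε
  set y := isoperimetricConst ε * (𝓗.edgeBoundary S).ncard
  have hy0 : 0 ≤ y := by positivity
  have hmul {x : ℝ} (hx : x ≤ 6 * y) :
      1 / (6 * isoperimetricConst ε) * x ≤ (𝓗.edgeBoundary S).ncard := by
    rw [one_div, inv_mul_le_iff₀ (by positivity), mul_assoc]
    exact hx
  refine ⟨hmul (by linarith), hmul (sum_range_three_gchoose_le hk hcard hy0 hsq), hmul ?_⟩
  have hrpow : (S.ncard : ℝ) ^ ((2 : ℝ) / 3) ≤ 2 * y :=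
    rpow_two_thirds_le (by positivity) (by positivity)
      (hsq.trans (by nlinarith [pow_nonneg hy0 3]))
  linarith
end
end

section
/- Let F be a bounded two-dimensional convex polygon contained in an affine plane H in ℝ³, let p be a vertex of F, and let α_F(p) := π − ∠_F(p) be the exterior angle of F at p in H. If v is chosen uniformly at random from the unit sphere S², then the probability that the linear functional x ↦ ⟨x, v⟩ attains its minimum on F at p equals α_F(p)/(2π). More generally, if F is any (possibly unbounded) two-dimensional convex polyhedron in H with vertex p, this probability is at least α_F(p)/(2π). -/
open Set MeasureTheory
open scoped RealInnerProductSpace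

noncomputable section

/-! A linear functional is convex, so whether it is minimal on `F` at `p` depends only on the germ
of `F` at `p`; near `p` the set `F` is a sector with edge directions `u₁`, `u₂`, and the functional
`⟪·, v⟫` is minimal there exactly when `⟪u₁, v⟫` and `⟪u₂, v⟫` are nonnegative. This condition only
involves the orthogonal projection of `v` to the plane spanned by `u₁` and `u₂`. The law of that
projection is invariant under rotations of the plane and does not charge the origin, so by
uniqueness of Haar measure the direction of the projection is uniform on the circle. The directions
making an angle at most `π / 2` with both `u₁` and `u₂` form an arc of length `π - ∠(u₁, u₂)`. -/

open Module Metric Topology InnerProductGeometry Real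

section Convex

lemma isMinOn_iff_of_nhdsWithin_eq {E : Type*} [AddCommGroup E] [Module ℝ E] [TopologicalSpace E]
    [IsTopologicalAddGroup E] [ContinuousSMul ℝ E] {s t : Set E} {f : E → ℝ} {p : E}
    (hs : ConvexOn ℝ s f) (ht : ConvexOn ℝ t f) (hps : p ∈ s) (hpt : p ∈ t)
    (h : 𝓝[s] p = 𝓝[t] p) : IsMinOn f s p ↔ IsMinOn f t p :=
  ⟨fun hmin => .of_isLocalMinOn_of_convexOn hpt (hmin.filter_mono (h ▸ inf_le_right)) ht,
    fun hmin => .of_isLocalMinOn_of_convexOn hps (hmin.filter_mono (h ▸ inf_le_right)) hs⟩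

/-- The angular sector with apex `p` and edge directions `u₁`, `u₂`: the shape of a convex polygon
near one of its vertices. -/
def angularSector {E : Type*} [AddCommGroup E] [Module ℝ E] (p u₁ u₂ : E) : Set E :=
  {x | ∃ a b : ℝ, 0 ≤ a ∧ 0 ≤ b ∧ x = p + a • u₁ + b • u₂}

lemma apex_mem_angularSector {E : Type*} [AddCommGroup E] [Module ℝ E] (p u₁ u₂ : E) :
    p ∈ angularSector p u₁ u₂ :=
  ⟨0, 0, le_rfl, le_rfl, by module⟩

lemma convex_angularSector {E : Type*} [AddCommGroup E] [Module ℝ E] (p u₁ u₂ : E) :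
    Convex ℝ (angularSector p u₁ u₂) := by
  rintro _ ⟨a, b, ha, hb, rfl⟩ _ ⟨a', b', ha', hb', rfl⟩ s t hs ht hst
  refine ⟨s * a + t * a', s * b + t * b', by positivity, by positivity, ?_⟩
  obtain rfl : t = 1 - s := by linarith
  module

variable {E : Type*} [NormedAddCommGroup E] [InnerProductSpace ℝ E]

lemma isMinOn_inner_angularSector_iff {p u₁ u₂ v : E} :
    IsMinOn (⟪·, v⟫) (angularSector p u₁ u₂) p ↔ 0 ≤ ⟪u₁, v⟫ ∧ 0 ≤ ⟪u₂, v⟫ := by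
  constructor
  · intro h
    have h₁ := isMinOn_iff.1 h _ ⟨1, 0, zero_le_one, le_rfl, rfl⟩
    have h₂ := isMinOn_iff.1 h _ ⟨0, 1, le_rfl, zero_le_one, rfl⟩
    simpa [inner_add_left] using And.intro h₁ h₂
  · rintro ⟨h₁, h₂⟩ _ ⟨a, b, ha, hb, rfl⟩
    simp only [mem_ofPred_eq, inner_add_left, real_inner_smul_left]
    linarith [mul_nonneg ha h₁, mul_nonneg hb h₂]

lemma isMinOn_inner_iff_of_inter_ball_eq {F : Set E} (hF : Convex ℝ F) {p u₁ u₂ : E} {r : ℝ}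
    (hr : 0 < r) (hcone : F ∩ ball p r = angularSector p u₁ u₂ ∩ ball p r) (v : E) :
    IsMinOn (⟪·, v⟫) F p ↔ 0 ≤ ⟪u₁, v⟫ ∧ 0 ≤ ⟪u₂, v⟫ := by
  have hlin (s : Set E) (hs : Convex ℝ s) : ConvexOn ℝ s (⟪·, v⟫) :=
    ((innerₗ E).flip v).convexOn hs
  have hp : p ∈ F := (hcone.ge ⟨apex_mem_angularSector p u₁ u₂, mem_ball_self hr⟩).1
  have hball (s : Set E) : 𝓝[s ∩ ball p r] p = 𝓝[s] p :=
    nhdsWithin_inter_of_mem' (mem_nhdsWithin_of_mem_nhds (ball_mem_nhds p hr))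
  have hgerm : 𝓝[F] p = 𝓝[angularSector p u₁ u₂] p := by rw [← hball, hcone, hball]
  rw [isMinOn_iff_of_nhdsWithin_eq (hlin F hF) (hlin _ (convex_angularSector p u₁ u₂)) hp
    (apex_mem_angularSector p u₁ u₂) hgerm, isMinOn_inner_angularSector_iff]

end Convex

/-- Invariance of a measure under the orthogonal group. A probability measure carried by the unit
sphere is the uniform one if and only if it has this property. -/
def IsOrthogonallyInvariant {E : Type*} [NormedAddCommGroup E] [InnerProductSpace ℝ E]
    [MeasurableSpace E] (μ : Measure E) : Prop :=
  ∀ R : E ≃ₗᵢ[ℝ] E, μ.map R = μ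

namespace IsOrthogonallyInvariant

variable {E : Type*} [NormedAddCommGroup E] [InnerProductSpace ℝ E] [MeasurableSpace E]
  [BorelSpace E] {μ : Measure E}

lemma measure_inner_eq_zero_congr (hμ : IsOrthogonallyInvariant μ) {x y : E} (hx : x ≠ 0)
    (hy : y ≠ 0) : μ {v | ⟪x, v⟫ = 0} = μ {v | ⟪y, v⟫ = 0} := by
  have hy' : ‖y‖ ≠ 0 := norm_ne_zero_iff.2 hy
  set c : ℝ := ‖x‖ / ‖y‖ with hc
  have hc₀ : c ≠ 0 := div_ne_zero (norm_ne_zero_iff.2 hx) hy'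
  have hnorm : ‖x‖ = ‖c • y‖ := by
    rw [norm_smul, hc, norm_div, norm_norm, norm_norm, div_mul_cancel₀ _ hy']
  set R := (ℝ ∙ (x - c • y))ᗮ.reflection
  have hR (v : E) : ⟪x, R v⟫ = c * ⟪y, v⟫ := by
    rw [← R.inner_map_map, Submodule.reflection_reflection, Submodule.reflection_sub hnorm,
      real_inner_smul_left]
  have hmeas : MeasurableSet {v : E | ⟪x, v⟫ = 0} :=
    (isClosed_eq (by fun_prop) continuous_const).measurableSet
  rw [← hμ R, Measure.map_apply R.continuous.measurable hmeas, hμ R]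
  simp only [preimage_ofPred_eq, hR, mul_eq_zero, hc₀, false_or]

variable [FiniteDimensional ℝ E]

-- All hyperplanes have the same measure, and by Fubini their average over Lebesgue-distributed
-- normals is zero, since almost no `x` is orthogonal to a given `v ≠ 0`.
lemma ae_inner_ne_zero [SFinite μ] (hμ : IsOrthogonallyInvariant μ) (hμ₀ : μ {0} = 0) {u : E}
    (hu : u ≠ 0) : ∀ᵐ v ∂μ, ⟪u, v⟫ ≠ 0 := by
  have : Nontrivial E := ⟨u, 0, hu⟩
  have hnull (v : E) (hv : v ≠ 0) : ∀ᵐ x : E, ⟪x, v⟫ ≠ 0 := by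
    have hproper : (ℝ ∙ v)ᗮ ≠ ⊤ := by simpa using hv
    have hset : {x : E | ⟪x, v⟫ = 0} = (ℝ ∙ v)ᗮ :=
      ext fun _ => Submodule.mem_orthogonal_singleton_iff_inner_left.symm
    simpa only [ae_iff, not_not, hset] using Measure.addHaar_submodule volume _ hproper
  have hmeas : MeasurableSet {q : E × E | ⟪q.1, q.2⟫ ≠ 0} :=
    (isOpen_ne_fun (by fun_prop) continuous_const).measurableSet
  have hswap : ∀ᵐ x : E, ∀ᵐ v ∂μ, ⟪x, v⟫ ≠ 0 :=
    (Measure.ae_ae_comm hmeas).2 ((measure_eq_zero_iff_ae_notMem.1 hμ₀).mono hnull)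
  obtain ⟨x, hx, hx₀⟩ := (hswap.and (Measure.ae_ne volume 0)).exists
  simp only [ae_iff, not_not] at hx ⊢
  rw [hμ.measure_inner_eq_zero_congr hu hx₀, hx]

lemma map_orthogonalProjectionOnto (hμ : IsOrthogonallyInvariant μ) (P : Submodule ℝ E) :
    IsOrthogonallyInvariant (μ.map P.orthogonalProjectionOnto) := by
  intro R
  set T : E ≃ₗᵢ[ℝ] E :=
    (P.subtypeₗᵢ.comp R.toLinearIsometry).extend.toLinearIsometryEquiv rfl
  have hT (z : P) : T z = R z := LinearIsometry.extend_apply _ z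
  have hcomm : P.orthogonalProjectionOnto ∘ T = R ∘ P.orthogonalProjectionOnto := by
    refine funext fun v => ext_inner_left ℝ fun z => ?_
    obtain ⟨z, rfl⟩ := R.surjective z
    rw [Function.comp_apply, Function.comp_apply, P.inner_orthogonalProjectionOnto_eq_of_mem_left,
      ← hT, T.inner_map_map, R.inner_map_map, P.inner_orthogonalProjectionOnto_eq_of_mem_left]
  have hproj : Measurable P.orthogonalProjectionOnto := by fun_prop
  rw [Measure.map_map R.continuous.measurable hproj, ← hcomm,
    ← Measure.map_map hproj T.continuous.measurable, hμ T]

lemma map_orthogonalProjectionOnto_singleton_zero [SFinite μ] (hμ : IsOrthogonallyInvariant μ)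
    (hμ₀ : μ {0} = 0) {P : Submodule ℝ E} (hP : P ≠ ⊥) :
    μ.map P.orthogonalProjectionOnto {0} = 0 := by
  obtain ⟨u, huP, hu⟩ := P.exists_mem_ne_zero_of_ne_bot hP
  rw [Measure.map_apply (by fun_prop) (measurableSet_singleton 0)]
  refine measure_mono_null (fun v (hv : P.orthogonalProjectionOnto v = 0) => ?_)
    (ae_iff.1 (hμ.ae_inner_ne_zero hμ₀ hu))
  rw [mem_ofPred_eq, not_not, ← P.inner_orthogonalProjectionOnto_eq_of_mem_left ⟨u, huP⟩, hv,
    inner_zero_right]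

end IsOrthogonallyInvariant

section Plane

local instance : Fact (0 < 2 * π) := ⟨two_pi_pos⟩

lemma cos_nonneg_iff_abs_le_pi_div_two {t : ℝ} (ht : |t| < π + π / 2) :
    0 ≤ cos t ↔ |t| ≤ π / 2 := by
  rw [← cos_abs]
  refine ⟨fun h => ?_, fun h => cos_nonneg_of_mem_Icc ⟨by linarith [abs_nonneg t, pi_pos], h⟩⟩
  by_contra! hlt
  exact (cos_neg_of_pi_div_two_lt_of_lt hlt (by linarith)).not_ge h

lemma setOf_cos_nonneg_inter_Ioc {θ : ℝ} (hθ : |θ| < π) :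
    {s | 0 ≤ cos s ∧ 0 ≤ cos (s - θ)} ∩ Ioc (-π) π =
      closedBall 0 (π / 2) ∩ closedBall θ (π / 2) := by
  ext s
  have hcos (hs : |s| ≤ π) : 0 ≤ cos s ↔ |s| ≤ π / 2 :=
    cos_nonneg_iff_abs_le_pi_div_two (by linarith [pi_pos])
  have hcos_sub (hs : |s| ≤ π / 2) : 0 ≤ cos (s - θ) ↔ |s - θ| ≤ π / 2 :=
    cos_nonneg_iff_abs_le_pi_div_two ((abs_sub s θ).trans_lt (by linarith))
  simp only [mem_inter_iff, mem_ofPred_eq, mem_Ioc, mem_closedBall, Real.dist_eq, sub_zero]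
  constructor
  · rintro ⟨⟨h₀, h₁⟩, hs⟩
    have hs' := (hcos (abs_le.2 ⟨hs.1.le, hs.2⟩)).1 h₀
    exact ⟨hs', (hcos_sub hs').1 h₁⟩
  · rintro ⟨h₀, h₁⟩
    have hs : |s| < π := h₀.trans_lt (half_lt_self pi_pos)
    exact ⟨⟨(hcos hs.le).2 h₀, (hcos_sub h₀).2 h₁⟩, (abs_lt.1 hs).1, (abs_lt.1 hs).2.le⟩

/-- The dual of the planar sector spanned by the directions `0` and `θ`: the directions making an
angle at most `π / 2` with both. It is a subset of `AddCircle (2 * π)` and not of the synonym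
`Real.Angle` because only the former carries a measure. -/
def dualArc (θ : AddCircle (2 * π)) : Set (AddCircle (2 * π)) :=
  {φ | 0 ≤ Angle.cos φ ∧ 0 ≤ Angle.cos (φ - θ)}

lemma isClosed_dualArc (θ : AddCircle (2 * π)) : IsClosed (dualArc θ) := by
  have hcos : Continuous (Angle.cos : AddCircle (2 * π) → ℝ) := Angle.continuous_cos
  exact (isClosed_le continuous_const hcos).inter
    (isClosed_le continuous_const (hcos.comp (continuous_sub_right θ)))

lemma volume_dualArc {θ : ℝ} (hθ : |θ| < π) :
    volume (dualArc θ) = ENNReal.ofReal (π - |θ|) := by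
  have hlift : volume (dualArc θ) =
      volume ({s | 0 ≤ cos s ∧ 0 ≤ cos (s - θ)} ∩ Ioc (-π) (-π + 2 * π)) :=
    AddCircle.add_projection_respects_measure (2 * π) (-π) (isClosed_dualArc θ).measurableSet
  have hlength : min (0 + π / 2) (θ + π / 2) - max (0 - π / 2) (θ - π / 2) = π - |θ| := by grind
  rw [hlift, show -π + 2 * π = π by ring, setOf_cos_nonneg_inter_Ioc hθ, Real.closedBall_eq_Icc,
    Real.closedBall_eq_Icc, Icc_inter_Icc, Real.volume_Icc, ← hlength]

lemma haarAddCircle_real_dualArc {θ : ℝ} (hθ : |θ| < π) :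
    AddCircle.haarAddCircle.real (dualArc θ) = (π - |θ|) / (2 * π) := by
  have hvol := congrArg ENNReal.toReal (volume_dualArc hθ)
  rw [AddCircle.volume_eq_smul_haarAddCircle, Measure.smul_apply, smul_eq_mul, ENNReal.toReal_mul,
    ENNReal.toReal_ofReal two_pi_pos.le, ENNReal.toReal_ofReal (sub_nonneg.2 hθ.le)] at hvol
  rw [← hvol, mul_div_cancel_left₀ _ two_pi_pos.ne', measureReal_def]

variable {V : Type*} [NormedAddCommGroup V] [InnerProductSpace ℝ V] [Fact (finrank ℝ V = 2)]
  (o : Orientation ℝ V (Fin 2))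

/-- The oriented angle from `x` to `y` as a point of `AddCircle (2 * π)`, where its law can be
compared with Haar measure. -/
def circleAngle (x y : V) : AddCircle (2 * π) :=
  o.oangle x y

lemma inner_nonneg_iff_cos_oangle_nonneg {x y : V} (hx : x ≠ 0) (hy : y ≠ 0) :
    0 ≤ ⟪x, y⟫ ↔ 0 ≤ Angle.cos (o.oangle x y) := by
  rw [o.inner_eq_norm_mul_norm_mul_cos_oangle, mul_nonneg_iff_of_pos_left (by positivity)]

lemma circleAngle_mem_dualArc_iff {u₁ u₂ v : V} (hu₁ : u₁ ≠ 0) (hu₂ : u₂ ≠ 0) (hv : v ≠ 0) :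
    circleAngle o u₁ v ∈ dualArc (circleAngle o u₁ u₂) ↔ 0 ≤ ⟪u₁, v⟫ ∧ 0 ≤ ⟪u₂, v⟫ := by
  rw [inner_nonneg_iff_cos_oangle_nonneg o hu₁ hv, inner_nonneg_iff_cos_oangle_nonneg o hu₂ hv,
    ← o.oangle_sub_left hu₁ hu₂ hv]
  rfl

variable [MeasurableSpace V] [BorelSpace V]

lemma measurable_circleAngle (x : V) : Measurable (circleAngle o x) := by
  have : FiniteDimensional ℝ V := .of_fact_finrank_eq_two
  have hkahler : Continuous (o.kahler x) := (o.kahler x).continuous_of_finiteDimensional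
  exact AddCircle.measurable_mk'.comp (Complex.measurable_arg.comp hkahler.measurable)

variable {ν : Measure V} [IsProbabilityMeasure ν]

theorem map_circleAngle_eq_haarAddCircle (hν : IsOrthogonallyInvariant ν) (hν₀ : ν {0} = 0) {x : V}
    (hx : x ≠ 0) : ν.map (circleAngle o x) = AddCircle.haarAddCircle := by
  have hmeas := measurable_circleAngle o x
  have : IsProbabilityMeasure (ν.map (circleAngle o x)) :=
    Measure.isProbabilityMeasure_map hmeas.aemeasurable
  have : (ν.map (circleAngle o x)).IsAddLeftInvariant := by
    refine ⟨fun φ => ?_⟩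
    have hrot : (φ + ·) ∘ circleAngle o x =ᵐ[ν] circleAngle o x ∘ o.rotation φ := by
      filter_upwards [measure_eq_zero_iff_ae_notMem.1 hν₀] with y hy
      exact (add_comm _ _).trans (o.oangle_rotation_right hx hy φ).symm
    rw [Measure.map_map (by fun_prop) hmeas, Measure.map_congr hrot,
      ← Measure.map_map hmeas (o.rotation φ).continuous.measurable, hν]
  have : (ν.map (circleAngle o x)).IsAddHaarMeasure :=
    Measure.isAddHaarMeasure_of_isCompact_nonempty_interior _ univ isCompact_univ (by simp)
      (by simp) (by simp)
  exact Measure.isAddHaarMeasure_eq_of_isProbabilityMeasure _ _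

lemma measureReal_setOf_inner_nonneg_of_finrank_eq_two (hν : IsOrthogonallyInvariant ν)
    (hν₀ : ν {0} = 0) {u₁ u₂ : V} (hu₁ : u₁ ≠ 0) (hu₂ : u₂ ≠ 0) (hangle : angle u₁ u₂ < π) :
    ν.real {v | 0 ≤ ⟪u₁, v⟫ ∧ 0 ≤ ⟪u₂, v⟫} = (π - angle u₁ u₂) / (2 * π) := by
  have : FiniteDimensional ℝ V := .of_fact_finrank_eq_two
  let o : Orientation ℝ V (Fin 2) := (finBasisOfFinrankEq ℝ V Fact.out).orientation
  have hdir : {v | 0 ≤ ⟪u₁, v⟫ ∧ 0 ≤ ⟪u₂, v⟫} =ᵐ[ν]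
      circleAngle o u₁ ⁻¹' dualArc (circleAngle o u₁ u₂) := by
    refine Filter.eventuallyEq_set.2 ?_
    filter_upwards [measure_eq_zero_iff_ae_notMem.1 hν₀] with v hv
    exact (circleAngle_mem_dualArc_iff o hu₁ hu₂ hv).symm
  have hθ : circleAngle o u₁ u₂ = ((o.oangle u₁ u₂).toReal : AddCircle (2 * π)) :=
    (Angle.coe_toReal _).symm
  rw [o.angle_eq_abs_oangle_toReal hu₁ hu₂] at hangle ⊢
  rw [measureReal_congr hdir, ← map_measureReal_apply (measurable_circleAngle o u₁)
    (isClosed_dualArc _).measurableSet, map_circleAngle_eq_haarAddCircle o hν hν₀ hu₁, hθ,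
    haarAddCircle_real_dualArc hangle]

end Plane

section Space

variable {E : Type*} [NormedAddCommGroup E] [InnerProductSpace ℝ E]

lemma linearIndependent_pair_of_angle {u₁ u₂ : E} (hu₁ : u₁ ≠ 0) (hu₂ : u₂ ≠ 0)
    (h₀ : angle u₁ u₂ ≠ 0) (hπ : angle u₁ u₂ ≠ π) : LinearIndependent ℝ ![u₁, u₂] := by
  refine (LinearIndependent.pair_iff' hu₁).2 ?_
  rintro a rfl
  rcases (left_ne_zero_of_smul hu₂).lt_or_gt with ha | ha
  · exact hπ (angle_eq_pi_iff.2 ⟨hu₁, a, ha, rfl⟩)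
  · exact h₀ (angle_eq_zero_iff.2 ⟨hu₁, a, ha, rfl⟩)

lemma isClosed_setOf_inner_nonneg (u₁ u₂ : E) : IsClosed {v | 0 ≤ ⟪u₁, v⟫ ∧ 0 ≤ ⟪u₂, v⟫} :=
  (isClosed_le continuous_const (by fun_prop : Continuous fun v : E => ⟪u₁, v⟫)).inter
    (isClosed_le continuous_const (by fun_prop : Continuous fun v : E => ⟪u₂, v⟫))

variable [FiniteDimensional ℝ E] [MeasurableSpace E] [BorelSpace E] {μ : Measure E}
  [IsProbabilityMeasure μ]

lemma measureReal_setOf_inner_nonneg_of_mem_plane (hμ : IsOrthogonallyInvariant μ)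
    (hμ₀ : μ {0} = 0) {P : Submodule ℝ E} [Fact (finrank ℝ P = 2)] {u₁ u₂ : P}
    (hu₁ : u₁ ≠ 0) (hu₂ : u₂ ≠ 0) (hangle : angle u₁ u₂ < π) :
    μ.real {v | 0 ≤ ⟪(u₁ : E), v⟫ ∧ 0 ≤ ⟪(u₂ : E), v⟫} = (π - angle u₁ u₂) / (2 * π) := by
  have hproj : Measurable P.orthogonalProjectionOnto := by fun_prop
  have : IsProbabilityMeasure (μ.map P.orthogonalProjectionOnto) :=
    Measure.isProbabilityMeasure_map hproj.aemeasurable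
  have hbot : P ≠ ⊥ := P.ne_bot_iff.2 ⟨u₁, u₁.2, fun h => hu₁ (Subtype.ext h)⟩
  rw [← measureReal_setOf_inner_nonneg_of_finrank_eq_two (hμ.map_orthogonalProjectionOnto P)
    (hμ.map_orthogonalProjectionOnto_singleton_zero hμ₀ hbot) hu₁ hu₂ hangle,
    map_measureReal_apply hproj (isClosed_setOf_inner_nonneg u₁ u₂).measurableSet]
  simp only [preimage_ofPred_eq, P.inner_orthogonalProjectionOnto_eq_of_mem_left]

theorem measureReal_setOf_inner_nonneg (hμ : IsOrthogonallyInvariant μ) (hμ₀ : μ {0} = 0)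
    {u₁ u₂ : E} (hu₁ : u₁ ≠ 0) (hu₂ : u₂ ≠ 0) (hangle₀ : 0 < angle u₁ u₂)
    (hangleπ : angle u₁ u₂ < π) :
    μ.real {v | 0 ≤ ⟪u₁, v⟫ ∧ 0 ≤ ⟪u₂, v⟫} = (π - angle u₁ u₂) / (2 * π) := by
  have hli := linearIndependent_pair_of_angle hu₁ hu₂ hangle₀.ne' hangleπ.ne
  let P := Submodule.span ℝ (range ![u₁, u₂])
  let w₁ : P := ⟨u₁, Submodule.subset_span ⟨0, rfl⟩⟩
  let w₂ : P := ⟨u₂, Submodule.subset_span ⟨1, rfl⟩⟩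
  have : Fact (finrank ℝ P = 2) := ⟨finrank_span_eq_card hli⟩
  exact measureReal_setOf_inner_nonneg_of_mem_plane hμ hμ₀ (u₁ := w₁) (u₂ := w₂)
    (Subtype.coe_ne_coe.1 hu₁) (Subtype.coe_ne_coe.1 hu₂) hangleπ

theorem stmt12_general {F : Set E} (hF : Convex ℝ F) {p u₁ u₂ : E} (hu₁ : u₁ ≠ 0) (hu₂ : u₂ ≠ 0)
    (hangle₀ : 0 < angle u₁ u₂) (hangleπ : angle u₁ u₂ < π) {r : ℝ} (hr : 0 < r)
    (hcone : F ∩ ball p r = angularSector p u₁ u₂ ∩ ball p r) (hμ₀ : μ {0} = 0)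
    (hμ : IsOrthogonallyInvariant μ) :
    (μ {v | ∀ x ∈ F, ⟪p, v⟫ ≤ ⟪x, v⟫}).toReal = (π - angle u₁ u₂) / (2 * π) := by
  have hdual : {v | ∀ x ∈ F, ⟪p, v⟫ ≤ ⟪x, v⟫} = {v | 0 ≤ ⟪u₁, v⟫ ∧ 0 ≤ ⟪u₂, v⟫} :=
    ext fun v => isMinOn_inner_iff_of_inter_ball_eq hF hr hcone v
  rw [hdual]
  exact measureReal_setOf_inner_nonneg hμ hμ₀ hu₁ hu₂ hangle₀ hangleπ

end Space

lemma measure_singleton_zero_of_measure_sphere_eq_one {E : Type*} [NormedAddCommGroup E]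
    [MeasurableSpace E] [OpensMeasurableSpace E] {μ : Measure E} [IsProbabilityMeasure μ]
    (hμ : μ (sphere 0 1) = 1) : μ {0} = 0 :=
  measure_mono_null (by simp) ((prob_compl_eq_zero_iff isClosed_sphere.measurableSet).2 hμ)

/-- Let `F` be a two-dimensional convex polyhedron contained in an
affine plane `H ⊆ ℝ³` (the plane through `p` with normal `w`), having `p` as a vertex:
near `p`, `F` coincides with the cone `p + {a•u₁ + b•u₂ : a,b ≥ 0}`, so that the
interior angle of `F` at `p` is `∠(u₁,u₂) ∈ (0,π)` and the exterior angle is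
`α = π − ∠(u₁,u₂)`.  Let `μ` be the uniform (rotation-invariant) probability measure
on the unit sphere `S²`.  Then the probability that `x ↦ ⟪x,v⟫` attains its minimum
on `F` at `p` is at least `α/(2π)`, with equality when `F` is bounded. -/
theorem stmt12 (F : Set (EuclideanSpace ℝ (Fin 3))) (hF : Convex ℝ F)
    (p : EuclideanSpace ℝ (Fin 3)) (hp : p ∈ F)
    (w : EuclideanSpace ℝ (Fin 3)) (hw : w ≠ 0)
    (hplane : ∀ x ∈ F, ⟪x - p, w⟫ = 0)
    (u₁ u₂ : EuclideanSpace ℝ (Fin 3)) (hu₁ : u₁ ≠ 0) (hu₂ : u₂ ≠ 0)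
    (hu₁w : ⟪u₁, w⟫ = 0) (hu₂w : ⟪u₂, w⟫ = 0)
    (hangle₀ : 0 < InnerProductGeometry.angle u₁ u₂)
    (hangleπ : InnerProductGeometry.angle u₁ u₂ < Real.pi)
    (r : ℝ) (hr : 0 < r)
    (hcone : F ∩ Metric.ball p r =
      {x | ∃ a b : ℝ, 0 ≤ a ∧ 0 ≤ b ∧ x = p + a • u₁ + b • u₂} ∩ Metric.ball p r)
    (μ : Measure (EuclideanSpace ℝ (Fin 3))) [IsProbabilityMeasure μ]
    (hsph : μ (Metric.sphere 0 1) = 1)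
    (hinv : ∀ R : EuclideanSpace ℝ (Fin 3) ≃ₗᵢ[ℝ] EuclideanSpace ℝ (Fin 3),
      Measure.map R μ = μ) :
    (Real.pi - InnerProductGeometry.angle u₁ u₂) / (2 * Real.pi) ≤
      (μ {v | ∀ x ∈ F, ⟪p, v⟫ ≤ ⟪x, v⟫}).toReal ∧
    (Bornology.IsBounded F →
      (μ {v | ∀ x ∈ F, ⟪p, v⟫ ≤ ⟪x, v⟫}).toReal =
        (Real.pi - InnerProductGeometry.angle u₁ u₂) / (2 * Real.pi)) := by
  have h := stmt12_general hF hu₁ hu₂ hangle₀ hangleπ hr hcone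
    (measure_singleton_zero_of_measure_sphere_eq_one hsph) hinv
  exact ⟨h.ge, fun _ => h⟩
end
end

section
/- Let F₁ and F₂ be two-dimensional convex polyhedra contained in the same affine plane H in ℝ³, both having p as a vertex, and suppose that their angular sectors at p are neighboring in H, i.e., they share a boundary ray, so that the interior angles satisfy ∠_{F₁}(p) + ∠_{F₂}(p) = π. If v is chosen uniformly at random from the unit sphere S², then Pr[the minimum of x ↦ ⟨x,v⟩ on F₁ is attained at p] + Pr[the minimum of x ↦ ⟨x,v⟩ on F₂ is attained at p] ≥ 1/2. -/
open Set MeasureTheory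
open scoped RealInnerProductSpace

noncomputable section

/-!
If `F` is convex and near `p` lies in `p` plus the cone spanned by `{a, b}`, then every `v` in the
dual cone of `{a, b}` makes `p` a minimum of `⟪·, v⟫` on `F`, since local minima of linear
functionals on convex sets are global. It remains to compare measures of dual cones. As `b₂` and
`-b₁` make the same angle with `a`, a reflection fixing `a` carries the ray of `b₂` to the ray of
`-b₁`, so the dual cones of `{a, b₂}` and `{a, -b₁}` have the same measure. The latter and the dual
cone of `{a, b₁}` cover the half-space `0 ≤ ⟪a, v⟫`, whose measure is at least half of the total by
the symmetry `v ↦ -v`.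
-/

section DualCone

open PointedCone Topology

variable {E : Type*} [NormedAddCommGroup E] [InnerProductSpace ℝ E]

theorem isMinOn_inner_of_mem_dual {F S : Set E} {p v : E} (hF : Convex ℝ F) (hp : p ∈ F)
    (hcone : ∀ᶠ x in 𝓝[F] p, x - p ∈ hull ℝ S) (hv : v ∈ dual (innerₗ E) S) :
    IsMinOn (fun x ↦ ⟪x, v⟫) F p := by
  have hlocal : IsLocalMinOn (fun x ↦ ⟪x, v⟫) F p := by
    rw [← dual_hull] at hv
    filter_upwards [hcone] with x hx
    have : 0 ≤ ⟪x - p, v⟫ := hv hx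
    rwa [inner_sub_left, sub_nonneg] at this
  exact .of_isLocalMinOn_of_convexOn hp hlocal (((innerₗ E).flip v).convexOn hF)

theorem eventually_sub_mem_hull_pair {F : Set E} {p a b : E} {r : ℝ} (hr : 0 < r)
    (h : F ∩ Metric.ball p r ⊆ {x | ∃ s t : ℝ, 0 ≤ s ∧ 0 ≤ t ∧ x = p + s • a + t • b}) :
    ∀ᶠ x in 𝓝[F] p, x - p ∈ hull ℝ {a, b} := by
  filter_upwards [inter_mem_nhdsWithin F (Metric.ball_mem_nhds p hr)] with x hx
  obtain ⟨s, t, hs, ht, rfl⟩ := h hx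
  rw [add_assoc, add_sub_cancel_left]
  exact Submodule.mem_span_pair.2 ⟨⟨s, hs⟩, ⟨t, ht⟩, rfl⟩

theorem dual_pair_smul {r : ℝ} (hr : 0 < r) (a b : E) :
    dual (innerₗ E) {a, r • b} = dual (innerₗ E) {a, b} := by
  ext v
  simp [real_inner_smul_left, mul_nonneg_iff_of_pos_left hr]

theorem dual_singleton_subset_union_neg (a b : E) :
    (dual (innerₗ E) {a} : Set E) ⊆ dual (innerₗ E) {a, b} ∪ dual (innerₗ E) {a, -b} := by
  intro v hv
  have hav : 0 ≤ ⟪a, v⟫ := hv rfl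
  simpa [hav] using le_total 0 ⟪b, v⟫

theorem dual_singleton_union_neg (a : E) :
    (dual (innerₗ E) {a} ∪ -dual (innerₗ E) {a} : Set E) = univ := by
  ext v
  simpa using le_total 0 ⟪a, v⟫

theorem preimage_dual_image (R : E ≃ₗᵢ[ℝ] E) (S : Set E) :
    R ⁻¹' dual (innerₗ E) (R '' S) = dual (innerₗ E) S := by
  ext v
  simp

theorem exists_linearIsometryEquiv_map_eq {a b c : E} (hnorm : ‖b‖ = ‖c‖)
    (hinner : ⟪a, b⟫ = ⟪a, c⟫) : ∃ R : E ≃ₗᵢ[ℝ] E, R a = a ∧ R b = c := by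
  refine ⟨(ℝ ∙ (b - c))ᗮ.reflection, ?_, Submodule.reflection_sub hnorm⟩
  apply Submodule.reflection_mem_subspace_eq_self
  rw [Submodule.mem_orthogonal_singleton_iff_inner_left, inner_sub_right, hinner, sub_self]

theorem exists_linearIsometryEquiv_smul_eq_smul {a b c : E}
    (hangle : InnerProductGeometry.angle a b = InnerProductGeometry.angle a c) :
    ∃ R : E ≃ₗᵢ[ℝ] E, R a = a ∧ R (‖c‖ • b) = ‖b‖ • c := by
  apply exists_linearIsometryEquiv_map_eq
  · simp [norm_smul, mul_comm]
  · rw [real_inner_smul_right, real_inner_smul_right,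
      ← InnerProductGeometry.cos_angle_mul_norm_mul_norm a b,
      ← InnerProductGeometry.cos_angle_mul_norm_mul_norm a c, hangle]
    ring

variable [MeasurableSpace E] [BorelSpace E] {μ : Measure E}

theorem measure_dual_image {R : E ≃ₗᵢ[ℝ] E} (hR : μ.map R = μ) (S : Set E) :
    μ (dual (innerₗ E) (R '' S)) = μ (dual (innerₗ E) S) := by
  have hpres : MeasurePreserving R μ μ := ⟨R.continuous.measurable, hR⟩
  rw [← preimage_dual_image R S,
    hpres.measure_preimage_emb R.toHomeomorph.measurableEmbedding]

theorem measure_univ_le_two_mul_dual_singleton [μ.IsNegInvariant] (a : E) :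
    μ univ ≤ 2 * μ (dual (innerₗ E) {a}) := by
  calc
    μ univ ≤ μ (dual (innerₗ E) {a}) + μ (-dual (innerₗ E) {a} : Set E) := by
      rw [← dual_singleton_union_neg a]
      exact measure_union_le _ _
    _ = 2 * μ (dual (innerₗ E) {a}) := by rw [Measure.measure_neg, two_mul]

theorem measure_dual_pair_eq_of_angle_eq (hinv : ∀ R : E ≃ₗᵢ[ℝ] E, μ.map R = μ) {a b c : E}
    (hb : b ≠ 0) (hc : c ≠ 0)
    (hangle : InnerProductGeometry.angle a b = InnerProductGeometry.angle a c) :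
    μ (dual (innerₗ E) {a, b}) = μ (dual (innerₗ E) {a, c}) := by
  obtain ⟨R, hRa, hRb⟩ := exists_linearIsometryEquiv_smul_eq_smul hangle
  rw [← dual_pair_smul (norm_pos_iff.2 hc) a b, ← dual_pair_smul (norm_pos_iff.2 hb) a c,
    ← measure_dual_image (hinv R), image_pair, hRa, hRb]

theorem measure_univ_le_two_mul_dual_pair_add_dual_pair
    (hinv : ∀ R : E ≃ₗᵢ[ℝ] E, μ.map R = μ) {a b₁ b₂ : E} (hb₁ : b₁ ≠ 0) (hb₂ : b₂ ≠ 0)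
    (hsum : InnerProductGeometry.angle a b₁ + InnerProductGeometry.angle a b₂ = Real.pi) :
    μ univ ≤ 2 * (μ (dual (innerₗ E) {a, b₁}) + μ (dual (innerₗ E) {a, b₂})) := by
  have : μ.IsNegInvariant := ⟨hinv (.neg ℝ)⟩
  have hangle : InnerProductGeometry.angle a b₂ = InnerProductGeometry.angle a (-b₁) := by
    rw [InnerProductGeometry.angle_neg_right]
    linarith
  calc
    μ univ ≤ 2 * μ (dual (innerₗ E) {a}) := measure_univ_le_two_mul_dual_singleton a
    _ ≤ 2 * (μ (dual (innerₗ E) {a, b₁}) + μ (dual (innerₗ E) {a, -b₁})) := by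
      gcongr
      exact (measure_mono (dual_singleton_subset_union_neg a b₁)).trans (measure_union_le _ _)
    _ = 2 * (μ (dual (innerₗ E) {a, b₁}) + μ (dual (innerₗ E) {a, b₂})) := by
      rw [measure_dual_pair_eq_of_angle_eq hinv hb₂ (neg_ne_zero.2 hb₁) hangle]

theorem stmt13_general {F₁ F₂ : Set E} (hF₁ : Convex ℝ F₁) (hF₂ : Convex ℝ F₂) {p a b₁ b₂ : E}
    (hp₁ : p ∈ F₁) (hp₂ : p ∈ F₂) (hb₁ : b₁ ≠ 0) (hb₂ : b₂ ≠ 0)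
    (hsum : InnerProductGeometry.angle a b₁ + InnerProductGeometry.angle a b₂ = Real.pi)
    (hcone₁ : ∀ᶠ x in 𝓝[F₁] p, x - p ∈ hull ℝ {a, b₁})
    (hcone₂ : ∀ᶠ x in 𝓝[F₂] p, x - p ∈ hull ℝ {a, b₂})
    [IsProbabilityMeasure μ] (hinv : ∀ R : E ≃ₗᵢ[ℝ] E, μ.map R = μ) :
    1 / 2 ≤ μ.real {v | IsMinOn (fun x ↦ ⟪x, v⟫) F₁ p} +
      μ.real {v | IsMinOn (fun x ↦ ⟪x, v⟫) F₂ p} := by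
  have hdual : 1 ≤ 2 * (μ.real (dual (innerₗ E) {a, b₁}) + μ.real (dual (innerₗ E) {a, b₂})) := by
    have h := measure_univ_le_two_mul_dual_pair_add_dual_pair hinv hb₁ hb₂ hsum
    simpa [Measure.real, ENNReal.toReal_add] using ENNReal.toReal_mono (by finiteness) h
  have hmin₁ : μ.real (dual (innerₗ E) {a, b₁}) ≤ μ.real {v | IsMinOn (fun x ↦ ⟪x, v⟫) F₁ p} :=
    measureReal_mono fun _ hv ↦ isMinOn_inner_of_mem_dual hF₁ hp₁ hcone₁ hv
  have hmin₂ : μ.real (dual (innerₗ E) {a, b₂}) ≤ μ.real {v | IsMinOn (fun x ↦ ⟪x, v⟫) F₂ p} :=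
    measureReal_mono fun _ hv ↦ isMinOn_inner_of_mem_dual hF₂ hp₂ hcone₂ hv
  linarith

end DualCone

/-- Let `F₁`, `F₂` be two-dimensional convex polyhedra in the same
affine plane `H ⊆ ℝ³` (through `p`, with normal `w`), both having `p` as a vertex,
whose angular sectors at `p` are neighboring: near `p` they are the cones spanned by
`{a, b₁}` and `{a, b₂}` respectively (sharing the boundary ray in direction `a`), and
their interior angles satisfy `∠(a,b₁) + ∠(a,b₂) = π`.  If `v` is drawn from the
uniform rotation-invariant probability measure on `S²`, then the probabilities that
`x ↦ ⟪x,v⟫` attains its minimum on `F₁` at `p`, resp. on `F₂` at `p`, sum to at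
least `1/2`. -/
theorem stmt13 (F₁ F₂ : Set (EuclideanSpace ℝ (Fin 3)))
    (hF₁ : Convex ℝ F₁) (hF₂ : Convex ℝ F₂)
    (p : EuclideanSpace ℝ (Fin 3)) (hp₁ : p ∈ F₁) (hp₂ : p ∈ F₂)
    (w : EuclideanSpace ℝ (Fin 3)) (hw : w ≠ 0)
    (hplane₁ : ∀ x ∈ F₁, ⟪x - p, w⟫ = 0)
    (hplane₂ : ∀ x ∈ F₂, ⟪x - p, w⟫ = 0)
    (a b₁ b₂ : EuclideanSpace ℝ (Fin 3))
    (ha : a ≠ 0) (hb₁ : b₁ ≠ 0) (hb₂ : b₂ ≠ 0)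
    (haw : ⟪a, w⟫ = 0) (hb₁w : ⟪b₁, w⟫ = 0) (hb₂w : ⟪b₂, w⟫ = 0)
    (hang₁0 : 0 < InnerProductGeometry.angle a b₁)
    (hang₁π : InnerProductGeometry.angle a b₁ < Real.pi)
    (hang₂0 : 0 < InnerProductGeometry.angle a b₂)
    (hang₂π : InnerProductGeometry.angle a b₂ < Real.pi)
    (hsum : InnerProductGeometry.angle a b₁ + InnerProductGeometry.angle a b₂ =
      Real.pi)
    (r : ℝ) (hr : 0 < r)
    (hcone₁ : F₁ ∩ Metric.ball p r =
      {x | ∃ s t : ℝ, 0 ≤ s ∧ 0 ≤ t ∧ x = p + s • a + t • b₁} ∩ Metric.ball p r)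
    (hcone₂ : F₂ ∩ Metric.ball p r =
      {x | ∃ s t : ℝ, 0 ≤ s ∧ 0 ≤ t ∧ x = p + s • a + t • b₂} ∩ Metric.ball p r)
    (μ : Measure (EuclideanSpace ℝ (Fin 3))) [IsProbabilityMeasure μ]
    (hsph : μ (Metric.sphere 0 1) = 1)
    (hinv : ∀ R : EuclideanSpace ℝ (Fin 3) ≃ₗᵢ[ℝ] EuclideanSpace ℝ (Fin 3),
      Measure.map R μ = μ) :
    1 / 2 ≤ (μ {v | ∀ x ∈ F₁, ⟪p, v⟫ ≤ ⟪x, v⟫}).toReal +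
      (μ {v | ∀ x ∈ F₂, ⟪p, v⟫ ≤ ⟪x, v⟫}).toReal := by
  exact stmt13_general hF₁ hF₂ hp₁ hp₂ hb₁ hb₂ hsum
    (eventually_sub_mem_hull_pair hr (hcone₁.subset.trans inter_subset_left))
    (eventually_sub_mem_hull_pair hr (hcone₂.subset.trans inter_subset_left)) hinv
end
end

section
/- Let F be an unbounded two-dimensional pointed convex polyhedron (an unbounded convex polygon having at least one vertex, hence containing no line) contained in an affine plane H in ℝ³. Then the set of directions v ∈ S² for which the linear functional x ↦ ⟨x, v⟩ does not attain a minimum on F has uniform spherical measure at least 1/2. -/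
open Set MeasureTheory
open scoped RealInnerProductSpace

noncomputable section

/-!
An unbounded set `F` in a finite-dimensional space has a nonzero asymptotic direction `u`: the
limit of the unit directions of some sequence in `F` going to infinity. If `⟪u, v⟫ < 0`, then
`⟪·, v⟫` tends to `-∞` along such a sequence, so no minimum exists on `F`. It remains to see that
an orthogonally invariant measure gives the open half-space `⟪u, v⟫ < 0` half of its mass. The
opposite half-space is a reflection of it, so the hyperplane `uᗮ` has to be null. All hyperplanes
through the origin have the same mass, and by Fubini almost all of them are null, since each
`v ≠ 0` lies in `uᗮ` only for a Lebesgue-null set of `u`.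
-/

open Filter Bornology
open scoped Topology

section AsymptoticCone

open AffineSpace

variable {V : Type*} [AddCommGroup V] [Module ℝ V] [TopologicalSpace V]
  [IsTopologicalAddGroup V] [ContinuousSMul ℝ V]

lemma tendsto_asymptoticNhds_atBot_of_neg (ℓ : StrongDual ℝ V) {u : V} (hu : ℓ u < 0) :
    Tendsto ℓ (asymptoticNhds ℝ V u) atBot := by
  rw [asymptoticNhds_eq_smul, ← map₂_smul, ← map_prod_eq_map₂, tendsto_map'_iff]
  have hscale : Tendsto (fun p : ℝ × V => p.1 * ℓ p.2) (atTop ×ˢ 𝓝 u) atBot :=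
    tendsto_fst.atTop_mul_neg hu ((ℓ.continuous.tendsto u).comp tendsto_snd)
  simpa [Function.comp_def] using hscale

lemma not_bddBelow_image_of_mem_asymptoticCone (ℓ : StrongDual ℝ V) {F : Set V} {u : V}
    (huF : u ∈ asymptoticCone ℝ F) (hu : ℓ u < 0) : ¬ BddBelow (ℓ '' F) := by
  rintro ⟨b, hb⟩
  have hlt : ∀ᶠ x in asymptoticNhds ℝ V u, ℓ x < b :=
    (tendsto_asymptoticNhds_atBot_of_neg ℓ hu).eventually_lt_atBot b
  obtain ⟨x, hxF, hxb⟩ := (huF.and_eventually hlt).exists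
  exact (hb (mem_image_of_mem ℓ hxF)).not_gt hxb

end AsymptoticCone

lemma measure_singleton_zero_of_measure_sphere {E : Type*} [NormedAddCommGroup E]
    [MeasurableSpace E] [OpensMeasurableSpace E] {μ : Measure E} [IsProbabilityMeasure μ] {r : ℝ}
    (hr : r ≠ 0) (hsph : μ (Metric.sphere 0 r) = 1) : μ {0} = 0 := by
  refine measure_mono_null (singleton_subset_iff.2 ?_)
    ((prob_compl_eq_zero_iff Metric.isClosed_sphere.measurableSet).2 hsph)
  simpa using hr.symm

section OrthogonallyInvariant

variable {E : Type*} [NormedAddCommGroup E] [InnerProductSpace ℝ E] [MeasurableSpace E]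
  [BorelSpace E] {μ : Measure E}

lemma measure_setOf_inner_mem_eq_of_norm_eq (hinv : ∀ R : E ≃ₗᵢ[ℝ] E, μ.map R = μ) {u w : E}
    (h : ‖u‖ = ‖w‖) (A : Set ℝ) : μ {v | ⟪u, v⟫ ∈ A} = μ {v | ⟪w, v⟫ ∈ A} := by
  let R : E ≃ₗᵢ[ℝ] E := (ℝ ∙ (u - w))ᗮ.reflection
  have hR : R u = w := Submodule.reflection_sub h
  have hpres : MeasurePreserving R.toHomeomorph.toMeasurableEquiv μ μ :=
    ⟨R.continuous.measurable, hinv R⟩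
  rw [← hpres.measure_preimage_equiv {v | ⟪w, v⟫ ∈ A}]
  congr 1 with v
  change ⟪u, v⟫ ∈ A ↔ ⟪w, R v⟫ ∈ A
  rw [← hR, R.inner_map_map]

lemma measure_setOf_inner_eq_zero_congr (hinv : ∀ R : E ≃ₗᵢ[ℝ] E, μ.map R = μ) {u w : E}
    (hu : u ≠ 0) (hw : w ≠ 0) : μ {v | ⟪u, v⟫ = 0} = μ {v | ⟪w, v⟫ = 0} := by
  have hnorm : ‖‖w‖ • u‖ = ‖‖u‖ • w‖ := by
    simp only [norm_smul, norm_norm, mul_comm]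
  simpa [real_inner_smul_left, hu, hw] using
    measure_setOf_inner_mem_eq_of_norm_eq hinv hnorm {0}

variable [FiniteDimensional ℝ E]

lemma addHaar_setOf_inner_eq_zero (ν : Measure E) [ν.IsAddHaarMeasure] {v : E} (hv : v ≠ 0) :
    ν {u | ⟪u, v⟫ = 0} = 0 := by
  have hker : {u | ⟪u, v⟫ = 0} = ((ℝ ∙ v)ᗮ : Submodule ℝ E) := by
    ext u
    exact Submodule.mem_orthogonal_singleton_iff_inner_left.symm
  rw [hker]
  refine Measure.addHaar_submodule ν _ fun htop => hv ?_
  simpa using htop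

lemma ae_measure_setOf_inner_eq_zero (ν : Measure E) [ν.IsAddHaarMeasure] [SFinite μ]
    (hzero : μ {0} = 0) : ∀ᵐ u ∂ν, μ {v | ⟪u, v⟫ = 0} = 0 := by
  have hmeas : MeasurableSet {p : E × E | ⟪p.2, p.1⟫ ≠ 0} :=
    (isOpen_ne_fun (by fun_prop) (by fun_prop)).measurableSet
  have hne : ∀ᵐ v ∂μ, v ≠ 0 := by simpa [ae_iff] using hzero
  have hswap : ∀ᵐ u ∂ν, ∀ᵐ v ∂μ, ⟪u, v⟫ ≠ 0 :=
    (Measure.ae_ae_comm (p := fun v u => ⟪u, v⟫ ≠ 0) hmeas).1 <| by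
      filter_upwards [hne] with v hv
      simpa [ae_iff] using addHaar_setOf_inner_eq_zero ν hv
  simpa [ae_iff] using hswap

lemma measure_setOf_inner_eq_zero [SFinite μ] (hzero : μ {0} = 0)
    (hinv : ∀ R : E ≃ₗᵢ[ℝ] E, μ.map R = μ) {u : E} (hu : u ≠ 0) :
    μ {v | ⟪u, v⟫ = 0} = 0 := by
  have : Nontrivial E := ⟨u, 0, hu⟩
  obtain ⟨w, hw, hw_ne⟩ :=
    ((ae_measure_setOf_inner_eq_zero volume hzero).and (Measure.ae_ne volume 0)).exists
  rw [measure_setOf_inner_eq_zero_congr hinv hu hw_ne, hw]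

lemma measure_univ_div_two_le_measure_setOf_inner_neg [SFinite μ] (hzero : μ {0} = 0)
    (hinv : ∀ R : E ≃ₗᵢ[ℝ] E, μ.map R = μ) {u : E} (hu : u ≠ 0) :
    μ univ / 2 ≤ μ {v | ⟪u, v⟫ < 0} := by
  have hsymm : μ {v | 0 < ⟪u, v⟫} = μ {v | ⟪u, v⟫ < 0} := by
    simpa using measure_setOf_inner_mem_eq_of_norm_eq hinv (norm_neg u).symm (Ioi 0)
  have hcover : (univ : Set E) ⊆
      {v | ⟪u, v⟫ < 0} ∪ ({v | ⟪u, v⟫ = 0} ∪ {v | 0 < ⟪u, v⟫}) :=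
    fun v _ => lt_trichotomy ⟪u, v⟫ 0
  refine ENNReal.div_le_of_le_mul' ?_
  calc μ univ
      ≤ μ {v | ⟪u, v⟫ < 0} + (μ {v | ⟪u, v⟫ = 0} + μ {v | 0 < ⟪u, v⟫}) :=
        (measure_mono hcover).trans <| (measure_union_le _ _).trans <| by
          gcongr
          exact measure_union_le _ _
    _ = 2 * μ {v | ⟪u, v⟫ < 0} := by
        rw [measure_setOf_inner_eq_zero hzero hinv hu, hsymm, zero_add, two_mul]

lemma measure_univ_div_two_le_measure_not_bddBelow [SFinite μ] (hzero : μ {0} = 0)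
    (hinv : ∀ R : E ≃ₗᵢ[ℝ] E, μ.map R = μ) {F : Set E} (hunb : ¬ IsBounded F) :
    μ univ / 2 ≤ μ {v | ¬ BddBelow ((fun x => ⟪x, v⟫) '' F)} := by
  obtain ⟨u, hu, huF⟩ := not_bounded_iff_exists_ne_zero_mem_asymptoticCone.1 hunb
  refine (measure_univ_div_two_le_measure_setOf_inner_neg hzero hinv hu).trans
    (measure_mono fun v hv => ?_)
  have hdual : ⇑(innerSL ℝ v) = fun x => ⟪x, v⟫ := funext fun x => real_inner_comm x v
  change ¬ BddBelow ((fun x => ⟪x, v⟫) '' F)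
  rw [← hdual]
  refine not_bddBelow_image_of_mem_asymptoticCone _ huF ?_
  rwa [hdual]

theorem stmt14_general [SFinite μ] (hzero : μ {0} = 0)
    (hinv : ∀ R : E ≃ₗᵢ[ℝ] E, μ.map R = μ) {F : Set E} (hunb : ¬ IsBounded F) :
    μ univ / 2 ≤ μ {v | ¬ ∃ x ∈ F, ∀ y ∈ F, ⟪x, v⟫ ≤ ⟪y, v⟫} := by
  refine (measure_univ_div_two_le_measure_not_bddBelow hzero hinv hunb).trans
    (measure_mono fun v hv => ?_)
  rintro ⟨x, -, hmin⟩
  exact hv ⟨⟪x, v⟫, forall_mem_image.2 hmin⟩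

end OrthogonallyInvariant

/-- Let `F` be an unbounded, pointed (containing no affine line),
two-dimensional convex polyhedron contained in an affine plane `H ⊆ ℝ³`: `F` is the
intersection of the plane `{x | ⟪x - p₀, w⟫ = 0}` with finitely many half-spaces, is
nonempty, unbounded, contains no line, and has nonempty interior relative to the
plane.  Then, for the uniform rotation-invariant probability measure `μ` on the unit
sphere `S²`, the set of directions `v` for which `x ↦ ⟪x, v⟫` does not attain a
minimum on `F` has measure at least `1/2`. -/
theorem stmt14 (F : Set (EuclideanSpace ℝ (Fin 3)))
    (p₀ w : EuclideanSpace ℝ (Fin 3)) (hw : w ≠ 0)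
    (m : ℕ) (f : Fin m → EuclideanSpace ℝ (Fin 3)) (c : Fin m → ℝ)
    (hF : F = {x | ⟪x - p₀, w⟫ = 0} ∩ ⋂ i, {x | ⟪x, f i⟫ ≤ c i})
    (hne : F.Nonempty)
    (hunb : ¬ Bornology.IsBounded F)
    (hpointed : ∀ x u : EuclideanSpace ℝ (Fin 3), u ≠ 0 →
      ¬ (∀ t : ℝ, x + t • u ∈ F))
    (h2d : ∃ (q : EuclideanSpace ℝ (Fin 3)) (r : ℝ), 0 < r ∧
      {x | ⟪x - p₀, w⟫ = 0} ∩ Metric.ball q r ⊆ F)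
    (μ : Measure (EuclideanSpace ℝ (Fin 3))) [IsProbabilityMeasure μ]
    (hsph : μ (Metric.sphere 0 1) = 1)
    (hinv : ∀ R : EuclideanSpace ℝ (Fin 3) ≃ₗᵢ[ℝ] EuclideanSpace ℝ (Fin 3),
      Measure.map R μ = μ) :
    (1 : ENNReal) / 2 ≤
      μ {v | ¬ ∃ x ∈ F, ∀ y ∈ F, ⟪x, v⟫ ≤ ⟪y, v⟫} := by
  simpa only [measure_univ] using
    stmt14_general (measure_singleton_zero_of_measure_sphere one_ne_zero hsph) hinv hunb
end
end
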